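/- arXiv:math/0110298 — 3 statements merged into one kernel-verified Lean document; each statement's English description precedes it below -/
import Mathlib

section
/- Let 0 < ε < 1, let q : ℂ → ℂ be compactly supported and Hölder continuous with exponent ε, and fix 2 < r₀ < ∞. Suppose M₁₁, M₁₂, M₂₁, M₂₂ : ℂ × ℂ → ℂ are jointly continuous and, for every k ∈ ℂ, the functions z ↦ Mᵢⱼ(z,k) are real-differentiable, satisfy the system ∂̄_z M₁₁ = q·M₂₁, ∂_z M₂₁ + i·k·M₂₁ = conj(q)·M₁₁, ∂̄_z M₁₂ − i·k·M₁₂ = q·M₂₂, ∂_z M₂₂ = conj(q)·M₁₂ on ℂ, with M₁₁(·,k) − 1, M₁₂(·,k), M₂₁(·,k), M₂₂(·,k) − 1 in L^{r₀}(ℂ) and Hölder continuous with exponent ε. Then for every s with 2 < s < ∞ there exists a constant C such that for every z ∈ ℂ the functions k ↦ M₁₁(z,k) − 1, k ↦ M₁₂(z,k), k ↦ M₂₁(z,k), k ↦ M₂₂(z,k) − 1 belong to L^s(ℂ) (in the variable k, with respect to Lebesgue measure) with L^s-norm at most C. -/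
open MeasureTheory Complex

/-- Wirtinger derivative `∂f = (∂ₓf − i∂_yf)/2` of `f : ℂ → ℂ`. -/
noncomputable def wD (f : ℂ → ℂ) (z : ℂ) : ℂ :=
  (fderiv ℝ f z 1 - Complex.I * fderiv ℝ f z Complex.I) / 2

/-- Wirtinger derivative `∂̄f = (∂ₓf + i∂_yf)/2` of `f : ℂ → ℂ`. -/
noncomputable def wDbar (f : ℂ → ℂ) (z : ℂ) : ℂ :=
  (fderiv ℝ f z 1 + Complex.I * fderiv ℝ f z Complex.I) / 2

/-- `f` is Hölder continuous with exponent `ε`. -/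
def IsHolder (ε : ℝ) (f : ℂ → ℂ) : Prop :=
  ∃ C ≥ (0 : ℝ), ∀ z z' : ℂ, ‖f z - f z'‖ ≤ C * ‖z - z'‖ ^ ε

open scoped FourierTransform ENNReal ContDiff SchwartzMap in
lemma plancherel_le (g : ℂ → ℂ) (h1 : Integrable g) (h2 : MemLp g 2) :
    ∫⁻ ξ, ‖𝓕 g ξ‖ₑ ^ 2 ≤ ∫⁻ w, ‖g w‖ₑ ^ 2 := by
  set G : Lp (α := ℂ) ℂ 2 volume := h2.toLp g with hG
  have hcont : Continuous (𝓕 g) := VectorFourier.fourierIntegral_continuous Real.continuous_fourierChar (by exact continuous_inner) h1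
  have hae : ∀ᵐ x, 𝓕 g x = (𝓕 G : Lp (α := ℂ) ℂ 2 volume) x := by
    apply ae_eq_of_integral_contDiff_smul_eq hcont.locallyIntegrable
      ((Lp.memLp (𝓕 G)).locallyIntegrable (by norm_num))
    intro φ hφ hφc
    have hc' : HasCompactSupport (fun x => (φ x : ℂ)) := hφc.comp_left (g := fun x : ℝ => (x : ℂ)) (by simp)
    have hs' : ContDiff ℝ ∞ (fun x => (φ x : ℂ)) := Complex.ofRealCLM.contDiff.comp hφ
    set Φ : 𝓢(ℂ, ℂ) := hc'.toSchwartzMap hs' with hΦ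
    have e1 := congrArg (fun T => T Φ) (Lp.fourier_toTemperedDistribution_eq G)
    simp only [TemperedDistribution.fourier_apply, Lp.toTemperedDistribution_apply] at e1
    have e2 : ∫ x, φ x • (𝓕 G : Lp (α := ℂ) ℂ 2 volume) x = ∫ x, Φ x • (𝓕 G : Lp (α := ℂ) ℂ 2 volume) x := by
      congr 1
    have e3 : ∫ x, φ x • 𝓕 g x = ∫ x, Φ x • 𝓕 g x := by
      congr 1
    rw [e2, e3, ← e1]
    have e4 : ∫ x, (𝓕 Φ) x • G x = ∫ x, (𝓕 (Φ : ℂ → ℂ)) x • g x := by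
      apply integral_congr_ae
      filter_upwards [h2.coeFn_toLp] with x hx
      rw [hG, hx, SchwartzMap.fourier_coe]
    rw [e4]
    have := VectorFourier.integral_fourierIntegral_smul_eq_flip (e := Real.fourierChar) (L := innerₗ ℂ) (μ := volume) (ν := volume) (f := (Φ : ℂ → ℂ)) (g := g)
      Real.continuous_fourierChar (by exact continuous_inner) Φ.integrable h1
    rw [flip_innerₗ] at this
    exact this.symm
  have h3 : ‖(𝓕 G : Lp (α := ℂ) ℂ 2 volume)‖ₑ = ‖G‖ₑ := by
    rw [enorm_eq_iff_norm_eq]; exact Lp.norm_fourier_eq G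
  rw [Lp.enorm_def, Lp.enorm_def] at h3
  rw [← eLpNorm_congr_ae hae, eLpNorm_congr_ae h2.coeFn_toLp] at h3
  have h4 := congrArg (fun x => x ^ (2:ℝ)) h3
  simp only [eLpNorm_eq_lintegral_rpow_enorm_toReal (p := 2) (by norm_num) (by norm_num)] at h4
  simp only [ENNReal.toReal_ofNat, ← ENNReal.rpow_mul] at h4
  norm_num at h4
  simpa using h4.le

open scoped ENNReal in
lemma lint_inv_ball (z : ℂ) (δ : ℝ) (hδ : 0 < δ) :
    ∫⁻ w in Metric.ball z δ, ‖z - w‖ₑ⁻¹ ≤ ENNReal.ofReal (2 * Real.pi * δ) := by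
  have h1 : ∫⁻ w in Metric.ball z δ, ‖z - w‖ₑ⁻¹
      = ∫⁻ w, (Metric.ball (0:ℂ) δ).indicator (fun u => ‖u‖ₑ⁻¹) w := by
    rw [← lintegral_indicator Metric.isOpen_ball.measurableSet]
    rw [← lintegral_sub_left_eq_self (fun w => (Metric.ball (0:ℂ) δ).indicator (fun u => ‖u‖ₑ⁻¹) w) z]
    congr 1
    ext w
    by_cases h : w ∈ Metric.ball z δ
    · rw [Set.indicator_of_mem h, Set.indicator_of_mem]
      simpa [dist_eq_norm, norm_sub_rev] using h
    · rw [Set.indicator_of_notMem h, Set.indicator_of_notMem]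
      simpa [dist_eq_norm, norm_sub_rev] using h
  rw [h1, ← Complex.lintegral_comp_polarCoord_symm]
  calc _ ≤ ∫⁻ p in polarCoord.target, (Set.Ioo 0 δ ×ˢ Set.Ioo (-Real.pi) Real.pi).indicator 1 p := by
        apply setLIntegral_mono' polarCoord.open_target.measurableSet
        intro p hp
        rw [polarCoord_target] at hp
        have hp1 : 0 < p.1 := hp.1
        have hn : ‖Complex.polarCoord.symm p‖ = p.1 := by
          rw [Complex.norm_polarCoord_symm, abs_of_pos hp1]
        by_cases h : p.1 < δ
        · rw [Set.indicator_of_mem, Set.indicator_of_mem]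
          · rw [← ofReal_norm, hn]
            rw [smul_eq_mul, ENNReal.mul_inv_cancel]
            · simp
            · simpa using hp1
            · simp
          · exact ⟨⟨hp1, h⟩, hp.2⟩
          · simp only [Metric.mem_ball, dist_zero_right]; rwa [hn]
        · rw [Set.indicator_of_notMem]
          · simp
          · simp only [Metric.mem_ball, dist_zero_right]; rwa [hn]
    _ ≤ ∫⁻ p, (Set.Ioo 0 δ ×ˢ Set.Ioo (-Real.pi) Real.pi).indicator 1 p :=
        setLIntegral_le_lintegral _ _
    _ = _ := by
        rw [lintegral_indicator_one (measurableSet_Ioo.prod measurableSet_Ioo), Measure.volume_eq_prod,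
          Measure.prod_prod, Real.volume_Ioo, Real.volume_Ioo, ← ENNReal.ofReal_mul (by linarith)]
        congr 1; ring

open scoped ENNReal in
lemma pot_bound (q : ℂ → ℂ) (hq : Continuous q) (hqs : HasCompactSupport q) :
    ∃ D : ℝ≥0∞, D ≠ ⊤ ∧ ∀ z, ∫⁻ w, ‖q w‖ₑ * ‖z - w‖ₑ⁻¹ ≤ D := by
  obtain ⟨Q, hQ⟩ := hq.bounded_above_of_compact_support hqs
  have hQ' : ∀ w, ‖q w‖ₑ ≤ ENNReal.ofReal Q := fun w => by
    rw [← ofReal_norm]; exact ENNReal.ofReal_le_ofReal (hQ w)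
  refine ⟨ENNReal.ofReal Q * ENNReal.ofReal (2 * Real.pi * 1) + ∫⁻ w, ‖q w‖ₑ, ?_, fun z => ?_⟩
  · have := (hq.integrable_of_hasCompactSupport (μ := volume) hqs).2
    exact ENNReal.add_ne_top.2 ⟨ENNReal.mul_ne_top ENNReal.ofReal_ne_top ENNReal.ofReal_ne_top, this.ne⟩
  rw [← lintegral_add_compl _ (A := Metric.ball z 1) Metric.isOpen_ball.measurableSet]
  refine add_le_add ?_ ?_
  · calc _ ≤ ∫⁻ w in Metric.ball z 1, ENNReal.ofReal Q * ‖z - w‖ₑ⁻¹ := by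
          gcongr with w; exact hQ' w
      _ = ENNReal.ofReal Q * ∫⁻ w in Metric.ball z 1, ‖z - w‖ₑ⁻¹ := by
          rw [lintegral_const_mul]; fun_prop
      _ ≤ _ := by gcongr; exact lint_inv_ball z 1 one_pos
  · calc _ ≤ ∫⁻ w in (Metric.ball z 1)ᶜ, ‖q w‖ₑ := by
          apply setLIntegral_mono' Metric.isOpen_ball.measurableSet.compl
          intro w hw
          have : 1 ≤ ‖z - w‖ := by
            simpa [dist_eq_norm, norm_sub_rev] using hw
          have : (‖z - w‖ₑ)⁻¹ ≤ 1 := by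
            rw [ENNReal.inv_le_one, ← ofReal_norm, ENNReal.one_le_ofReal]; exact this
          calc _ ≤ ‖q w‖ₑ * 1 := by gcongr
            _ = _ := mul_one _
      _ ≤ _ := setLIntegral_le_lintegral _ _

open scoped ENNReal in
lemma pot_small (q : ℂ → ℂ) (hq : Continuous q) (hqs : HasCompactSupport q) (η : ℝ≥0∞) (hη : η ≠ 0) :
    ∃ δ : ℝ, 0 < δ ∧ ∀ z, ∫⁻ w, ‖q w‖ₑ * (Metric.ball z δ).indicator (fun w => ‖z - w‖ₑ⁻¹) w ≤ η := by
  obtain ⟨Q, hQ⟩ := hq.bounded_above_of_compact_support hqs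
  have hQ' : ∀ w, ‖q w‖ₑ ≤ ENNReal.ofReal Q := fun w => by
    rw [← ofReal_norm]; exact ENNReal.ofReal_le_ofReal (hQ w)
  obtain ⟨δ, hδ, hδ2⟩ : ∃ δ : ℝ, 0 < δ ∧ ENNReal.ofReal Q * ENNReal.ofReal (2 * Real.pi * δ) ≤ η := by
    have : Filter.Tendsto (fun δ : ℝ => ENNReal.ofReal Q * ENNReal.ofReal (2 * Real.pi * δ))
        (nhdsWithin 0 (Set.Ioi 0)) (nhds 0) := by
      have h : Continuous (fun δ : ℝ => ENNReal.ofReal Q * ENNReal.ofReal (2 * Real.pi * δ)) := by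
        exact (ENNReal.continuous_const_mul (by simp)).comp (ENNReal.continuous_ofReal.comp (by fun_prop))
      have := h.tendsto 0
      simp only [mul_zero, ENNReal.ofReal_zero] at this
      exact this.mono_left nhdsWithin_le_nhds
    have h2 := (this.eventually (Iic_mem_nhds (pos_iff_ne_zero.2 hη))).and self_mem_nhdsWithin
    obtain ⟨δ, h3, h4⟩ := h2.exists
    exact ⟨δ, h4, h3⟩
  refine ⟨δ, hδ, fun z => ?_⟩
  calc _ ≤ ∫⁻ w, (Metric.ball z δ).indicator (fun w => ENNReal.ofReal Q * ‖z - w‖ₑ⁻¹) w := by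
        gcongr with w
        by_cases h : w ∈ Metric.ball z δ
        · simp only [Set.indicator_of_mem h]; gcongr; exact hQ' w
        · simp [Set.indicator_of_notMem h]
    _ = ENNReal.ofReal Q * ∫⁻ w in Metric.ball z δ, ‖z - w‖ₑ⁻¹ := by
        rw [lintegral_indicator Metric.isOpen_ball.measurableSet, lintegral_const_mul]; fun_prop
    _ ≤ _ := by gcongr; exact lint_inv_ball z δ hδ
    _ ≤ η := hδ2

/-- The unimodular exponential `exp (i (k w + conj (k w)))`. -/
noncomputable def ek (k w : ℂ) : ℂ := exp (I * (k * w + (starRingEnd ℂ) (k * w)))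

lemma ek_eq (k w : ℂ) : ek k w = exp ((2 * (k * w).re : ℝ) * I) := by
  unfold ek
  rw [Complex.add_conj]; congr 1; push_cast; ring

lemma norm_ek (k w : ℂ) : ‖ek k w‖ = 1 := by
  rw [ek_eq]; exact Complex.norm_exp_ofReal_mul_I _

lemma enorm_ek (k w : ℂ) : ‖ek k w‖ₑ = 1 := by
  rw [← ofReal_norm, norm_ek]; simp

lemma ek_ne_zero (k w : ℂ) : ek k w ≠ 0 := Complex.exp_ne_zero _

lemma continuous_ek : Continuous (fun p : ℂ × ℂ => ek p.1 p.2) := by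
  unfold ek; fun_prop

lemma continuous_ek_right (k : ℂ) : Continuous (fun w => ek k w) := by
  unfold ek; fun_prop

/-- The `L^s` functional on `[0,∞]`-valued functions. -/
noncomputable def NN (s : ℝ) (μ : Measure ℂ) (G : ℂ → ENNReal) : ENNReal :=
  (∫⁻ k, G k ^ s ∂μ) ^ (1 / s)

lemma NN_mono {s : ℝ} (hs : 0 < s) {μ : Measure ℂ} {G H : ℂ → ENNReal} (h : ∀ k, G k ≤ H k) :
    NN s μ G ≤ NN s μ H := by
  unfold NN
  have : 0 < 1 / s := by positivity
  gcongr with k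
  exact h k

lemma NN_mono_measure {s : ℝ} (hs : 0 < s) {μ ν : Measure ℂ} (h : μ ≤ ν) (G : ℂ → ENNReal) :
    NN s μ G ≤ NN s ν G := by
  unfold NN
  have : 0 < 1 / s := by positivity
  gcongr

lemma NN_add {s : ℝ} (hs : 1 ≤ s) {μ : Measure ℂ} {G H : ℂ → ENNReal} (hG : Measurable G)
    (hH : Measurable H) : NN s μ (fun k => G k + H k) ≤ NN s μ G + NN s μ H :=
  ENNReal.lintegral_Lp_add_le hG.aemeasurable hH.aemeasurable hs

lemma NN_const_mul {s : ℝ} (hs : 0 < s) {μ : Measure ℂ} {G : ℂ → ENNReal} (hG : Measurable G) (c : ENNReal) :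
    NN s μ (fun k => c * G k) = c * NN s μ G := by
  unfold NN
  simp_rw [ENNReal.mul_rpow_of_nonneg _ _ hs.le]
  rw [lintegral_const_mul _ (by fun_prop), ENNReal.mul_rpow_of_nonneg _ _ (by positivity), ← ENNReal.rpow_mul,
    mul_one_div_cancel hs.ne', ENNReal.rpow_one]

/-- Minkowski integral inequality with a sup bound. -/
lemma NN_minkowski {s : ℝ} (hs : 1 < s) {μ : Measure ℂ} [SFinite μ] (a : ℂ → ENNReal) (G : ℂ → ℂ → ENNReal)
    (ha : Measurable a) (hG : Measurable (fun p : ℂ × ℂ => G p.1 p.2)) (A : ENNReal)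
    (hA : ∀ w, NN s μ (G w) ≤ A) :
    NN s μ (fun k => ∫⁻ w, a w * G w k) ≤ (∫⁻ w, a w) * A := by
  have hs0 : 0 < s := by linarith
  obtain hc := Real.HolderConjugate.conjExponent hs
  set s' := s.conjExponent
  have hs' : 0 < s' := hc.symm.pos
  have hinv : 1 / s + 1 / s' = 1 := by simpa using hc.inv_add_inv_eq_one
  have key : ∀ k, (∫⁻ w, a w * G w k) ^ s ≤ (∫⁻ w, a w) ^ (s / s') * ∫⁻ w, a w * G w k ^ s := by
    intro k
    have hGk : Measurable (fun w => G w k) := hG.comp (by fun_prop : Measurable (fun w : ℂ => (w, k)))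
    have h := ENNReal.lintegral_mul_le_Lp_mul_Lq volume hc (f := fun w => a w ^ (1 / s) * G w k)
      (g := fun w => a w ^ (1 / s')) (by fun_prop) (by fun_prop)
    have e1 : ∀ w, a w ^ (1 / s) * G w k * a w ^ (1 / s') = a w * G w k := by
      intro w
      rw [mul_right_comm, ← ENNReal.rpow_add_of_nonneg _ _ (by positivity) (by positivity), hinv, ENNReal.rpow_one]
    have e2 : ∀ w, (a w ^ (1 / s) * G w k) ^ s = a w * G w k ^ s := by
      intro w
      rw [ENNReal.mul_rpow_of_nonneg _ _ hs0.le, ← ENNReal.rpow_mul, one_div_mul_cancel hs0.ne', ENNReal.rpow_one]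
    have e3 : ∀ w, (a w ^ (1 / s')) ^ s' = a w := by
      intro w
      rw [← ENNReal.rpow_mul, one_div_mul_cancel hs'.ne', ENNReal.rpow_one]
    simp only [Pi.mul_apply, e1, e2, e3] at h
    calc _ ≤ ((∫⁻ w, a w * G w k ^ s) ^ (1 / s) * (∫⁻ w, a w) ^ (1 / s')) ^ s := by gcongr
      _ = _ := by
        rw [ENNReal.mul_rpow_of_nonneg _ _ hs0.le, ← ENNReal.rpow_mul, ← ENNReal.rpow_mul, one_div_mul_cancel hs0.ne',
          ENNReal.rpow_one, mul_comm, one_div_mul_eq_div]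
  have hA' : ∀ w, ∫⁻ k, G w k ^ s ∂μ ≤ A ^ s := by
    intro w
    have := ENNReal.rpow_le_rpow (hA w) hs0.le
    rwa [NN, ← ENNReal.rpow_mul, one_div_mul_cancel hs0.ne', ENNReal.rpow_one] at this
  have hm : Measurable (fun p : ℂ × ℂ => a p.2 * G p.2 p.1 ^ s) := by
    have : Measurable (fun p : ℂ × ℂ => G p.2 p.1) := hG.comp measurable_swap
    fun_prop
  have tot : ∫⁻ k, (∫⁻ w, a w * G w k) ^ s ∂μ ≤ ((∫⁻ w, a w) * A) ^ s := by
    calc _ ≤ ∫⁻ k, ((∫⁻ w, a w) ^ (s / s') * ∫⁻ w, a w * G w k ^ s) ∂μ := by gcongr with k; exact key k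
      _ = (∫⁻ w, a w) ^ (s / s') * ∫⁻ k, (∫⁻ w, a w * G w k ^ s) ∂μ := by
        rw [lintegral_const_mul]
        exact hm.lintegral_prod_right'
      _ = (∫⁻ w, a w) ^ (s / s') * ∫⁻ w, ∫⁻ k, a w * G w k ^ s ∂μ := by
        rw [lintegral_lintegral_swap]
        exact hm.aemeasurable
      _ ≤ (∫⁻ w, a w) ^ (s / s') * ∫⁻ w, a w * A ^ s := by
        gcongr with w
        rw [lintegral_const_mul]
        · gcongr; exact hA' w
        · have : Measurable (fun k => G w k) := hG.comp (by fun_prop : Measurable (fun k : ℂ => (w, k)))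
          fun_prop
      _ = _ := by
        rw [lintegral_mul_const _ ha, ENNReal.mul_rpow_of_nonneg _ _ hs0.le, ← mul_assoc]
        congr 1
        nth_rewrite 2 [← ENNReal.rpow_one (∫⁻ w, a w)]
        rw [← ENNReal.rpow_add_of_nonneg _ _ (by positivity) (by positivity)]
        congr 1
        have : 1 / s' = 1 - 1 / s := by linarith
        rw [div_eq_mul_one_div, this]
        field_simp; ring
  unfold NN
  calc _ ≤ (((∫⁻ w, a w) * A) ^ s) ^ (1 / s) := ENNReal.rpow_le_rpow tot (by positivity)
    _ = _ := by rw [← ENNReal.rpow_mul, mul_one_div_cancel hs0.ne', ENNReal.rpow_one]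

open scoped FourierTransform in
lemma ft_eq (g : ℂ → ℂ) (k : ℂ) :
    ∫ w, ek k w * g w = 𝓕 g ((-(1 / Real.pi)) • conjLIE k) := by
  rw [Real.fourier_eq']
  congr 1
  ext w
  rw [smul_eq_mul, ek_eq]
  congr 4
  simp [Complex.inner]
  field_simp
  ring

open scoped FourierTransform in
lemma ft_continuous (g : ℂ → ℂ) (hg : Integrable g) : Continuous (fun k => ∫ w, ek k w * g w) := by
  simp_rw [ft_eq]
  have hcont : Continuous (𝓕 g) := VectorFourier.fourierIntegral_continuous Real.continuous_fourierChar (by exact continuous_inner) hg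
  exact hcont.comp (by fun_prop)

open scoped FourierTransform in
lemma ft_L2 : ∃ c : ENNReal, c ≠ ⊤ ∧ ∀ g : ℂ → ℂ, Integrable g → MemLp g 2 →
    ∫⁻ k, ‖∫ w, ek k w * g w‖ₑ ^ 2 ≤ c * ∫⁻ w, ‖g w‖ₑ ^ 2 := by
  set r : ℝ := -(1 / Real.pi) with hr
  have hr0 : r ≠ 0 := by rw [hr]; simp [Real.pi_ne_zero]
  refine ⟨ENNReal.ofReal |(r ^ Module.finrank ℝ ℂ)⁻¹|, ENNReal.ofReal_ne_top, fun g h1 h2 => ?_⟩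
  have hcont : Continuous (𝓕 g) := VectorFourier.fourierIntegral_continuous Real.continuous_fourierChar (by exact continuous_inner) h1
  have hm : Measurable (fun ξ => ‖𝓕 g ξ‖ₑ ^ 2) := by
    have := hcont.measurable
    fun_prop
  calc _ = ∫⁻ k, ‖𝓕 g (r • conjLIE k)‖ₑ ^ 2 := by simp_rw [ft_eq]; rfl
    _ = ∫⁻ k, ‖𝓕 g (r • k)‖ₑ ^ 2 :=
      conjLIE.measurePreserving.lintegral_comp (f := fun k => ‖𝓕 g (r • k)‖ₑ ^ 2) (hm.comp (by fun_prop))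
    _ = ∫⁻ k, ‖𝓕 g k‖ₑ ^ 2 ∂(Measure.map (fun x : ℂ => r • x) volume) := by
      rw [lintegral_map hm (by fun_prop)]
    _ = ENNReal.ofReal |(r ^ Module.finrank ℝ ℂ)⁻¹| * ∫⁻ k, ‖𝓕 g k‖ₑ ^ 2 := by
      rw [Measure.map_addHaar_smul _ hr0, lintegral_smul_measure, smul_eq_mul]
    _ ≤ _ := mul_le_mul_right (plancherel_le g h1 h2) _

lemma ft_Ls {s : ℝ} (hs : 2 < s) : ∃ c : ENNReal, c ≠ ⊤ ∧ ∀ (g : ℂ → ℂ) (S : Set ℂ) (b : ENNReal),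
    AEStronglyMeasurable g volume → MeasurableSet S → volume S ≠ ⊤ → b ≠ ⊤ →
    (∀ w, ‖g w‖ₑ ≤ S.indicator (fun _ => b) w) →
    NN s volume (fun k => ‖∫ w, ek k w * g w‖ₑ) ≤ c * (b * volume S ^ (1 - 1 / s)) := by
  obtain ⟨c, hc, h⟩ := ft_L2
  have hs0 : 0 < s := by linarith
  refine ⟨c ^ (1 / s), ENNReal.rpow_ne_top_of_nonneg (by positivity) hc, fun g S b hg hS hvS hb hbd => ?_⟩
  have h1 : ∫⁻ w, ‖g w‖ₑ ≤ b * volume S := by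
    calc _ ≤ ∫⁻ w, S.indicator (fun _ => b) w := lintegral_mono hbd
      _ = _ := lintegral_indicator_const hS b
  have h2 : ∫⁻ w, ‖g w‖ₑ ^ 2 ≤ b ^ 2 * volume S := by
    calc _ ≤ ∫⁻ w, S.indicator (fun _ => b ^ 2) w := by
          apply lintegral_mono
          intro w
          have := hbd w
          by_cases hw : w ∈ S
          · simp only [Set.indicator_of_mem hw] at this ⊢; gcongr
          · simp only [Set.indicator_of_notMem hw] at this ⊢
            simp [le_zero_iff.1 this]
      _ = _ := lintegral_indicator_const hS _
  have hi : Integrable g := ⟨hg, lt_of_le_of_lt h1 (ENNReal.mul_lt_top hb.lt_top hvS.lt_top)⟩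
  have hi2 : MemLp g 2 := by
    refine ⟨hg, ?_⟩
    rw [eLpNorm_eq_lintegral_rpow_enorm_toReal (p := 2) (by norm_num) (by norm_num)]
    apply ENNReal.rpow_lt_top_of_nonneg (by simp)
    simp only [ENNReal.toReal_ofNat, ENNReal.rpow_ofNat]
    exact (lt_of_le_of_lt h2 (ENNReal.mul_lt_top (ENNReal.pow_lt_top hb.lt_top) hvS.lt_top)).ne
  have h3 := h g hi hi2
  have h4 : ∀ k, ‖∫ w, ek k w * g w‖ₑ ≤ b * volume S := by
    intro k
    refine (enorm_integral_le_lintegral_enorm _).trans ?_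
    simpa [enorm_mul, enorm_ek] using h1
  have h5 : ∫⁻ k, ‖∫ w, ek k w * g w‖ₑ ^ s ≤ c * (b ^ s * volume S ^ (s - 1)) := by
    calc _ ≤ ∫⁻ k, (b * volume S) ^ (s - 2) * ‖∫ w, ek k w * g w‖ₑ ^ 2 := by
          gcongr with k
          have : s = (s - 2) + 2 := by ring
          nth_rewrite 1 [this]
          rw [ENNReal.rpow_add_of_nonneg _ _ (by linarith) (by norm_num), ENNReal.rpow_ofNat]
          gcongr
          exact h4 k
      _ = (b * volume S) ^ (s - 2) * ∫⁻ k, ‖∫ w, ek k w * g w‖ₑ ^ 2 := by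
          rw [lintegral_const_mul]
          have := (ft_continuous g hi).measurable
          fun_prop
      _ ≤ (b * volume S) ^ (s - 2) * (c * (b ^ 2 * volume S)) := by
          gcongr
          exact h3.trans (by gcongr)
      _ = _ := by
          rw [ENNReal.mul_rpow_of_nonneg _ _ (by linarith)]
          have e1 : b ^ s = b ^ (s - 2) * b ^ 2 := by
            rw [← ENNReal.rpow_ofNat, ← ENNReal.rpow_add_of_nonneg _ _ (by linarith) (by norm_num)]
            congr 1; simp
          have e2 : volume S ^ (s - 1) = volume S ^ (s - 2) * volume S := by
            nth_rewrite 3 [← ENNReal.rpow_one (volume S)]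
            rw [← ENNReal.rpow_add_of_nonneg _ _ (by linarith) (by norm_num)]
            congr 1; ring
          rw [e1, e2]; ring
  unfold NN
  calc _ ≤ (c * (b ^ s * volume S ^ (s - 1))) ^ (1 / s) := ENNReal.rpow_le_rpow h5 (by positivity)
    _ = _ := by
      rw [ENNReal.mul_rpow_of_nonneg _ _ (by positivity), ENNReal.mul_rpow_of_nonneg _ _ (by positivity),
        ← ENNReal.rpow_mul, ← ENNReal.rpow_mul, mul_one_div_cancel hs0.ne', ENNReal.rpow_one]
      congr 3
      field_simp

lemma enorm_conj' (z : ℂ) : ‖(starRingEnd ℂ) z‖ₑ = ‖z‖ₑ := by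
  rw [← ofReal_norm, ← ofReal_norm, RCLike.norm_conj]

lemma enorm_cdiv (q : ℂ → ℂ) (v w : ℂ) : ‖(starRingEnd ℂ) (q w / (v - w))‖ₑ ≤ ‖q w‖ₑ * ‖v - w‖ₑ⁻¹ := by
  rw [enorm_conj', div_eq_mul_inv, enorm_mul]
  gcongr
  by_cases h : v - w = 0
  · simp [h]
  · rw [enorm_inv h]

lemma integrable_cdiv (q : ℂ → ℂ) (hq : Continuous q) (hqs : HasCompactSupport q) (v : ℂ) :
    Integrable (fun w => (starRingEnd ℂ) (q w / (v - w))) := by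
  obtain ⟨D, hD, h⟩ := pot_bound q hq hqs
  refine ⟨?_, ?_⟩
  · have := hq.measurable
    apply Measurable.aestronglyMeasurable
    fun_prop
  · exact lt_of_le_of_lt ((lintegral_mono (enorm_cdiv q v)).trans (h v)) hD.lt_top

lemma fourier_cauchy {s : ℝ} (hs : 2 < s) (q : ℂ → ℂ) (hq : Continuous q) (hqs : HasCompactSupport q) :
    ∃ C : ENNReal, C ≠ ⊤ ∧ ∀ v,
      NN s volume (fun k => ‖∫ w, ek k w * (starRingEnd ℂ) (q w / (v - w))‖ₑ) ≤ C := by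
  have hs0 : 0 < s := by linarith
  obtain ⟨c, hc, hft⟩ := ft_Ls hs
  obtain ⟨Q, hQ⟩ := hq.bounded_above_of_compact_support hqs
  have hQ0 : 0 ≤ Q := (norm_nonneg _).trans (hQ 0)
  set Q' := ENNReal.ofReal Q
  have hQ' : ∀ w, ‖q w‖ₑ ≤ Q' := fun w => by
    rw [← ofReal_norm]; exact ENNReal.ofReal_le_ofReal (hQ w)
  set K := tsupport q
  have hKm : MeasurableSet K := (isClosed_tsupport q).measurableSet
  have hKv : volume K ≠ ⊤ := hqs.measure_lt_top.ne
  set c0 : ENNReal := c * (Q' * volume K ^ (1 - 1 / s)) with hc0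
  set c1 : ENNReal := c * (Q' * 2 * (NNReal.pi : ENNReal) ^ (1 - 1 / s)) with hc1
  set θ : ℝ := 2 * (1 / 4) ^ (1 - 1 / s) with hθ
  have hθ0 : 0 < θ := by positivity
  have hsi : 1 / s < 1 / 2 := by
    apply one_div_lt_one_div_of_lt <;> linarith
  have hθ1 : θ < 1 := by
    have : ((1:ℝ) / 4) ^ (1 - 1 / s) < (1 / 4) ^ ((1:ℝ) / 2) :=
      Real.rpow_lt_rpow_of_exponent_gt (by norm_num) (by norm_num) (by linarith)
    have h4 : ((1:ℝ) / 4) ^ ((1:ℝ) / 2) = 1 / 2 := by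
      rw [← Real.sqrt_eq_rpow, show (1:ℝ) / 4 = (1 / 2) ^ 2 by norm_num, Real.sqrt_sq (by norm_num)]
    rw [hθ]; linarith
  refine ⟨c0 + c1 * (1 - ENNReal.ofReal θ)⁻¹, ?_, fun v => ?_⟩
  · refine ENNReal.add_ne_top.2 ⟨ENNReal.mul_ne_top hc (ENNReal.mul_ne_top ENNReal.ofReal_ne_top
      (ENNReal.rpow_ne_top_of_nonneg (by linarith) hKv)), ENNReal.mul_ne_top (ENNReal.mul_ne_top hc
      (ENNReal.mul_ne_top (ENNReal.mul_ne_top ENNReal.ofReal_ne_top (by simp))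
      (ENNReal.rpow_ne_top_of_nonneg (by linarith) (by simp)))) ?_⟩
    rw [Ne, ENNReal.inv_eq_top, tsub_eq_zero_iff_le, not_le]
    simpa using hθ1
  set g : ℂ → ℂ := fun w => (starRingEnd ℂ) (q w / (v - w)) with hg
  have hgi : Integrable g := integrable_cdiv q hq hqs v
  have hgm : Measurable g := by
    have := hq.measurable
    fun_prop
  set S : ℕ → Set ℂ := fun j => {w | (1 / 2 : ℝ) ^ j ≤ ‖v - w‖} with hS
  have hSm : ∀ j, MeasurableSet (S j) := fun j => measurableSet_le (by fun_prop) (by fun_prop)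
  set gj : ℕ → ℂ → ℂ := fun j => (S j).indicator g with hgj
  have hgjm : ∀ j, Measurable (gj j) := fun j => hgm.indicator (hSm j)
  have hgji : ∀ j, Integrable (gj j) := fun j => hgi.indicator (hSm j)
  have hgle : ∀ (j : ℕ) (w : ℂ), w ∈ S j → ‖g w‖ₑ ≤ Q' * 2 ^ j := by
    intro j w hw
    refine (enorm_cdiv q v w).trans ?_
    gcongr
    · exact hQ' w
    · rw [ENNReal.inv_le_iff_inv_le, ← ofReal_norm]
      have : (2 ^ j : ENNReal)⁻¹ = ENNReal.ofReal ((1 / 2) ^ j) := by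
        rw [ENNReal.ofReal_pow (by norm_num), ENNReal.inv_pow]
        congr 1
        rw [one_div, ENNReal.ofReal_inv_of_pos (by norm_num)]; simp
      rw [this]
      exact ENNReal.ofReal_le_ofReal hw
  have hmeasF : ∀ h : ℂ → ℂ, Integrable h → Measurable (fun k => ‖∫ w, ek k w * h w‖ₑ) := by
    intro h hh
    have := (ft_continuous h hh).measurable
    fun_prop
  have h0 : NN s volume (fun k => ‖∫ w, ek k w * gj 0 w‖ₑ) ≤ c0 := by
    apply hft _ K Q' (hgjm 0).aestronglyMeasurable hKm hKv ENNReal.ofReal_ne_top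
    intro w
    by_cases hw : w ∈ S 0
    · by_cases hwK : w ∈ K
      · simp only [hgj, Set.indicator_of_mem hw, Set.indicator_of_mem hwK]
        simpa using hgle 0 w hw
      · have : q w = 0 := image_eq_zero_of_notMem_tsupport hwK
        simp [hgj, hg, this, Set.indicator_of_mem hw]
    · simp [hgj, Set.indicator_of_notMem hw]
  have hstep : ∀ j, NN s volume (fun k => ‖∫ w, ek k w * (gj (j + 1) w - gj j w)‖ₑ) ≤ c1 * ENNReal.ofReal θ ^ j := by
    intro j
    have hb := hft (fun w => gj (j + 1) w - gj j w) (Metric.ball v ((1 / 2) ^ j)) (Q' * 2 ^ (j + 1))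
      ((hgjm _).sub (hgjm _)).aestronglyMeasurable Metric.isOpen_ball.measurableSet (by simp [Complex.volume_ball, ENNReal.mul_eq_top])
      (ENNReal.mul_ne_top ENNReal.ofReal_ne_top (by simp)) ?_
    · refine hb.trans_eq ?_
      rw [Complex.volume_ball, hc1, mul_assoc c]
      congr 1
      rw [ENNReal.mul_rpow_of_nonneg _ _ (by linarith), hθ, ENNReal.ofReal_mul (by norm_num), mul_pow, pow_succ]
      have : (ENNReal.ofReal ((1 / 2) ^ j) ^ 2) ^ (1 - 1 / s) = ENNReal.ofReal ((1 / 4) ^ (1 - 1 / s)) ^ j := by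
        rw [← ENNReal.ofReal_pow (by positivity), ← ENNReal.ofReal_pow (by positivity),
          ENNReal.ofReal_rpow_of_nonneg (by positivity) (by linarith)]
        congr 1
        rw [← Real.rpow_natCast (((1:ℝ) / 4) ^ (1 - 1 / s)), ← Real.rpow_mul (by norm_num), mul_comm (1 - 1 / s),
          Real.rpow_mul (by norm_num), Real.rpow_natCast, ← pow_mul, mul_comm j 2, pow_mul]
        norm_num
      rw [this]
      simp only [ENNReal.ofReal_ofNat]
      ring
    · intro w
      by_cases h1 : w ∈ S (j + 1)
      · by_cases h2 : w ∈ S j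
        · simp [hgj, Set.indicator_of_mem h1, Set.indicator_of_mem h2]
        · have h3 : w ∈ Metric.ball v ((1 / 2) ^ j) := by
            simpa [hS, dist_eq_norm, norm_sub_rev] using h2
          simp only [hgj, Set.indicator_of_mem h1, Set.indicator_of_notMem h2, Set.indicator_of_mem h3, sub_zero]
          exact hgle _ _ h1
      · have h2 : w ∉ S j := by
          intro h2
          apply h1
          refine le_trans ?_ (show (1 / 2 : ℝ) ^ j ≤ ‖v - w‖ from h2)
          exact pow_le_pow_of_le_one (by norm_num) (by norm_num) (Nat.le_succ j)
        simp [hgj, Set.indicator_of_notMem h1, Set.indicator_of_notMem h2]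
  have hn : ∀ n, NN s volume (fun k => ‖∫ w, ek k w * gj n w‖ₑ) ≤ c0 + c1 * ∑ j ∈ Finset.range n, ENNReal.ofReal θ ^ j := by
    intro n
    induction n with
    | zero => simpa using h0
    | succ n ih =>
      calc _ ≤ NN s volume (fun k => ‖∫ w, ek k w * gj n w‖ₑ + ‖∫ w, ek k w * (gj (n + 1) w - gj n w)‖ₑ) := by
            apply NN_mono hs0
            intro k
            have hk : ∀ h : ℂ → ℂ, Integrable h → Integrable (fun w => ek k w * h w) := fun h hh =>
              hh.bdd_mul (c := 1) (continuous_ek_right k).aestronglyMeasurable (by simp [norm_ek])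
            have : ∫ w, ek k w * gj (n + 1) w = (∫ w, ek k w * gj n w) + ∫ w, ek k w * (gj (n + 1) w - gj n w) := by
              rw [← integral_add (hk _ (hgji n)) (hk (fun w => gj (n + 1) w - gj n w) ((hgji (n + 1)).sub (hgji n)))]
              congr 1; ext w; ring
            rw [this]
            exact enorm_add_le _ _
        _ ≤ _ := NN_add (by linarith) (hmeasF _ (hgji n)) (hmeasF _ ((hgji (n + 1)).sub (hgji n)))
        _ ≤ _ := by
            rw [Finset.sum_range_succ, mul_add, ← add_assoc]
            exact add_le_add ih (hstep n)
  have hn' : ∀ n, ∫⁻ k, ‖∫ w, ek k w * gj n w‖ₑ ^ s ≤ (c0 + c1 * (1 - ENNReal.ofReal θ)⁻¹) ^ s := by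
    intro n
    have h1 : NN s volume (fun k => ‖∫ w, ek k w * gj n w‖ₑ) ≤ c0 + c1 * (1 - ENNReal.ofReal θ)⁻¹ := by
      refine (hn n).trans ?_
      gcongr
      rw [← ENNReal.tsum_geometric]
      exact ENNReal.sum_le_tsum _
    have := ENNReal.rpow_le_rpow h1 hs0.le
    rwa [NN, ← ENNReal.rpow_mul, one_div_mul_cancel hs0.ne', ENNReal.rpow_one] at this
  have hlim : ∀ k, Filter.Tendsto (fun n => ‖∫ w, ek k w * gj n w‖ₑ ^ s) Filter.atTop (nhds (‖∫ w, ek k w * g w‖ₑ ^ s)) := by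
    intro k
    apply (ENNReal.continuous_rpow_const.tendsto _).comp
    apply (continuous_enorm.tendsto _).comp
    apply tendsto_integral_of_dominated_convergence (fun w => ‖g w‖)
    · intro n
      exact ((continuous_ek_right k).measurable.mul (hgjm n)).aestronglyMeasurable
    · exact hgi.norm
    · intro n
      filter_upwards with w
      rw [norm_mul, norm_ek, one_mul]
      exact norm_indicator_le_norm_self _ _
    · filter_upwards with w
      apply Filter.Tendsto.const_mul
      by_cases hw : v - w = 0
      · have : g w = 0 := by simp only [hg, hw, div_zero, map_zero]
        have h2 : ∀ n, gj n w = 0 := fun n => by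
          simp only [hgj, Set.indicator_apply, this, ite_self]
        simp [this, h2]
      · have : ∀ᶠ n in Filter.atTop, gj n w = g w := by
          have h1 : Filter.Tendsto (fun n : ℕ => (1 / 2 : ℝ) ^ n) Filter.atTop (nhds 0) :=
            tendsto_pow_atTop_nhds_zero_of_lt_one (by norm_num) (by norm_num)
          filter_upwards [h1.eventually (gt_mem_nhds (norm_pos_iff.2 hw))] with n hn
          exact Set.indicator_of_mem (show w ∈ S n from hn.le) _
        exact tendsto_const_nhds.congr' (this.mono fun n h => h.symm)
  have hfin : ∫⁻ k, ‖∫ w, ek k w * g w‖ₑ ^ s ≤ (c0 + c1 * (1 - ENNReal.ofReal θ)⁻¹) ^ s := by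
    calc _ = ∫⁻ k, Filter.liminf (fun n => ‖∫ w, ek k w * gj n w‖ₑ ^ s) Filter.atTop := by
          congr 1; ext k; exact (hlim k).liminf_eq.symm
      _ ≤ Filter.liminf (fun n => ∫⁻ k, ‖∫ w, ek k w * gj n w‖ₑ ^ s) Filter.atTop :=
          lintegral_liminf_le fun n => (hmeasF _ (hgji n)).pow_const s
      _ ≤ _ := by
          refine (Filter.liminf_le_liminf (Filter.Eventually.of_forall hn')).trans ?_
          simp
  unfold NN
  calc _ ≤ ((c0 + c1 * (1 - ENNReal.ofReal θ)⁻¹) ^ s) ^ (1 / s) := ENNReal.rpow_le_rpow hfin (by positivity)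
    _ = _ := by rw [← ENNReal.rpow_mul, mul_one_div_cancel hs0.ne', ENNReal.rpow_one]

lemma wirt_aux (L : ℂ →L[ℝ] ℂ) (e : ℂ) :
    L e + I * L (e * I) = (starRingEnd ℂ) e * (L 1 + I * L I) := by
  have h1 : e = e.re • (1 : ℂ) + e.im • I := by simp
  have h2 : e * I = e.re • I + (-e.im) • (1 : ℂ) := by
    apply Complex.ext <;> simp
  have h3 : (starRingEnd ℂ) e = e.re - e.im * I := by
    apply Complex.ext <;> simp
  rw [h3, h2]
  nth_rewrite 1 [h1]
  rw [map_add, map_add, map_smul, map_smul, map_smul, map_smul]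
  simp only [real_smul]
  push_cast
  linear_combination (e.im : ℂ) * L I * I_sq

/-- Polar coordinates map. -/
noncomputable def upol (z : ℂ) (p : ℝ × ℝ) : ℂ := z + p.1 * exp (p.2 * I)

lemma continuous_upol (z : ℂ) : Continuous (upol z) := by
  unfold upol; fun_prop

lemma hasFDerivAt_upol (z : ℂ) (p : ℝ × ℝ) : HasFDerivAt (upol z)
    ((ContinuousLinearMap.fst ℝ ℝ ℝ).smulRight (exp (p.2 * I)) +
      (ContinuousLinearMap.snd ℝ ℝ ℝ).smulRight (p.1 * (exp (p.2 * I) * I))) p := by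
  have h1 : HasFDerivAt (fun p : ℝ × ℝ => (p.1 : ℂ)) (ofRealCLM.comp (ContinuousLinearMap.fst ℝ ℝ ℝ)) p :=
    ofRealCLM.hasFDerivAt.comp p hasFDerivAt_fst
  have h2 : HasFDerivAt (fun p : ℝ × ℝ => (p.2 : ℂ)) (ofRealCLM.comp (ContinuousLinearMap.snd ℝ ℝ ℝ)) p :=
    ofRealCLM.hasFDerivAt.comp p hasFDerivAt_snd
  have h3 := (h1.mul ((h2.mul_const I).cexp)).const_add z
  refine h3.congr_fderiv ?_
  ext <;> simp <;> ring

lemma pompeiu_A (f h : ℂ → ℂ) (hf : Differentiable ℝ f) (hh : Continuous h)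
    (hd : ∀ z, wDbar f z = h z) (z : ℂ) (r R : ℝ) (hr : 0 < r) (hrR : r ≤ R) :
    ∫ ρ in r..R, ∫ θ in (-Real.pi)..Real.pi, 2 * (starRingEnd ℂ) (exp (θ * I)) * h (upol z (ρ, θ)) =
      (∫ θ in (-Real.pi)..Real.pi, f (upol z (R, θ))) - ∫ θ in (-Real.pi)..Real.pi, f (upol z (r, θ)) := by
  set G : ℝ × ℝ → ℂ := fun p => f (upol z p) with hG
  set u' : ℝ × ℝ → ℝ × ℝ →L[ℝ] ℂ := fun p => ((ContinuousLinearMap.fst ℝ ℝ ℝ).smulRight (exp (p.2 * I)) +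
      (ContinuousLinearMap.snd ℝ ℝ ℝ).smulRight (p.1 * (exp (p.2 * I) * I))) with hu'
  set G' : ℝ × ℝ → ℝ × ℝ →L[ℝ] ℂ := fun p => (fderiv ℝ f (upol z p)).comp (u' p) with hG'
  have hGd : ∀ p, HasFDerivAt G (G' p) p := fun p => (hf (upol z p)).hasFDerivAt.comp p (hasFDerivAt_upol z p)
  have hGc : Continuous G := hf.continuous.comp (continuous_upol z)
  set g : ℝ × ℝ → ℂ := fun p => (I * ((p.1⁻¹ : ℝ) : ℂ)) * G p with hg
  set g' : ℝ × ℝ → ℝ × ℝ →L[ℝ] ℂ := fun p => (I * ((p.1⁻¹ : ℝ) : ℂ)) • G' p +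
    (ContinuousLinearMap.fst ℝ ℝ ℝ).smulRight (I * ((-(p.1 ^ 2)⁻¹ : ℝ) : ℂ) * G p) with hg'
  have hgd : ∀ p : ℝ × ℝ, 0 < p.1 → HasFDerivAt g (g' p) p := by
    intro p hp
    have h1 : HasFDerivAt (fun p : ℝ × ℝ => p.1⁻¹) ((-(p.1 ^ 2)⁻¹) • ContinuousLinearMap.fst ℝ ℝ ℝ) p :=
      (hasDerivAt_inv hp.ne').comp_hasFDerivAt p hasFDerivAt_fst
    have h2 : HasFDerivAt (fun p : ℝ × ℝ => ((p.1⁻¹ : ℝ) : ℂ)) (ofRealCLM.comp ((-(p.1 ^ 2)⁻¹) • ContinuousLinearMap.fst ℝ ℝ ℝ)) p :=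
      ofRealCLM.hasFDerivAt.comp p h1
    have h3 := (h2.const_mul I).mul (hGd p)
    refine h3.congr_fderiv ?_
    ext <;> simp [hg'] <;> ring
  have hgc : ContinuousOn g (Set.uIcc r R ×ˢ Set.uIcc (-Real.pi) Real.pi) := by
    intro p hp
    rw [Set.uIcc_of_le hrR] at hp
    exact (hgd p (lt_of_lt_of_le hr hp.1.1)).continuousAt.continuousWithinAt
  have key : ∀ p : ℝ × ℝ, 0 < p.1 → G' p (1, 0) + g' p (0, 1) =
      2 * (starRingEnd ℂ) (exp (p.2 * I)) * h (upol z p) := by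
    intro p hp
    have e := wirt_aux (fderiv ℝ f (upol z p)) (exp (p.2 * I))
    have e2 := hd (upol z p)
    have e3 : fderiv ℝ f (upol z p) (p.1 * (exp (p.2 * I) * I)) = p.1 * fderiv ℝ f (upol z p) (exp (p.2 * I) * I) := by
      rw [← real_smul, map_smul, real_smul]
    simp only [hG', hg', hu', ContinuousLinearMap.comp_apply, ContinuousLinearMap.add_apply,
      ContinuousLinearMap.smulRight_apply, ContinuousLinearMap.coe_fst', ContinuousLinearMap.coe_snd',
      one_smul, zero_smul, add_zero, zero_add, smul_apply, smul_eq_mul, e3]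
    rw [← e2, wDbar]
    have hp' : ((p.1 : ℝ) : ℂ) ≠ 0 := by exact_mod_cast hp.ne'
    have e4 : I * ((p.1⁻¹ : ℝ) : ℂ) * (p.1 * fderiv ℝ f (upol z p) (exp (p.2 * I) * I)) = I * fderiv ℝ f (upol z p) (exp (p.2 * I) * I) := by
      push_cast; field_simp
    rw [e4, e]; ring
  have hHc : Continuous (fun p : ℝ × ℝ => 2 * (starRingEnd ℂ) (exp (p.2 * I)) * h (upol z p)) := by
    have := hh.comp (continuous_upol z)
    have h2 : Continuous (fun p : ℝ × ℝ => (starRingEnd ℂ) (exp (p.2 * I))) := continuous_conj.comp (by fun_prop)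
    exact (continuous_const.mul h2).mul this
  have main := integral2_divergence_prod_of_hasFDerivAt G g G' g' r (-Real.pi) R Real.pi hGc.continuousOn hgc
    (fun p _ => hGd p) (fun p hp => hgd p (by
      have := hp.1.1; rw [min_eq_left hrR] at this; linarith)) (by
      have hm : MeasurableSet (Set.uIcc r R ×ˢ Set.uIcc (-Real.pi) Real.pi) := measurableSet_uIcc.prod measurableSet_uIcc
      refine IntegrableOn.congr_fun (f := fun p : ℝ × ℝ => 2 * (starRingEnd ℂ) (exp (p.2 * I)) * h (upol z p)) ?_ ?_ hm
      · exact hHc.continuousOn.integrableOn_compact (isCompact_uIcc.prod isCompact_uIcc)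
      · intro p hp
        rw [Set.uIcc_of_le hrR] at hp
        exact (key p (lt_of_lt_of_le hr hp.1.1)).symm)
  have hper : ∀ ρ, g (ρ, Real.pi) = g (ρ, -Real.pi) := by
    intro ρ
    simp only [hg, hG, upol]
    push_cast
    rw [neg_mul, exp_neg, exp_pi_mul_I]; norm_num
  simp only [hper, sub_self, zero_add] at main
  rw [← main]
  apply intervalIntegral.integral_congr
  intro ρ hρ
  rw [Set.uIcc_of_le hrR] at hρ
  apply intervalIntegral.integral_congr
  intro θ _
  exact (key (ρ, θ) (lt_of_lt_of_le hr hρ.1)).symm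

lemma cauchy_pompeiu (f h : ℂ → ℂ) (hf : Differentiable ℝ f) (hh : Continuous h) (hhs : HasCompactSupport h)
    (hd : ∀ z, wDbar f z = h z) (hlim : Filter.Tendsto f (Filter.cocompact ℂ) (nhds 0)) (z : ℂ) :
    f z = (Real.pi : ℂ)⁻¹ * ∫ w, h w / (z - w) := by
  set H : ℝ × ℝ → ℂ := fun p => 2 * (starRingEnd ℂ) (exp (p.2 * I)) * h (upol z p) with hH
  have hHc : Continuous H := by
    have := hh.comp (continuous_upol z)
    have h2 : Continuous (fun p : ℝ × ℝ => (starRingEnd ℂ) (exp (p.2 * I))) := continuous_conj.comp (by fun_prop)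
    exact (continuous_const.mul h2).mul this
  set a : ℝ → ℂ := fun ρ => ∫ θ in (-Real.pi)..Real.pi, H (ρ, θ) with ha
  have hac : Continuous a := by
    apply intervalIntegral.continuous_parametric_intervalIntegral_of_continuous' (f := fun ρ θ => H (ρ, θ))
    exact hHc
  set b : ℝ → ℂ := fun ρ => ∫ θ in (-Real.pi)..Real.pi, f (upol z (ρ, θ)) with hb
  have hbc : Continuous b := by
    apply intervalIntegral.continuous_parametric_intervalIntegral_of_continuous' (f := fun ρ θ => f (upol z (ρ, θ)))
    exact (hf.continuous.comp (continuous_upol z))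
  have hA : ∀ r R, 0 < r → r ≤ R → ∫ ρ in r..R, a ρ = b R - b r :=
    fun r R hr hrR => pompeiu_A f h hf hh hd z r R hr hrR
  have hb0 : b 0 = 2 * Real.pi * f z := by
    simp only [hb, upol, ofReal_zero, zero_mul, add_zero]
    rw [intervalIntegral.integral_const, real_smul]; push_cast; ring
  have hB : ∀ R, 0 < R → ∫ ρ in (0:ℝ)..R, a ρ = b R - 2 * Real.pi * f z := by
    intro R hR
    have h1 : Filter.Tendsto (fun r => ∫ ρ in r..R, a ρ) (nhdsWithin 0 (Set.Ioi 0)) (nhds (∫ ρ in (0:ℝ)..R, a ρ)) := by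
      have : Continuous (fun r => ∫ ρ in r..R, a ρ) := by
        have h2 : (fun r => ∫ ρ in r..R, a ρ) = fun r => -∫ ρ in R..r, a ρ := by
          ext r; rw [intervalIntegral.integral_symm]
        rw [h2]
        exact (intervalIntegral.continuous_primitive (fun a b => hac.intervalIntegrable a b) R).neg
      exact (this.tendsto 0).mono_left nhdsWithin_le_nhds
    have h2 : Filter.Tendsto (fun r => b R - b r) (nhdsWithin 0 (Set.Ioi 0)) (nhds (b R - b 0)) :=
      ((continuous_const.sub hbc).tendsto 0).mono_left nhdsWithin_le_nhds
    rw [← hb0]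
    refine tendsto_nhds_unique h1 (h2.congr' ?_)
    filter_upwards [Ioo_mem_nhdsGT hR] with r hr
    exact (hA r R hr.1 hr.2.le).symm
  obtain ⟨R0, hR0, hsup⟩ : ∃ R0 : ℝ, 0 < R0 ∧ ∀ ρ θ : ℝ, R0 < ρ → H (ρ, θ) = 0 := by
    obtain ⟨T, hT⟩ := hhs.isCompact.isBounded.subset_closedBall z
    refine ⟨max T 1, by positivity, fun ρ θ hρ => ?_⟩
    have h1 : upol z (ρ, θ) ∉ tsupport h := by
      intro hmem
      have := hT hmem
      have hρ0 : 0 < ρ := lt_of_lt_of_le (by positivity) hρ.le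
      simp [upol, dist_eq_norm, Complex.norm_exp_ofReal_mul_I, abs_of_pos hρ0] at this
      linarith [le_max_left T 1]
    simp [hH, image_eq_zero_of_notMem_tsupport h1]
  have hconst : ∀ R, R0 ≤ R → ∫ ρ in (0:ℝ)..R, a ρ = ∫ ρ in (0:ℝ)..R0, a ρ := by
    intro R hR
    rw [← intervalIntegral.integral_add_adjacent_intervals (hac.intervalIntegrable 0 R0) (hac.intervalIntegrable R0 R)]
    have : ∫ ρ in R0..R, a ρ = 0 := by
      rw [intervalIntegral.integral_of_le hR]
      apply setIntegral_eq_zero_of_forall_eq_zero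
      intro ρ hρ
      simp only [ha]
      simp [hsup ρ _ hρ.1]
    rw [this, add_zero]
  have hbl : Filter.Tendsto b Filter.atTop (nhds 0) := by
    rw [Metric.tendsto_nhds]
    intro ε hε
    have h1 : ∀ᶠ w in Filter.cocompact ℂ, ‖f w‖ < ε / 7 := by
      have := (Metric.tendsto_nhds.1 hlim) (ε / 7) (by positivity)
      simpa using this
    rw [← Metric.cobounded_eq_cocompact] at h1
    obtain ⟨T, -, hT⟩ := (Metric.hasBasis_cobounded_compl_closedBall z).mem_iff.1 h1
    filter_upwards [Filter.eventually_gt_atTop (max T 1)] with ρ hρ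
    have hρ0 : 0 < ρ := lt_of_lt_of_le (by positivity) hρ.le
    rw [dist_zero_right]
    have := intervalIntegral.norm_integral_le_of_norm_le_const (a := -Real.pi) (b := Real.pi) (C := ε / 7) (f := fun θ => f (upol z (ρ, θ))) (by
      intro θ _
      have : upol z (ρ, θ) ∈ (Metric.closedBall z T)ᶜ := by
        simp [upol, dist_eq_norm, Complex.norm_exp_ofReal_mul_I, abs_of_pos hρ0]
        linarith [le_max_left T 1]
      exact (hT this).le)
    refine lt_of_le_of_lt this ?_
    rw [abs_of_pos (by linarith [Real.pi_pos])]
    have := Real.pi_lt_d2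
    nlinarith
  have hJ : ∫ ρ in (0:ℝ)..R0, a ρ = - (2 * Real.pi * f z) := by
    have h1 : Filter.Tendsto (fun R => b R - 2 * Real.pi * f z) Filter.atTop (nhds (0 - 2 * Real.pi * f z)) :=
      hbl.sub_const _
    rw [zero_sub] at h1
    refine tendsto_nhds_unique (tendsto_const_nhds.congr' ?_) h1
    filter_upwards [Filter.eventually_ge_atTop R0] with R hR
    rw [← hB R (lt_of_lt_of_le hR0 hR), hconst R hR]
  have hD : ∫ w, h w / (z - w) = - (1 / 2) * ∫ ρ in (0:ℝ)..R0, a ρ := by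
    have e1 : ∫ w, h w / (z - w) = ∫ u, h (z + u) / (-u) := by
      rw [← integral_add_left_eq_self _ z]
      congr 1; ext u; congr 1; ring
    rw [e1, ← Complex.integral_comp_polarCoord_symm, polarCoord_target]
    have e2 : ∫ p in Set.Ioi (0:ℝ) ×ˢ Set.Ioo (-Real.pi) Real.pi, p.1 • (h (z + Complex.polarCoord.symm p) / (-Complex.polarCoord.symm p))
        = ∫ p in Set.Ioi (0:ℝ) ×ˢ Set.Ioo (-Real.pi) Real.pi, -(1 / 2) * H p := by
      apply setIntegral_congr_fun (measurableSet_Ioi.prod measurableSet_Ioo)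
      intro p hp
      have hp0 : ((p.1 : ℝ) : ℂ) ≠ 0 := by exact_mod_cast (ne_of_gt hp.1)
      have e3 : Complex.polarCoord.symm p = p.1 * exp (p.2 * I) := by
        rw [Complex.polarCoord_symm_apply, exp_mul_I]; push_cast; rfl
      have e4 : (starRingEnd ℂ) (exp (p.2 * I)) = (exp (p.2 * I))⁻¹ := by
        rw [← exp_conj, ← exp_neg]; simp
      simp only [hH, upol, e3, e4, real_smul]
      have := exp_ne_zero (p.2 * I)
      field_simp
    rw [e2, integral_const_mul]
    congr 1
    have e5 : ∫ p in Set.Ioi (0:ℝ) ×ˢ Set.Ioo (-Real.pi) Real.pi, H p = ∫ p in Set.Ioc (0:ℝ) R0 ×ˢ Set.Ioo (-Real.pi) Real.pi, H p := by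
      apply setIntegral_eq_of_subset_of_forall_sdiff_eq_zero (measurableSet_Ioi.prod measurableSet_Ioo)
      · exact Set.prod_mono_left Set.Ioc_subset_Ioi_self
      · rintro ⟨ρ, θ⟩ ⟨h1, h2⟩
        apply hsup
        by_contra h3
        exact h2 ⟨⟨h1.1, not_lt.1 h3⟩, h1.2⟩
    rw [e5, intervalIntegral.integral_of_le hR0.le, Measure.volume_eq_prod, setIntegral_prod]
    · apply setIntegral_congr_fun measurableSet_Ioc
      intro ρ _
      simp only [ha]
      rw [intervalIntegral.integral_of_le (by linarith [Real.pi_pos]), integral_Ioc_eq_integral_Ioo]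
    · have : IntegrableOn H (Set.Icc (0:ℝ) R0 ×ˢ Set.Icc (-Real.pi) Real.pi) :=
        hHc.continuousOn.integrableOn_compact (isCompact_Icc.prod isCompact_Icc)
      exact this.mono_set (Set.prod_mono Set.Ioc_subset_Icc_self Set.Ioo_subset_Icc_self)
  rw [hD, hJ]
  have : (Real.pi : ℂ) ≠ 0 := by exact_mod_cast Real.pi_ne_zero
  field_simp

lemma IsHolder.uc {ε : ℝ} (hε : 0 < ε) {f : ℂ → ℂ} (hf : IsHolder ε f) :
    ∀ η > 0, ∃ δ > 0, ∀ z z', ‖z - z'‖ ≤ δ → ‖f z - f z'‖ ≤ η := by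
  obtain ⟨C, hC, h⟩ := hf
  intro η hη
  refine ⟨(η / (C + 1)) ^ (1 / ε), by positivity, fun z z' hz => (h z z').trans ?_⟩
  have h1 : ‖z - z'‖ ^ ε ≤ η / (C + 1) := by
    calc _ ≤ ((η / (C + 1)) ^ (1 / ε)) ^ ε := by gcongr
      _ = _ := by rw [← Real.rpow_mul (by positivity), one_div_mul_cancel hε.ne', Real.rpow_one]
  calc C * ‖z - z'‖ ^ ε ≤ (C + 1) * (η / (C + 1)) := by gcongr; linarith
    _ = η := by field_simp

lemma IsHolder.cont {ε : ℝ} (hε : 0 < ε) {f : ℂ → ℂ} (hf : IsHolder ε f) : Continuous f := by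
  rw [Metric.continuous_iff]
  intro b η hη
  obtain ⟨δ, hδ, h⟩ := hf.uc hε (η / 2) (by positivity)
  refine ⟨δ, hδ, fun a ha => ?_⟩
  rw [dist_eq_norm] at *
  exact (h a b ha.le).trans_lt (by linarith)

lemma holder_decay {ε : ℝ} (hε : 0 < ε) {f : ℂ → ℂ} (hf : IsHolder ε f) {r : ℝ} (hr : 0 < r)
    (hL : MemLp f (ENNReal.ofReal r)) : Filter.Tendsto f (Filter.cocompact ℂ) (nhds 0) := by
  have hfc := hf.cont hε
  have hm : Measurable (fun z => ‖f z‖ₑ ^ r) := by have := hfc.measurable; fun_prop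
  have hfin : ∫⁻ z, ‖f z‖ₑ ^ r ≠ ⊤ := by
    have h1 := lintegral_rpow_enorm_lt_top_of_eLpNorm_lt_top (by simpa using hr) ENNReal.ofReal_ne_top hL.eLpNorm_lt_top
    rw [ENNReal.toReal_ofReal hr.le] at h1
    exact h1.ne
  set ν : Measure ℂ := volume.withDensity (fun z => ‖f z‖ₑ ^ r) with hν
  haveI : IsFiniteMeasure ν := isFiniteMeasure_withDensity hfin
  rw [Metric.tendsto_nhds]
  intro η hη
  obtain ⟨δ, hδ, h⟩ := hf.uc hε (η / 2) (by positivity)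
  set c : ENNReal := ENNReal.ofReal (η / 2) ^ r * volume (Metric.ball (0:ℂ) δ) with hc
  have hc0 : c ≠ 0 := by
    apply mul_ne_zero
    · exact (ENNReal.rpow_pos (by simpa using hη) ENNReal.ofReal_ne_top).ne'
    · exact (Metric.measure_ball_pos _ _ hδ).ne'
  obtain ⟨K, -, hK, hKc⟩ := (MeasurableSet.univ : MeasurableSet (Set.univ : Set ℂ)).exists_isCompact_sdiff_lt (μ := ν)
    (measure_ne_top _ _) hc0
  have hK2 : IsCompact (Metric.cthickening δ K) := hK.cthickening
  filter_upwards [hK2.compl_mem_cocompact] with z hz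
  rw [dist_zero_right]
  by_contra hcon
  push Not at hcon
  have h1 : Metric.ball z δ ⊆ Set.univ \ K := by
    intro w hw
    refine ⟨trivial, fun hwK => hz ?_⟩
    exact Metric.mem_cthickening_of_dist_le z w δ K hwK (by rw [dist_comm]; exact (Metric.mem_ball.1 hw).le)
  have h2 : c ≤ ν (Metric.ball z δ) := by
    rw [hν, withDensity_apply _ measurableSet_ball]
    calc c = ∫⁻ w in Metric.ball z δ, ENNReal.ofReal (η / 2) ^ r := by
          rw [setLIntegral_const, hc]
          congr 1
          exact (Measure.addHaar_ball_center volume z δ).symm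
      _ ≤ _ := by
        apply setLIntegral_mono' measurableSet_ball
        intro w hw
        gcongr
        rw [← ofReal_norm]
        apply ENNReal.ofReal_le_ofReal
        have := h z w (by rw [← dist_eq_norm, dist_comm]; exact (Metric.mem_ball.1 hw).le)
        have h3 := norm_sub_norm_le (f z) (f w)
        linarith
  exact absurd (h2.trans (measure_mono h1)) (not_le.2 hKc)

lemma wDbar_conj (g : ℂ → ℂ) (z : ℂ) (hg : DifferentiableAt ℝ g z) :
    wDbar (fun w => (starRingEnd ℂ) (g w)) z = (starRingEnd ℂ) (wD g z) := by
  have h1 : HasFDerivAt (fun w => (starRingEnd ℂ) (g w)) ((conjCLE : ℂ →L[ℝ] ℂ).comp (fderiv ℝ g z)) z :=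
    (conjCLE : ℂ →L[ℝ] ℂ).hasFDerivAt.comp z hg.hasFDerivAt
  unfold wDbar wD
  rw [h1.fderiv]
  have h2 : (starRingEnd ℂ) 2 = 2 := map_ofNat _ 2
  simp [h2]
  try ring

lemma wD_conj (g : ℂ → ℂ) (z : ℂ) (hg : DifferentiableAt ℝ g z) :
    wD (fun w => (starRingEnd ℂ) (g w)) z = (starRingEnd ℂ) (wDbar g z) := by
  have h1 : HasFDerivAt (fun w => (starRingEnd ℂ) (g w)) ((conjCLE : ℂ →L[ℝ] ℂ).comp (fderiv ℝ g z)) z :=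
    (conjCLE : ℂ →L[ℝ] ℂ).hasFDerivAt.comp z hg.hasFDerivAt
  unfold wDbar wD
  rw [h1.fderiv]
  have h2 : (starRingEnd ℂ) 2 = 2 := map_ofNat _ 2
  simp [h2]
  try ring

lemma hasFDerivAt_ek (k z : ℂ) : HasFDerivAt (fun w => ek k w)
    (ek k z • (I • (ContinuousLinearMap.mul ℝ ℂ k + (conjCLE : ℂ →L[ℝ] ℂ).comp (ContinuousLinearMap.mul ℝ ℂ k)))) z := by
  have h1 : HasFDerivAt (fun w : ℂ => I * (k * w + (starRingEnd ℂ) (k * w)))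
      (I • (ContinuousLinearMap.mul ℝ ℂ k + (conjCLE : ℂ →L[ℝ] ℂ).comp (ContinuousLinearMap.mul ℝ ℂ k))) z :=
    ((I • (ContinuousLinearMap.mul ℝ ℂ k + (conjCLE : ℂ →L[ℝ] ℂ).comp (ContinuousLinearMap.mul ℝ ℂ k)) : ℂ →L[ℝ] ℂ)).hasFDerivAt
  exact h1.cexp

lemma wD_ek_mul (k : ℂ) (g : ℂ → ℂ) (z : ℂ) (hg : DifferentiableAt ℝ g z) :
    wD (fun w => ek k w * g w) z = ek k z * (wD g z + I * k * g z) := by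
  have h := (hasFDerivAt_ek k z).mul hg.hasFDerivAt
  unfold wD
  have e : (fun w => ek k w * g w) = (fun w => ek k w) * g := rfl
  rw [e, h.fderiv]
  simp
  linear_combination (-(1 / 2) * ek k z * g z * I * (k - (starRingEnd ℂ) k)) * I_sq

lemma rep1 (q m n : ℂ → ℂ) (hq : Continuous q) (hqs : HasCompactSupport q)
    (hm : Differentiable ℝ m) (hn : Continuous n) (h1 : ∀ z, wDbar m z = q z * n z)
    (hd : Filter.Tendsto (fun z => m z - 1) (Filter.cocompact ℂ) (nhds 0)) (z : ℂ) :
    m z - 1 = (Real.pi : ℂ)⁻¹ * ∫ v, q v / (z - v) * n v := by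
  have := cauchy_pompeiu (fun z => m z - 1) (fun v => q v * n v) (hm.sub_const 1) (hq.mul hn) hqs.mul_right
    (fun z => by
      rw [← h1]; unfold wDbar
      rw [fderiv_sub_const]) hd z
  rw [this]
  congr 2; ext v; ring

lemma rep2 (k : ℂ) (q m n : ℂ → ℂ) (hq : Continuous q) (hqs : HasCompactSupport q)
    (hm : Continuous m) (hn : Differentiable ℝ n)
    (h1 : ∀ z, wD n z + I * k * n z = (starRingEnd ℂ) (q z) * m z)
    (hd : Filter.Tendsto n (Filter.cocompact ℂ) (nhds 0)) (v : ℂ) :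
    n v = (ek k v)⁻¹ * ((Real.pi : ℂ)⁻¹ * ∫ w, ek k w * (starRingEnd ℂ) (q w / (v - w)) * m w) := by
  have hdiff : Differentiable ℝ (fun w => ek k w * n w) := fun w =>
    (hasFDerivAt_ek k w).differentiableAt.mul (hn w)
  have := cauchy_pompeiu (fun w => (starRingEnd ℂ) (ek k w * n w))
    (fun w => q w * (starRingEnd ℂ) (ek k w * m w))
    ((conjCLE : ℂ →L[ℝ] ℂ).differentiable.comp hdiff)
    (hq.mul (continuous_conj.comp ((continuous_ek_right k).mul hm))) hqs.mul_right
    (fun z => by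
      rw [wDbar_conj _ _ (hdiff z), wD_ek_mul _ _ _ (hn z), h1]
      simp; ring)
    (by
      rw [tendsto_zero_iff_norm_tendsto_zero] at hd ⊢
      simpa [norm_ek] using hd) v
  have h2 := congrArg (starRingEnd ℂ) this
  rw [conj_conj, map_mul, ← integral_conj] at h2
  have h3 : (starRingEnd ℂ) ((Real.pi : ℂ)⁻¹) = (Real.pi : ℂ)⁻¹ := by
    rw [map_inv₀, conj_ofReal]
  rw [h3] at h2
  rw [eq_inv_mul_iff_mul_eq₀ (ek_ne_zero k v), h2]
  congr 2; ext w; simp; ring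

lemma ek_add (k v τ : ℂ) : ek k (v + τ) = ek k v * ek k τ := by
  unfold ek
  rw [← exp_add]; congr 1; simp; ring

lemma ek_half (k : ℂ) (hk : k ≠ 0) : ek k (Real.pi / (2 * k)) = -1 := by
  have : k * (Real.pi / (2 * k)) = ((Real.pi / 2 : ℝ) : ℂ) := by push_cast; field_simp
  unfold ek
  rw [this, conj_ofReal, ← exp_pi_mul_I]
  congr 1; push_cast; ring

lemma osc_gen {ι : Type*} (h : ι → ℂ → ℂ) (T : ℝ)
    (hc : ∀ i, Continuous (h i)) (hsupp : ∀ i v, T < ‖v‖ → h i v = 0)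
    (huc : ∀ η > 0, ∃ δ > 0, ∀ i v v', ‖v - v'‖ ≤ δ → ‖h i v - h i v'‖ ≤ η) (η : ℝ) (hη : 0 < η) :
    ∃ R : ℝ, ∀ k, R ≤ ‖k‖ → ∀ i, ‖∫ v, h i v * (ek k v)⁻¹‖ ≤ η := by
  set V : ℝ := volume.real (Metric.closedBall (0:ℂ) (T + 1)) with hV
  have hV0 : 0 ≤ V := measureReal_nonneg
  obtain ⟨δ, hδ, hu⟩ := huc (η / (V + 1)) (by positivity)
  set δ' := min δ 1
  have hδ' : 0 < δ' := by positivity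
  refine ⟨Real.pi / (2 * δ') + 1, fun k hk i => ?_⟩
  have hpos : 0 < Real.pi / (2 * δ') := by positivity
  have hk0 : 0 < ‖k‖ := by linarith
  have hkne : k ≠ 0 := norm_pos_iff.1 hk0
  set τ : ℂ := Real.pi / (2 * k) with hτ
  have hτn : ‖τ‖ ≤ δ' := by
    rw [hτ, norm_div, norm_mul, norm_real, Real.norm_of_nonneg Real.pi_pos.le]
    simp only [Complex.norm_ofNat]
    have : Real.pi / (2 * δ') ≤ ‖k‖ := by linarith
    rw [div_le_iff₀ (by positivity)] at this ⊢
    linarith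
  have hcs : HasCompactSupport (h i) := HasCompactSupport.of_support_subset_isCompact (isCompact_closedBall (0:ℂ) T) (by
    intro v hv
    by_contra h2
    exact hv (hsupp i v (by simpa using h2)))
  have hec : Continuous (fun v => (ek k v)⁻¹) := (continuous_ek_right k).inv₀ (ek_ne_zero k)
  have hinteg : Integrable (fun v => h i v * (ek k v)⁻¹) := ((hc i).mul hec).integrable_of_hasCompactSupport hcs.mul_right
  have e1 : ∫ v, h i v * (ek k v)⁻¹ = ∫ v, -(h i (v + τ) * (ek k v)⁻¹) := by
    rw [← integral_add_right_eq_self _ τ]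
    congr 1; ext v
    rw [ek_add, hτ, ek_half k hkne]; simp
  have hinteg2 : Integrable (fun v => -(h i (v + τ) * (ek k v)⁻¹)) := by
    have := hinteg.comp_add_right τ
    refine this.congr (Filter.Eventually.of_forall fun v => ?_)
    simp only
    rw [ek_add, hτ, ek_half k hkne]; simp
  have e2 : 2 * ∫ v, h i v * (ek k v)⁻¹ = ∫ v, (h i v - h i (v + τ)) * (ek k v)⁻¹ := by
    rw [two_mul]
    nth_rewrite 2 [e1]
    rw [← integral_add hinteg hinteg2]
    congr 1; ext v; ring
  have e3 : ∫ v, (h i v - h i (v + τ)) * (ek k v)⁻¹ = ∫ v in Metric.closedBall (0:ℂ) (T+1), (h i v - h i (v + τ)) * (ek k v)⁻¹ := by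
    symm
    apply setIntegral_eq_integral_of_forall_compl_eq_zero
    intro v hv
    have hv' : T + 1 < ‖v‖ := by simpa using hv
    have h1 : ‖τ‖ ≤ 1 := hτn.trans (min_le_right _ _)
    have h2 : ‖v‖ - ‖τ‖ ≤ ‖v + τ‖ := by
      have := norm_sub_le (v + τ) τ
      simp at this; linarith
    rw [hsupp i v (by linarith), hsupp i (v + τ) (by linarith)]; simp
  have e4 : ‖∫ v in Metric.closedBall (0:ℂ) (T+1), (h i v - h i (v + τ)) * (ek k v)⁻¹‖ ≤ η / (V + 1) * V := by
    apply norm_setIntegral_le_of_norm_le_const measure_closedBall_lt_top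
    intro v _
    rw [norm_mul, norm_inv, norm_ek, inv_one, mul_one]
    apply hu
    simpa using hτn.trans (min_le_left _ _)
  rw [← e3, ← e2, norm_mul] at e4
  simp only [Complex.norm_ofNat] at e4
  have e5 : η / (V + 1) * V ≤ η := by
    rw [div_mul_eq_mul_div, div_le_iff₀ (by positivity)]; nlinarith
  linarith [norm_nonneg (∫ v, h i v * (ek k v)⁻¹)]

/-- Truncated Cauchy kernel. -/
noncomputable def phi (δ : ℝ) (u : ℂ) : ℂ := (starRingEnd ℂ) u / ((max ‖u‖ δ) ^ 2 : ℝ)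

lemma phi_ne (δ : ℝ) (hδ : 0 < δ) (u : ℂ) : ((max ‖u‖ δ) ^ 2 : ℝ) ≠ 0 := by
  have : 0 < max ‖u‖ δ := lt_max_of_lt_right hδ
  positivity

lemma continuous_phi (δ : ℝ) (hδ : 0 < δ) : Continuous (phi δ) := by
  unfold phi
  refine continuous_conj.div (by fun_prop) (fun u => ?_)
  exact_mod_cast phi_ne δ hδ u

lemma norm_phi (δ : ℝ) (u : ℂ) : ‖phi δ u‖ = ‖u‖ / (max ‖u‖ δ) ^ 2 := by
  unfold phi
  rw [norm_div, norm_conj, norm_real, Real.norm_of_nonneg (by positivity)]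

lemma norm_phi_le_inv (δ : ℝ) (u : ℂ) : ‖phi δ u‖ ≤ ‖u‖⁻¹ := by
  rw [norm_phi]
  rcases eq_or_ne u 0 with rfl | hu
  · simp
  have hu' : 0 < ‖u‖ := norm_pos_iff.2 hu
  have h1 : ‖u‖ ≤ max ‖u‖ δ := le_max_left _ _
  rw [div_le_iff₀ (by positivity), inv_mul_eq_div, le_div_iff₀ hu']
  nlinarith

lemma enorm_phi_le_inv (δ : ℝ) (u : ℂ) : ‖phi δ u‖ₑ ≤ ‖u‖ₑ⁻¹ := by
  rcases eq_or_ne u 0 with rfl | hu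
  · simp
  rw [← ofReal_norm, ← ofReal_norm, ← ENNReal.ofReal_inv_of_pos (norm_pos_iff.2 hu)]
  exact ENNReal.ofReal_le_ofReal (norm_phi_le_inv δ u)

lemma norm_phi_le (δ : ℝ) (hδ : 0 < δ) (u : ℂ) : ‖phi δ u‖ ≤ δ⁻¹ := by
  rw [norm_phi]
  have h1 : ‖u‖ ≤ max ‖u‖ δ := le_max_left _ _
  have h2 : δ ≤ max ‖u‖ δ := le_max_right _ _
  have h3 := norm_nonneg u
  rw [div_le_iff₀ (by nlinarith), inv_mul_eq_div, le_div_iff₀ hδ]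
  nlinarith

lemma phi_sub (δ : ℝ) (hδ : 0 < δ) (u : ℂ) :
    ‖u⁻¹ - phi δ u‖ₑ ≤ (Metric.ball (0:ℂ) δ).indicator (fun u => ‖u‖ₑ⁻¹) u := by
  rcases eq_or_ne u 0 with rfl | hu
  · simp [phi]
  have hu' : 0 < ‖u‖ := norm_pos_iff.2 hu
  by_cases h : ‖u‖ < δ
  · rw [Set.indicator_of_mem (by simpa using h)]
    rw [← ofReal_norm, ← ofReal_norm, ← ENNReal.ofReal_inv_of_pos hu']
    apply ENNReal.ofReal_le_ofReal
    have : u⁻¹ - phi δ u = u⁻¹ * ((1 - ‖u‖ ^ 2 / δ ^ 2 : ℝ) : ℂ) := by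
      unfold phi
      rw [max_eq_right h.le]
      have hd : (δ : ℂ) ≠ 0 := by exact_mod_cast hδ.ne'
      have h1 := mul_conj' u
      push_cast
      rw [← h1]
      field_simp
    rw [this, norm_mul, norm_inv, norm_real, Real.norm_of_nonneg]
    · have : 0 ≤ ‖u‖ ^ 2 / δ ^ 2 := by positivity
      have h2 : 0 < ‖u‖⁻¹ := by positivity
      nlinarith
    · rw [sub_nonneg, div_le_one (by positivity)]; gcongr
  · rw [Set.indicator_of_notMem (by simpa using h)]
    have : u⁻¹ - phi δ u = 0 := by
      unfold phi
      rw [max_eq_left (not_lt.1 h)]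
      push_cast
      rw [← mul_conj' u]
      have : (starRingEnd ℂ) u ≠ 0 := by simpa using hu
      field_simp; simp
    simp [this]

lemma phi_uc (δ : ℝ) (hδ : 0 < δ) : UniformContinuous (phi δ) := by
  refine (continuous_phi δ hδ).uniformContinuous_of_tendsto_cocompact (x := 0) ?_
  rw [tendsto_zero_iff_norm_tendsto_zero]
  exact squeeze_zero (fun u => norm_nonneg _) (fun u => norm_phi_le_inv δ u) (tendsto_inv_atTop_zero.comp (tendsto_norm_cocompact_atTop))

lemma uc_norm {f : ℂ → ℂ} (hf : UniformContinuous f) :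
    ∀ η > 0, ∃ δ > 0, ∀ z z', ‖z - z'‖ ≤ δ → ‖f z - f z'‖ ≤ η := by
  intro η hη
  obtain ⟨δ, hδ, h⟩ := Metric.uniformContinuous_iff.1 hf η hη
  refine ⟨δ / 2, by positivity, fun z z' hz => ?_⟩
  have := h (a := z) (b := z') (by rw [dist_eq_norm]; linarith)
  rw [dist_eq_norm] at this
  exact this.le

lemma osc_phi (q : ℂ → ℂ) (hq : Continuous q) (hqs : HasCompactSupport q) (δ : ℝ) (hδ : 0 < δ) (η : ℝ) (hη : 0 < η) :
    ∃ R : ℝ, ∀ k, R ≤ ‖k‖ → ∀ z w, ‖∫ v, (q v * phi δ (z - v) * (starRingEnd ℂ) (phi δ (v - w))) * (ek k v)⁻¹‖ ≤ η := by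
  obtain ⟨Q, hQ⟩ := hqs.exists_bound_of_continuous hq
  have hQ0 : 0 ≤ Q := (norm_nonneg _).trans (hQ 0)
  obtain ⟨T, hT⟩ := hqs.isCompact.isBounded.subset_closedBall 0
  have hφc := continuous_phi δ hδ
  obtain ⟨R, hR⟩ := osc_gen (ι := ℂ × ℂ) (fun i v => q v * phi δ (i.1 - v) * (starRingEnd ℂ) (phi δ (v - i.2))) T
    (fun i => (hq.mul (hφc.comp (by fun_prop))).mul (continuous_conj.comp (hφc.comp (by fun_prop))))
    (fun i v hv => by
      have : v ∉ tsupport q := fun h => by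
        have := hT h
        simp at this; linarith
      simp [image_eq_zero_of_notMem_tsupport this]) (by
      intro η hη
      set B := δ⁻¹ with hB
      have hB0 : 0 < B := by positivity
      obtain ⟨a, ha, hqa⟩ := uc_norm (hqs.uniformContinuous_of_continuous hq) (η / (3 * (B * B))) (by positivity)
      obtain ⟨b, hb, hφb⟩ := uc_norm (phi_uc δ hδ) (η / (3 * (Q + 1) * B)) (by positivity)
      refine ⟨min a b, by positivity, ?_⟩
      rintro ⟨z, w⟩ v v' hv
      simp only
      have h1 := hqa v v' (hv.trans (min_le_left _ _))
      have h2 := hφb (z - v) (z - v') (by rw [sub_sub_sub_cancel_left, norm_sub_rev]; exact hv.trans (min_le_right _ _))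
      have h3 := hφb (v - w) (v' - w) (by rw [sub_sub_sub_cancel_right]; exact hv.trans (min_le_right _ _))
      have b1 := norm_phi_le δ hδ
      calc _ = ‖(q v - q v') * phi δ (z - v) * (starRingEnd ℂ) (phi δ (v - w)) +
            q v' * (phi δ (z - v) - phi δ (z - v')) * (starRingEnd ℂ) (phi δ (v - w)) +
            q v' * phi δ (z - v') * (starRingEnd ℂ) (phi δ (v - w) - phi δ (v' - w))‖ := by
              congr 1; rw [map_sub]; ring
        _ ≤ ‖q v - q v'‖ * ‖phi δ (z - v)‖ * ‖phi δ (v - w)‖ +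
            ‖q v'‖ * ‖phi δ (z - v) - phi δ (z - v')‖ * ‖phi δ (v - w)‖ +
            ‖q v'‖ * ‖phi δ (z - v')‖ * ‖phi δ (v - w) - phi δ (v' - w)‖ := by
              refine (norm_add₃_le).trans (le_of_eq ?_)
              simp only [norm_mul, norm_conj]
        _ ≤ η / (3 * (B * B)) * B * B + (Q + 1) * (η / (3 * (Q + 1) * B)) * B + (Q + 1) * B * (η / (3 * (Q + 1) * B)) := by
              have := hQ v'
              gcongr
              · exact b1 _
              · exact b1 _
              · linarith
              · exact b1 _
              · linarith
              · exact b1 _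
        _ = η := by field_simp; ring) η hη
  exact ⟨R, fun k hk z w => hR k hk (z, w)⟩

/-- Truncated singular kernel near zero. -/
noncomputable def Irho (δ : ℝ) (u : ℂ) : ENNReal := (Metric.ball (0:ℂ) δ).indicator (fun u => ‖u‖ₑ⁻¹) u

lemma measurable_Irho (δ : ℝ) : Measurable (Irho δ) := by
  unfold Irho
  exact Measurable.indicator (by fun_prop) measurableSet_ball

lemma Irho_eq (δ : ℝ) (z w : ℂ) :
    (Metric.ball z δ).indicator (fun w => ‖z - w‖ₑ⁻¹) w = Irho δ (z - w) := by
  unfold Irho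
  by_cases h : ‖z - w‖ < δ
  · rw [Set.indicator_of_mem (by rw [Metric.mem_ball, dist_comm, dist_eq_norm]; exact h),
      Set.indicator_of_mem (by simpa using h)]
  · rw [Set.indicator_of_notMem (by rw [Metric.mem_ball, dist_comm, dist_eq_norm]; exact h),
      Set.indicator_of_notMem (by simpa using h)]

lemma enorm_inv_pi_le : ‖(Real.pi : ℂ)⁻¹‖ₑ ≤ 1 := by
  rw [← ofReal_norm, ENNReal.ofReal_le_one, norm_inv, norm_real, Real.norm_of_nonneg Real.pi_pos.le]
  exact inv_le_one_of_one_le₀ (by linarith [Real.pi_gt_three])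

lemma integrable_kd (q g : ℂ → ℂ) (hq : Continuous q) (hqs : HasCompactSupport q) (hg : Continuous g) (z : ℂ) :
    Integrable (fun v => q v / (z - v) * g v) := by
  have := integrable_cdiv (fun v => q v * g v) (hq.mul hg) hqs.mul_right z
  have h2 := (conjLIE.integrable_comp_iff).2 this
  refine h2.congr (Filter.Eventually.of_forall fun v => ?_)
  simp; ring

lemma integrable_ekd (k : ℂ) (q g : ℂ → ℂ) (hq : Continuous q) (hqs : HasCompactSupport q) (hg : Continuous g) (v : ℂ) :
    Integrable (fun w => ek k w * (starRingEnd ℂ) (q w / (v - w)) * g w) := by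
  have := integrable_cdiv (fun v => q v * (starRingEnd ℂ) (ek k v * g v))
    (hq.mul (continuous_conj.comp ((continuous_ek_right k).mul hg))) hqs.mul_right v
  refine this.congr (Filter.Eventually.of_forall fun w => ?_)
  simp; ring

lemma enorm_ekd_le (k : ℂ) (q g : ℂ → ℂ) (v : ℂ) :
    ‖∫ w, ek k w * (starRingEnd ℂ) (q w / (v - w)) * g w‖ₑ ≤ ∫⁻ w, ‖q w‖ₑ * ‖v - w‖ₑ⁻¹ * ‖g w‖ₑ := by
  refine (enorm_integral_le_lintegral_enorm _).trans (lintegral_mono fun w => ?_)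
  rw [enorm_mul, enorm_mul, enorm_ek, one_mul]
  gcongr
  exact enorm_cdiv q v w

lemma enorm_kd_le (q g : ℂ → ℂ) (z : ℂ) :
    ‖∫ v, q v / (z - v) * g v‖ₑ ≤ ∫⁻ w, ‖q w‖ₑ * ‖z - w‖ₑ⁻¹ * ‖g w‖ₑ := by
  refine (enorm_integral_le_lintegral_enorm _).trans (lintegral_mono fun w => ?_)
  rw [enorm_mul]
  gcongr
  rw [← enorm_conj']
  exact enorm_cdiv q z w

lemma rep2_split (k : ℂ) (q m : ℂ → ℂ) (hq : Continuous q) (hqs : HasCompactSupport q) (hm : Continuous m) (v : ℂ) :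
    ∫ w, ek k w * (starRingEnd ℂ) (q w / (v - w)) * m w =
      (∫ w, ek k w * (starRingEnd ℂ) (q w / (v - w))) +
      ∫ w, ek k w * (starRingEnd ℂ) (q w / (v - w)) * (m w - 1) := by
  have h1 := integrable_ekd k q (fun _ => 1) hq hqs continuous_const v
  have h2 := integrable_ekd k q (fun w => m w - 1) hq hqs (hm.sub continuous_const) v
  simp only [mul_one] at h1
  rw [← integral_add h1 h2]
  congr 1; ext w; ring

lemma pt_n (k : ℂ) (q m n : ℂ → ℂ) (hq : Continuous q) (hqs : HasCompactSupport q) (hm : Continuous m)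
    (r2 : ∀ v, n v = (ek k v)⁻¹ * ((Real.pi : ℂ)⁻¹ * ∫ w, ek k w * (starRingEnd ℂ) (q w / (v - w)) * m w)) (v : ℂ) :
    ‖n v‖ₑ ≤ ‖∫ w, ek k w * (starRingEnd ℂ) (q w / (v - w))‖ₑ + ∫⁻ w, ‖q w‖ₑ * ‖v - w‖ₑ⁻¹ * ‖m w - 1‖ₑ := by
  rw [r2 v, rep2_split k q m hq hqs hm v, enorm_mul, enorm_mul, enorm_inv (ek_ne_zero k v), enorm_ek, inv_one, one_mul]
  calc _ ≤ 1 * (‖∫ w, ek k w * (starRingEnd ℂ) (q w / (v - w))‖ₑ + ‖∫ w, ek k w * (starRingEnd ℂ) (q w / (v - w)) * (m w - 1)‖ₑ) := by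
        gcongr
        · exact enorm_inv_pi_le
        · exact enorm_add_le _ _
    _ ≤ _ := by
        rw [one_mul]; gcongr
        exact enorm_ekd_le k q _ v

lemma pt_high (k : ℂ) (q m n : ℂ → ℂ) (hq : Continuous q) (hqs : HasCompactSupport q) (hm : Continuous m) (hn : Continuous n)
    (r1 : ∀ z, m z - 1 = (Real.pi : ℂ)⁻¹ * ∫ v, q v / (z - v) * n v)
    (r2 : ∀ v, n v = (ek k v)⁻¹ * ((Real.pi : ℂ)⁻¹ * ∫ w, ek k w * (starRingEnd ℂ) (q w / (v - w)) * m w))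
    (δ : ℝ) (hδ : 0 < δ) (η : ℝ)
    (hosc : ∀ z w, ‖∫ v, (q v * phi δ (z - v) * (starRingEnd ℂ) (phi δ (v - w))) * (ek k v)⁻¹‖ ≤ η) (z : ℂ) :
    ‖m z - 1‖ₑ ≤ (∫⁻ v, ‖q v‖ₑ * ‖z - v‖ₑ⁻¹ * ‖∫ w, ek k w * (starRingEnd ℂ) (q w / (v - w))‖ₑ)
      + ((∫⁻ v, ‖q v‖ₑ * Irho δ (z - v) * (∫⁻ w, ‖q w‖ₑ * ‖v - w‖ₑ⁻¹ * ‖m w - 1‖ₑ))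
      + ((∫⁻ v, ‖q v‖ₑ * ‖z - v‖ₑ⁻¹ * (∫⁻ w, ‖q w‖ₑ * Irho δ (v - w) * ‖m w - 1‖ₑ))
      + ∫⁻ w, (ENNReal.ofReal η * ‖q w‖ₑ) * ‖m w - 1‖ₑ)) := by
  have hφc := continuous_phi δ hδ
  set p : ℂ := (Real.pi : ℂ)⁻¹ with hp
  have hp1 : ‖p‖ₑ ≤ 1 := enorm_inv_pi_le
  set F : ℂ → ℂ := fun w => m w - 1 with hF
  have hFc : Continuous F := hm.sub continuous_const
  set B : ℂ → ℂ := fun v => ∫ w, ek k w * (starRingEnd ℂ) (q w / (v - w)) with hB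
  set N1 : ℂ → ℂ := fun v => ∫ w, ek k w * (starRingEnd ℂ) (q w / (v - w)) * F w with hN1
  set Nφ : ℂ → ℂ := fun v => ∫ w, ek k w * (starRingEnd ℂ) (q w * phi δ (v - w)) * F w with hNφ
  have hn' : ∀ v, n v = (ek k v)⁻¹ * (p * (B v + N1 v)) := by
    intro v; rw [r2 v, rep2_split k q m hq hqs hm v]
  have hec : Continuous (fun v => (ek k v)⁻¹) := (continuous_ek_right k).inv₀ (ek_ne_zero k)
  -- difference of the two inner terms
  have hdiff : ∀ v, ‖N1 v - Nφ v‖ₑ ≤ ∫⁻ w, ‖q w‖ₑ * Irho δ (v - w) * ‖F w‖ₑ := by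
    intro v
    have i1 := integrable_ekd k q F hq hqs hFc v
    have i2 : Integrable (fun w => ek k w * (starRingEnd ℂ) (q w * phi δ (v - w)) * F w) := by
      refine Continuous.integrable_of_hasCompactSupport ?_ ?_
      · exact ((continuous_ek_right k).mul (continuous_conj.comp (hq.mul (hφc.comp (by fun_prop))))).mul hFc
      · refine hqs.mono ?_
        intro w hw h0
        apply hw
        simp [h0]
    simp only [hN1, hNφ]
    rw [← integral_sub i1 i2]
    refine (enorm_integral_le_lintegral_enorm _).trans (lintegral_mono fun w => ?_)
    have : ek k w * (starRingEnd ℂ) (q w / (v - w)) * F w - ek k w * (starRingEnd ℂ) (q w * phi δ (v - w)) * F w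
        = ek k w * (starRingEnd ℂ) (q w * ((v - w)⁻¹ - phi δ (v - w))) * F w := by
      rw [mul_sub (q w), map_sub, div_eq_mul_inv]; ring
    simp only [this]
    rw [enorm_mul, enorm_mul, enorm_ek, one_mul, enorm_conj', enorm_mul]
    gcongr
    exact phi_sub δ hδ (v - w)
  -- the oscillatory term
  set G : ℂ → ℂ → ℂ := fun v w => (q v * phi δ (z - v) * (ek k v)⁻¹) * (ek k w * (starRingEnd ℂ) (q w * phi δ (v - w)) * F w) with hG
  have hGc : Continuous (Function.uncurry G) := by
    have a1 : Continuous (fun x : ℂ × ℂ => q x.1 * phi δ (z - x.1) * (ek k x.1)⁻¹) :=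
      ((hq.comp continuous_fst).mul (hφc.comp (by fun_prop))).mul (hec.comp continuous_fst)
    have a2 : Continuous (fun x : ℂ × ℂ => ek k x.2 * (starRingEnd ℂ) (q x.2 * phi δ (x.1 - x.2)) * F x.2) :=
      (((continuous_ek_right k).comp continuous_snd).mul (continuous_conj.comp ((hq.comp continuous_snd).mul (hφc.comp (by fun_prop))))).mul (hFc.comp continuous_snd)
    exact a1.mul a2
  have hGs : HasCompactSupport (Function.uncurry G) := by
    refine HasCompactSupport.of_support_subset_isCompact (hqs.isCompact.prod hqs.isCompact) ?_
    rintro ⟨v, w⟩ hvw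
    constructor
    · by_contra h
      apply hvw
      simp [G, image_eq_zero_of_notMem_tsupport h]
    · by_contra h
      apply hvw
      simp [G, image_eq_zero_of_notMem_tsupport h]
  have hGi : Integrable (Function.uncurry G) ((volume : Measure ℂ).prod volume) :=
    hGc.integrable_of_hasCompactSupport hGs
  have hGin : ∀ v, ∫ w, G v w = (q v * phi δ (z - v) * (ek k v)⁻¹) * Nφ v := fun v => integral_const_mul _ _
  have hGint : Integrable (fun v => (q v * phi δ (z - v) * (ek k v)⁻¹) * Nφ v) := by
    have := hGi.integral_prod_left
    refine this.congr (Filter.Eventually.of_forall fun v => ?_)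
    exact hGin v
  have hosc' : ‖∫ v, (q v * phi δ (z - v) * (ek k v)⁻¹) * Nφ v‖ₑ ≤ ∫⁻ w, (ENNReal.ofReal η * ‖q w‖ₑ) * ‖F w‖ₑ := by
    have e1 : ∫ v, (q v * phi δ (z - v) * (ek k v)⁻¹) * Nφ v = ∫ w, ∫ v, G v w := by
      rw [← integral_integral_swap_of_hasCompactSupport hGc hGs]
      congr 1; ext v; exact (hGin v).symm
    rw [e1]
    refine (enorm_integral_le_lintegral_enorm _).trans (lintegral_mono fun w => ?_)
    have e2 : ∫ v, G v w = (ek k w * (starRingEnd ℂ) (q w) * F w) *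
        ∫ v, (q v * phi δ (z - v) * (starRingEnd ℂ) (phi δ (v - w))) * (ek k v)⁻¹ := by
      rw [← integral_const_mul]
      congr 1; ext v
      simp only [hG, map_mul]; ring
    simp only [e2]
    rw [enorm_mul, enorm_mul, enorm_mul, enorm_ek, one_mul, enorm_conj']
    calc _ ≤ ‖q w‖ₑ * ‖F w‖ₑ * ENNReal.ofReal η := by
          gcongr
          rw [← ofReal_norm]
          exact ENNReal.ofReal_le_ofReal (hosc z w)
      _ = _ := by ring
  -- decomposition
  have hi1 := integrable_kd q n hq hqs hn z
  have hdec : F z = p * ((∫ v, (q v / (z - v) * n v - p * ((q v * phi δ (z - v) * (ek k v)⁻¹) * Nφ v)))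
      + p * ∫ v, (q v * phi δ (z - v) * (ek k v)⁻¹) * Nφ v) := by
    rw [integral_sub hi1 (hGint.const_mul p), integral_const_mul, sub_add_cancel]
    exact r1 z
  have hpt : ∀ v, ‖q v / (z - v) * n v - p * ((q v * phi δ (z - v) * (ek k v)⁻¹) * Nφ v)‖ₑ ≤
      ‖q v‖ₑ * ‖z - v‖ₑ⁻¹ * ‖B v‖ₑ + (‖q v‖ₑ * Irho δ (z - v) * (∫⁻ w, ‖q w‖ₑ * ‖v - w‖ₑ⁻¹ * ‖F w‖ₑ)
      + ‖q v‖ₑ * ‖z - v‖ₑ⁻¹ * (∫⁻ w, ‖q w‖ₑ * Irho δ (v - w) * ‖F w‖ₑ)) := by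
    intro v
    have e : q v / (z - v) * n v - p * ((q v * phi δ (z - v) * (ek k v)⁻¹) * Nφ v) =
      (p * (ek k v)⁻¹) * ((starRingEnd ℂ) ((starRingEnd ℂ) (q v / (z - v))) * B v + (q v * ((z - v)⁻¹ - phi δ (z - v)) * N1 v + q v * phi δ (z - v) * (N1 v - Nφ v))) := by
      rw [hn' v, conj_conj]; ring
    rw [e, enorm_mul, enorm_mul, enorm_inv (ek_ne_zero k v), enorm_ek, inv_one, mul_one]
    refine (mul_le_of_le_one_left' hp1).trans ?_
    refine (enorm_add_le _ _).trans (add_le_add ?_ ((enorm_add_le _ _).trans (add_le_add ?_ ?_)))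
    · rw [enorm_mul, enorm_conj']
      gcongr
      exact enorm_cdiv q z v
    · rw [enorm_mul, enorm_mul]
      gcongr
      · exact phi_sub δ hδ _
      · exact enorm_ekd_le k q F v
    · rw [enorm_mul, enorm_mul]
      gcongr
      · exact enorm_phi_le_inv δ _
      · exact hdiff v
  have hFm : Measurable (fun w => ‖F w‖ₑ) := hFc.measurable.enorm
  have hqm : Measurable (fun w => ‖q w‖ₑ) := hq.measurable.enorm
  have hBm : Measurable (fun v => ‖B v‖ₑ) := by
    have : StronglyMeasurable (Function.uncurry fun v w => ek k w * (starRingEnd ℂ) (q w / (v - w))) := by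
      apply Measurable.stronglyMeasurable
      have h1 := (continuous_ek_right k).measurable
      have h2 := hq.measurable
      unfold Function.uncurry
      fun_prop
    exact this.integral_prod_right.measurable.enorm
  have hIm := measurable_Irho δ
  have hm1 : Measurable (fun v => ‖q v‖ₑ * ‖z - v‖ₑ⁻¹ * ‖B v‖ₑ) := by fun_prop
  have hm2 : Measurable (fun v => ‖q v‖ₑ * Irho δ (z - v) * (∫⁻ w, ‖q w‖ₑ * ‖v - w‖ₑ⁻¹ * ‖F w‖ₑ)) := by
    have : Measurable (fun v => ∫⁻ w, ‖q w‖ₑ * ‖v - w‖ₑ⁻¹ * ‖F w‖ₑ) := by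
      apply Measurable.lintegral_prod_right
      have h1 := hq.measurable
      have h2 := hFc.measurable
      unfold Function.uncurry
      fun_prop
    fun_prop
  change ‖F z‖ₑ ≤ _
  rw [hdec, enorm_mul]
  refine (mul_le_of_le_one_left' hp1).trans ?_
  refine (enorm_add_le _ _).trans ?_
  rw [← add_assoc, ← add_assoc]
  refine add_le_add ?_ ?_
  · refine (enorm_integral_le_lintegral_enorm _).trans ?_
    refine (lintegral_mono hpt).trans ?_
    rw [lintegral_add_left hm1, lintegral_add_left hm2, add_assoc]
  · rw [enorm_mul]
    exact (mul_le_of_le_one_left' hp1).trans hosc'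

lemma low_bound (q : ℂ → ℂ) (m n : ℂ → ℂ → ℂ) (hq : Continuous q) (hqs : HasCompactSupport q)
    (hmc : Continuous fun p : ℂ × ℂ => m p.1 p.2)
    (r1 : ∀ k z, m z k - 1 = (Real.pi : ℂ)⁻¹ * ∫ v, q v / (z - v) * n v k)
    (r2 : ∀ k v, n v k = (ek k v)⁻¹ * ((Real.pi : ℂ)⁻¹ * ∫ w, ek k w * (starRingEnd ℂ) (q w / (v - w)) * m w k))
    (R : ℝ) : ∃ K : ENNReal, K ≠ ⊤ ∧ ∀ z k, ‖k‖ ≤ R → ‖m z k - 1‖ₑ ≤ K := by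
  obtain ⟨D, hD, hpot⟩ := pot_bound q hq hqs
  obtain ⟨T, hT⟩ := (hqs.isCompact.prod (isCompact_closedBall (0:ℂ) R)).exists_bound_of_continuousOn hmc.continuousOn
  have key : ∀ k, ‖k‖ ≤ R → ∀ w, ‖q w‖ₑ * ‖m w k‖ₑ ≤ ‖q w‖ₑ * ENNReal.ofReal T := by
    intro k hk w
    by_cases hw : w ∈ tsupport q
    · gcongr
      rw [← ofReal_norm]
      exact ENNReal.ofReal_le_ofReal (hT (w, k) ⟨hw, by simpa using hk⟩)
    · simp [image_eq_zero_of_notMem_tsupport hw]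
  have hqm : Measurable (fun w => ‖q w‖ₑ) := hq.measurable.enorm
  have h1 : ∀ k, ‖k‖ ≤ R → ∀ v, ‖n v k‖ₑ ≤ D * ENNReal.ofReal T := by
    intro k hk v
    rw [r2, enorm_mul, enorm_mul, enorm_inv (ek_ne_zero k v), enorm_ek, inv_one, one_mul]
    refine (mul_le_of_le_one_left' enorm_inv_pi_le).trans ?_
    refine (enorm_ekd_le k q _ v).trans ?_
    calc _ ≤ ∫⁻ w, ‖q w‖ₑ * ‖v - w‖ₑ⁻¹ * ENNReal.ofReal T := by
          refine lintegral_mono fun w => ?_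
          simp only
          rw [mul_right_comm _ _ (‖m w k‖ₑ), mul_right_comm _ _ (ENNReal.ofReal T)]
          exact mul_le_mul_left (key k hk w) _
      _ = (∫⁻ w, ‖q w‖ₑ * ‖v - w‖ₑ⁻¹) * ENNReal.ofReal T := lintegral_mul_const _ (by fun_prop)
      _ ≤ _ := by gcongr; exact hpot v
  refine ⟨D * (D * ENNReal.ofReal T), ENNReal.mul_ne_top hD (ENNReal.mul_ne_top hD ENNReal.ofReal_ne_top), fun z k hk => ?_⟩
  rw [r1, enorm_mul]
  refine (mul_le_of_le_one_left' enorm_inv_pi_le).trans ?_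
  refine (enorm_kd_le q _ z).trans ?_
  calc _ ≤ ∫⁻ w, ‖q w‖ₑ * ‖z - w‖ₑ⁻¹ * (D * ENNReal.ofReal T) := by
        refine lintegral_mono fun w => ?_
        simp only
        gcongr
        exact h1 k hk w
    _ = (∫⁻ w, ‖q w‖ₑ * ‖z - w‖ₑ⁻¹) * (D * ENNReal.ofReal T) := lintegral_mul_const _ (by fun_prop)
    _ ≤ _ := by gcongr; exact hpot z

lemma measurable_pot (a : ℂ → ℂ → ENNReal) (g : ℂ → ℂ → ENNReal) (ha : Measurable fun p : ℂ × ℂ => a p.1 p.2)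
    (hg : Measurable fun p : ℂ × ℂ => g p.1 p.2) : Measurable fun p : ℂ × ℂ => ∫⁻ w, a p.1 w * g w p.2 := by
  apply Measurable.lintegral_prod_right (f := fun (p : ℂ × ℂ) w => a p.1 w * g w p.2)
  have h1 : Measurable (fun x : (ℂ × ℂ) × ℂ => a x.1.1 x.2) := ha.comp (by fun_prop : Measurable fun x : (ℂ × ℂ) × ℂ => (x.1.1, x.2))
  have h2 : Measurable (fun x : (ℂ × ℂ) × ℂ => g x.2 x.1.2) := hg.comp (by fun_prop : Measurable fun x : (ℂ × ℂ) × ℂ => (x.2, x.1.2))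
  exact h1.mul h2

lemma NN_indicator {s : ℝ} (hs : 0 < s) (μ : Measure ℂ) (S : Set ℂ) (hS : MeasurableSet S) (K : ENNReal) :
    NN s μ (S.indicator fun _ => K) = K * μ S ^ (1 / s) := by
  unfold NN
  have : ∀ k, (S.indicator (fun _ => K) k) ^ s = S.indicator (fun _ => K ^ s) k := by
    intro k
    by_cases h : k ∈ S
    · simp [h]
    · simp [h, hs]
  simp_rw [this]
  rw [lintegral_indicator_const hS, ENNReal.mul_rpow_of_nonneg _ _ (by positivity), ← ENNReal.rpow_mul,
    mul_one_div_cancel hs.ne', ENNReal.rpow_one]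

lemma NN_le_of_balls {s : ℝ} (hs : 0 < s) (G : ℂ → ENNReal) (C : ENNReal)
    (h : ∀ j : ℕ, NN s (volume.restrict (Metric.ball (0:ℂ) j)) G ≤ C) : NN s volume G ≤ C := by
  have h' : ∀ j : ℕ, ∫⁻ k in Metric.ball (0:ℂ) j, G k ^ s ≤ C ^ s := by
    intro j
    have := ENNReal.rpow_le_rpow (h j) hs.le
    rwa [NN, ← ENNReal.rpow_mul, one_div_mul_cancel hs.ne', ENNReal.rpow_one] at this
  have h2 : ∫⁻ k, G k ^ s ≤ C ^ s := by
    rw [← setLIntegral_univ, ← Metric.iUnion_ball_nat (0:ℂ), setLIntegral_iUnion_of_directed]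
    · exact iSup_le h'
    · apply Monotone.directed_le
      intro i j hij
      exact Metric.ball_subset_ball (by exact_mod_cast hij)
  unfold NN
  calc _ ≤ (C ^ s) ^ (1 / s) := ENNReal.rpow_le_rpow h2 (by positivity)
    _ = C := by rw [← ENNReal.rpow_mul, mul_one_div_cancel hs.ne', ENNReal.rpow_one]

lemma pair_bound {s : ℝ} (hs : 2 < s) (q : ℂ → ℂ) (m n : ℂ → ℂ → ℂ) (hq : Continuous q) (hqs : HasCompactSupport q)
    (hmc : Continuous fun p : ℂ × ℂ => m p.1 p.2) (hnc : Continuous fun p : ℂ × ℂ => n p.1 p.2)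
    (r1 : ∀ k z, m z k - 1 = (Real.pi : ℂ)⁻¹ * ∫ v, q v / (z - v) * n v k)
    (r2 : ∀ k v, n v k = (ek k v)⁻¹ * ((Real.pi : ℂ)⁻¹ * ∫ w, ek k w * (starRingEnd ℂ) (q w / (v - w)) * m w k)) :
    ∃ C : ENNReal, C ≠ ⊤ ∧ ∀ z, NN s volume (fun k => ‖m z k - 1‖ₑ) ≤ C ∧ NN s volume (fun k => ‖n z k‖ₑ) ≤ C := by
  have hs0 : 0 < s := by linarith
  have hs1 : 1 < s := by linarith
  obtain ⟨D, hD, hpot⟩ := pot_bound q hq hqs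
  obtain ⟨CB, hCB, hB⟩ := fourier_cauchy hs q hq hqs
  have hqint : ∫⁻ w, ‖q w‖ₑ ≠ ⊤ := (hq.integrable_of_hasCompactSupport hqs).2.ne
  set Q := ∫⁻ w, ‖q w‖ₑ with hQ
  set η₁ : ENNReal := (8 * (D + 1))⁻¹ with hη₁
  have hη₁0 : η₁ ≠ 0 := by
    rw [hη₁, ENNReal.inv_ne_zero]
    exact ENNReal.mul_ne_top (by simp) (by simp [hD])
  obtain ⟨δ, hδ, hsm⟩ := pot_small q hq hqs η₁ hη₁0
  simp_rw [Irho_eq] at hsm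
  set η : ℝ := (4 * (Q.toReal + 1))⁻¹ with hη
  have hη0 : 0 < η := by have := ENNReal.toReal_nonneg (a := Q); positivity
  obtain ⟨R, hR⟩ := osc_phi q hq hqs δ hδ η hη0
  obtain ⟨K, hK, hlow⟩ := low_bound q m n hq hqs hmc r1 r2 R
  set f : ℂ → ℂ → ENNReal := fun z k => ‖m z k - 1‖ₑ with hf
  set b : ℂ → ℂ → ENNReal := fun v k => ‖∫ w, ek k w * (starRingEnd ℂ) (q w / (v - w))‖ₑ with hb
  have hfm : Measurable (fun p : ℂ × ℂ => f p.1 p.2) := (hmc.sub continuous_const).measurable.enorm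
  have hqm := hq.measurable
  have hbm : Measurable (fun p : ℂ × ℂ => b p.1 p.2) := by
    have : StronglyMeasurable (Function.uncurry fun (p : ℂ × ℂ) w => ek p.2 w * (starRingEnd ℂ) (q w / (p.1 - w))) := by
      apply Measurable.stronglyMeasurable
      have h1 : Measurable (fun x : (ℂ × ℂ) × ℂ => ek x.1.2 x.2) := (continuous_ek.comp (by fun_prop : Continuous fun x : (ℂ × ℂ) × ℂ => (x.1.2, x.2))).measurable
      have h2 : Measurable (fun x : (ℂ × ℂ) × ℂ => (starRingEnd ℂ) (q x.2 / (x.1.1 - x.2))) := by fun_prop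
      exact h1.mul h2
    exact this.integral_prod_right.measurable.enorm
  have hIm := measurable_Irho δ
  set κ1 : ℂ → ℂ → ENNReal := fun z w => ‖q w‖ₑ * ‖z - w‖ₑ⁻¹ with hκ1
  set κ2 : ℂ → ℂ → ENNReal := fun z w => ‖q w‖ₑ * Irho δ (z - w) with hκ2
  have hkone : Measurable (fun p : ℂ × ℂ => κ1 p.1 p.2) := by simp only [hκ1]; fun_prop
  have hktwo : Measurable (fun p : ℂ × ℂ => κ2 p.1 p.2) := by simp only [hκ2]; fun_prop
  have hsec : ∀ (g : ℂ → ℂ → ENNReal), (Measurable fun p : ℂ × ℂ => g p.1 p.2) → ∀ z, Measurable (g z) :=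
    fun g hg z => hg.comp (by fun_prop : Measurable fun k : ℂ => (z, k))
  set P1 : ℂ → ℂ → ENNReal := fun z k => ∫⁻ w, κ1 z w * f w k with hP1
  set P2 : ℂ → ℂ → ENNReal := fun z k => ∫⁻ w, κ2 z w * f w k with hP2
  have hP1m : Measurable (fun p : ℂ × ℂ => P1 p.1 p.2) := measurable_pot κ1 f hkone hfm
  have hP2m : Measurable (fun p : ℂ × ℂ => P2 p.1 p.2) := measurable_pot κ2 f hktwo hfm
  set T1 : ℂ → ℂ → ENNReal := fun z k => ∫⁻ v, κ1 z v * b v k with hT1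
  set T2 : ℂ → ℂ → ENNReal := fun z k => ∫⁻ v, κ2 z v * P1 v k with hT2
  set T3 : ℂ → ℂ → ENNReal := fun z k => ∫⁻ v, κ1 z v * P2 v k with hT3
  set T4 : ℂ → ℂ → ENNReal := fun _ k => ∫⁻ w, (ENNReal.ofReal η * ‖q w‖ₑ) * f w k with hT4
  set T5 : ℂ → ENNReal := (Metric.ball (0:ℂ) R).indicator (fun _ => K) with hT5
  have hT1m : ∀ z, Measurable (T1 z) := hsec T1 (measurable_pot κ1 b hkone hbm)
  have hT2m : ∀ z, Measurable (T2 z) := hsec T2 (measurable_pot κ2 P1 hktwo hP1m)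
  have hT3m : ∀ z, Measurable (T3 z) := hsec T3 (measurable_pot κ1 P2 hkone hP2m)
  have hT4m : ∀ z, Measurable (T4 z) := hsec T4 (measurable_pot (fun _ w => ENNReal.ofReal η * ‖q w‖ₑ) f (by fun_prop) hfm)
  have hT5m : Measurable T5 := measurable_const.indicator measurableSet_ball
  have hpt : ∀ z k, f z k ≤ T5 k + (T1 z k + (T2 z k + (T3 z k + T4 z k))) := by
    intro z k
    by_cases hk : R ≤ ‖k‖
    · have := pt_high k q (fun w => m w k) (fun w => n w k) hq hqs (hmc.comp (by fun_prop : Continuous fun w : ℂ => (w, k)))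
        (hnc.comp (by fun_prop : Continuous fun w : ℂ => (w, k))) (r1 k) (r2 k) δ hδ η (hR k hk) z
      exact le_add_left this
    · refine le_add_right ?_
      rw [hT5, Set.indicator_of_mem (by simpa using hk)]
      exact hlow z k (not_le.1 hk).le
  set C1 : ENNReal := K * volume (Metric.ball (0:ℂ) R) ^ (1 / s) + D * CB with hC1
  have hC1t : C1 ≠ ⊤ := by
    refine ENNReal.add_ne_top.2 ⟨ENNReal.mul_ne_top hK ?_, ENNReal.mul_ne_top hD hCB⟩
    exact ENNReal.rpow_ne_top_of_nonneg (by positivity) measure_ball_lt_top.ne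
  have hstep : ∀ j : ℕ, ∀ z, NN s (volume.restrict (Metric.ball (0:ℂ) j)) (f z) ≤ 2 * C1 := by
    intro j
    set μ := volume.restrict (Metric.ball (0:ℂ) j) with hμ
    have hμle : μ ≤ volume := Measure.restrict_le_self
    set A := ⨆ z, NN s μ (f z) with hA
    have hAz : ∀ z, NN s μ (f z) ≤ A := fun z => le_iSup (fun z => NN s μ (f z)) z
    have hAt : A ≠ ⊤ := by
      obtain ⟨Kj, hKj, hlowj⟩ := low_bound q m n hq hqs hmc r1 r2 j
      have : A ≤ Kj * volume (Metric.ball (0:ℂ) j) ^ (1 / s) := by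
        apply iSup_le
        intro z
        rw [← NN_indicator hs0 volume _ measurableSet_ball]
        have : NN s μ (f z) = NN s volume ((Metric.ball (0:ℂ) j).indicator (f z)) := by
          unfold NN
          rw [hμ, ← lintegral_indicator measurableSet_ball]
          congr 2; ext k
          by_cases h : k ∈ Metric.ball (0:ℂ) j
          · simp only [Set.indicator_of_mem h]
          · simp only [Set.indicator_of_notMem h, ENNReal.zero_rpow_of_pos hs0]
        rw [this]
        apply NN_mono hs0
        intro k
        by_cases h : k ∈ Metric.ball (0:ℂ) j
        · simp only [Set.indicator_of_mem h]
          exact hlowj z k (by simpa using (mem_ball_zero_iff.1 h).le)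
        · simp only [Set.indicator_of_notMem h, le_refl]
      refine ne_top_of_le_ne_top (ENNReal.mul_ne_top hKj ?_) this
      exact ENNReal.rpow_ne_top_of_nonneg (by positivity) measure_ball_lt_top.ne
    have hP1A : ∀ v, NN s μ (P1 v) ≤ D * A := fun v =>
      (NN_minkowski hs1 (κ1 v) f (hsec κ1 hkone v) hfm A hAz).trans (mul_le_mul_left (hpot v) _)
    have hP2A : ∀ v, NN s μ (P2 v) ≤ η₁ * A := fun v =>
      (NN_minkowski hs1 (κ2 v) f (hsec κ2 hktwo v) hfm A hAz).trans (mul_le_mul_left (hsm v) _)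
    have hsum : A ≤ C1 + A / 2 := by
      apply iSup_le
      intro z
      have t5 : NN s μ T5 ≤ K * volume (Metric.ball (0:ℂ) R) ^ (1 / s) := by
        refine (NN_mono_measure hs0 hμle _).trans (le_of_eq ?_)
        exact NN_indicator hs0 volume _ measurableSet_ball K
      have t1 : NN s μ (T1 z) ≤ D * CB := 
        (NN_minkowski hs1 (κ1 z) b (hsec κ1 hkone z) hbm CB (fun v => (NN_mono_measure hs0 hμle _).trans (hB v))).trans (mul_le_mul_left (hpot z) _)
      have t2 : NN s μ (T2 z) ≤ η₁ * (D * A) :=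
        (NN_minkowski hs1 (κ2 z) P1 (hsec κ2 hktwo z) hP1m _ hP1A).trans (mul_le_mul_left (hsm z) _)
      have t3 : NN s μ (T3 z) ≤ D * (η₁ * A) :=
        (NN_minkowski hs1 (κ1 z) P2 (hsec κ1 hkone z) hP2m _ hP2A).trans (mul_le_mul_left (hpot z) _)
      have t4 : NN s μ (T4 z) ≤ (ENNReal.ofReal η * Q) * A := by
        refine (NN_minkowski hs1 (fun w => ENNReal.ofReal η * ‖q w‖ₑ) f (by fun_prop) hfm A hAz).trans (le_of_eq ?_)
        rw [lintegral_const_mul _ (by fun_prop)]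
      have hd1 : η₁ * D ≤ 8⁻¹ := by
        rw [hη₁, ENNReal.mul_inv (by simp) (by simp), mul_assoc]
        refine mul_le_of_le_one_right' ?_
        rw [mul_comm, ← div_eq_mul_inv]
        exact ENNReal.div_le_of_le_mul (by rw [one_mul]; exact le_self_add)
      have hd2 : ENNReal.ofReal η * Q ≤ 4⁻¹ := by
        rw [← ENNReal.ofReal_toReal hqint, ← ENNReal.ofReal_mul hη0.le]
        have : (4:ENNReal)⁻¹ = ENNReal.ofReal (4⁻¹) := by
          rw [ENNReal.ofReal_inv_of_pos (by norm_num)]; simp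
        rw [this]
        apply ENNReal.ofReal_le_ofReal
        have := ENNReal.toReal_nonneg (a := Q)
        rw [hη, mul_inv, mul_assoc]
        refine mul_le_of_le_one_right (by norm_num) ?_
        rw [inv_mul_le_iff₀ (by positivity)]; linarith
      calc NN s μ (f z) ≤ NN s μ (fun k => T5 k + (T1 z k + (T2 z k + (T3 z k + T4 z k)))) := NN_mono hs0 (hpt z)
        _ ≤ NN s μ T5 + (NN s μ (T1 z) + (NN s μ (T2 z) + (NN s μ (T3 z) + NN s μ (T4 z)))) := by
          have m4 := (hT3m z).add (hT4m z)
          have m3 := (hT2m z).add m4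
          have m2 := (hT1m z).add m3
          refine (NN_add hs1.le hT5m m2).trans (add_le_add le_rfl ?_)
          refine (NN_add hs1.le (hT1m z) m3).trans (add_le_add le_rfl ?_)
          refine (NN_add hs1.le (hT2m z) m4).trans (add_le_add le_rfl ?_)
          exact NN_add hs1.le (hT3m z) (hT4m z)
        _ ≤ K * volume (Metric.ball (0:ℂ) R) ^ (1 / s) + (D * CB + (η₁ * (D * A) + (D * (η₁ * A) + (ENNReal.ofReal η * Q) * A))) := by
          gcongr
        _ = C1 + ((η₁ * D) + (η₁ * D) + ENNReal.ofReal η * Q) * A := by rw [hC1]; ring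
        _ ≤ C1 + (8⁻¹ + 8⁻¹ + 4⁻¹) * A := by gcongr
        _ = C1 + A / 2 := by
          congr 1
          rw [div_eq_mul_inv, mul_comm]
          congr 1
          have h8 : (8:ENNReal)⁻¹ = ENNReal.ofReal (8⁻¹) := by
            rw [ENNReal.ofReal_inv_of_pos (by norm_num)]; simp
          have h4 : (4:ENNReal)⁻¹ = ENNReal.ofReal (4⁻¹) := by
            rw [ENNReal.ofReal_inv_of_pos (by norm_num)]; simp
          have h2 : (2:ENNReal)⁻¹ = ENNReal.ofReal (2⁻¹) := by
            rw [ENNReal.ofReal_inv_of_pos (by norm_num)]; simp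
          rw [h8, h4, h2, ← ENNReal.ofReal_add (by norm_num) (by norm_num), ← ENNReal.ofReal_add (by norm_num) (by norm_num)]
          norm_num
    have hA2 : A / 2 ≤ C1 := by
      have h1 : A / 2 + A / 2 ≤ C1 + A / 2 := by rw [ENNReal.add_halves]; exact hsum
      exact (ENNReal.add_le_add_iff_right (ENNReal.div_ne_top hAt (by simp))).1 h1
    intro z
    refine (hAz z).trans ?_
    rw [two_mul, ← ENNReal.add_halves A]
    gcongr
  have hfin : ∀ z, NN s volume (f z) ≤ 2 * C1 := fun z => NN_le_of_balls hs0 _ _ (fun j => hstep j z)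
  refine ⟨2 * C1 + (CB + D * (2 * C1)), ?_, fun z => ⟨(hfin z).trans le_self_add, ?_⟩⟩
  · simp [ENNReal.add_eq_top, ENNReal.mul_eq_top, hC1t, hCB, hD]
  · refine le_add_left ?_
    calc _ ≤ NN s volume (fun k => b z k + P1 z k) := NN_mono hs0 (fun k =>
          pt_n k q (fun w => m w k) (fun w => n w k) hq hqs (hmc.comp (by fun_prop : Continuous fun w : ℂ => (w, k))) (r2 k) z)
      _ ≤ NN s volume (b z) + NN s volume (P1 z) := NN_add hs1.le (hsec b hbm z) (hsec P1 hP1m z)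
      _ ≤ CB + D * (2 * C1) := by
        refine add_le_add (hB z) ?_
        exact (NN_minkowski hs1 (κ1 z) f (hsec κ1 hkone z) hfm _ hfin).trans (mul_le_mul_left (hpot z) _)

lemma pair_final {ε : ℝ} (hε0 : 0 < ε) (q : ℂ → ℂ) (hqs : HasCompactSupport q) (hqhold : IsHolder ε q)
    {r₀ : ℝ} (hr₀ : 2 < r₀) (m n : ℂ → ℂ → ℂ)
    (hmc : Continuous fun p : ℂ × ℂ => m p.1 p.2) (hnc : Continuous fun p : ℂ × ℂ => n p.1 p.2)
    (hdm : ∀ k, Differentiable ℝ (fun z => m z k)) (hdn : ∀ k, Differentiable ℝ (fun z => n z k))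
    (h1 : ∀ k z, wDbar (fun ζ => m ζ k) z = q z * n z k)
    (h2 : ∀ k z, wD (fun ζ => n ζ k) z + Complex.I * k * n z k = (starRingEnd ℂ) (q z) * m z k)
    (hLm : ∀ k, Filter.Tendsto (fun z => m z k - 1) (Filter.cocompact ℂ) (nhds 0))
    (hLn : ∀ k, Filter.Tendsto (fun z => n z k) (Filter.cocompact ℂ) (nhds 0))
    {s : ℝ} (hs : 2 < s) :
    ∃ C : ENNReal, C ≠ ⊤ ∧ ∀ z, NN s volume (fun k => ‖m z k - 1‖ₑ) ≤ C ∧ NN s volume (fun k => ‖n z k‖ₑ) ≤ C := by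
  have hq := hqhold.cont hε0
  refine pair_bound hs q m n hq hqs hmc hnc (fun k z => ?_) (fun k v => ?_)
  · exact rep1 q (fun z => m z k) (fun z => n z k) hq hqs (hdm k) (hdn k).continuous (h1 k) (hLm k) z
  · exact rep2 k q (fun z => m z k) (fun z => n z k) hq hqs (hdm k).continuous (hdn k) (h2 k) (hLn k) v

lemma memLp_of_NN {s : ℝ} (hs : 2 < s) (g : ℂ → ℂ) (hg : Continuous g) (C : ℝ)
    (h : NN s volume (fun k => ‖g k‖ₑ) ≤ ENNReal.ofReal C) :
    MemLp g (ENNReal.ofReal s) ∧ eLpNorm g (ENNReal.ofReal s) volume ≤ ENNReal.ofReal C := by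
  have hs0 : 0 < s := by linarith
  have e : eLpNorm g (ENNReal.ofReal s) volume = NN s volume (fun k => ‖g k‖ₑ) := by
    rw [eLpNorm_eq_lintegral_rpow_enorm_toReal (by simpa using hs0) ENNReal.ofReal_ne_top, ENNReal.toReal_ofReal hs0.le]
    rfl
  rw [e]
  refine ⟨⟨hg.aestronglyMeasurable, ?_⟩, h⟩
  rw [e]
  exact h.trans_lt ENNReal.ofReal_lt_top

lemma NN_conj {s : ℝ} (g : ℂ → ℂ) (hg : Continuous g) :
    NN s volume (fun k => ‖g ((starRingEnd ℂ) k)‖ₑ) = NN s volume (fun k => ‖g k‖ₑ) := by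
  unfold NN
  congr 1
  have hm : Measurable (fun k => ‖g k‖ₑ ^ s) := by have := hg.measurable; fun_prop
  exact conjLIE.measurePreserving.lintegral_comp (f := fun k => ‖g k‖ₑ ^ s) hm

/-- Uniform-in-`z` bound `sup_z ‖m(z,·) − I‖_{L^s(dk)} ≤ C` for the normalized
exponentially growing solutions, for every `2 < s < ∞`. -/
theorem uniform_Ls_bound_in_k
    (ε : ℝ) (hε0 : 0 < ε) (hε1 : ε < 1) (q : ℂ → ℂ)
    (hqsupp : HasCompactSupport q) (hqhold : IsHolder ε q)
    (r₀ : ℝ) (hr₀ : 2 < r₀)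
    (M11 M12 M21 M22 : ℂ → ℂ → ℂ)
    (hc11 : Continuous fun p : ℂ × ℂ => M11 p.1 p.2)
    (hc12 : Continuous fun p : ℂ × ℂ => M12 p.1 p.2)
    (hc21 : Continuous fun p : ℂ × ℂ => M21 p.1 p.2)
    (hc22 : Continuous fun p : ℂ × ℂ => M22 p.1 p.2)
    (hdiff : ∀ k : ℂ, Differentiable ℝ (fun z => M11 z k) ∧
      Differentiable ℝ (fun z => M12 z k) ∧
      Differentiable ℝ (fun z => M21 z k) ∧
      Differentiable ℝ (fun z => M22 z k))
    (hsys : ∀ k z : ℂ,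
      wDbar (fun ζ => M11 ζ k) z = q z * M21 z k ∧
      wD (fun ζ => M21 ζ k) z + Complex.I * k * M21 z k = (starRingEnd ℂ) (q z) * M11 z k ∧
      wDbar (fun ζ => M12 ζ k) z - Complex.I * k * M12 z k = q z * M22 z k ∧
      wD (fun ζ => M22 ζ k) z = (starRingEnd ℂ) (q z) * M12 z k)
    (hLp : ∀ k : ℂ, MemLp (fun z => M11 z k - 1) (ENNReal.ofReal r₀) ∧
      MemLp (fun z => M12 z k) (ENNReal.ofReal r₀) ∧
      MemLp (fun z => M21 z k) (ENNReal.ofReal r₀) ∧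
      MemLp (fun z => M22 z k - 1) (ENNReal.ofReal r₀))
    (hHold : ∀ k : ℂ, IsHolder ε (fun z => M11 z k - 1) ∧
      IsHolder ε (fun z => M12 z k) ∧
      IsHolder ε (fun z => M21 z k) ∧
      IsHolder ε (fun z => M22 z k - 1)) :
    ∀ s : ℝ, 2 < s → ∃ C : ℝ, ∀ z : ℂ,
      (MemLp (fun k => M11 z k - 1) (ENNReal.ofReal s) ∧
        eLpNorm (fun k => M11 z k - 1) (ENNReal.ofReal s) volume ≤ ENNReal.ofReal C) ∧
      (MemLp (fun k => M12 z k) (ENNReal.ofReal s) ∧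
        eLpNorm (fun k => M12 z k) (ENNReal.ofReal s) volume ≤ ENNReal.ofReal C) ∧
      (MemLp (fun k => M21 z k) (ENNReal.ofReal s) ∧
        eLpNorm (fun k => M21 z k) (ENNReal.ofReal s) volume ≤ ENNReal.ofReal C) ∧
      (MemLp (fun k => M22 z k - 1) (ENNReal.ofReal s) ∧
        eLpNorm (fun k => M22 z k - 1) (ENNReal.ofReal s) volume ≤ ENNReal.ofReal C) := by
  intro s hs
  have hr0 : 0 < r₀ := by linarith
  have sec : ∀ {M : ℂ → ℂ → ℂ}, (Continuous fun p : ℂ × ℂ => M p.1 p.2) → ∀ z, Continuous (M z) :=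
    fun h z => h.comp (by fun_prop : Continuous fun k : ℂ => (z, k))
  obtain ⟨C, hC, hA⟩ := pair_final hε0 q hqsupp hqhold hr₀ M11 M21 hc11 hc21
    (fun k => (hdiff k).1) (fun k => (hdiff k).2.2.1) (fun k z => (hsys k z).1) (fun k z => (hsys k z).2.1)
    (fun k => holder_decay hε0 (hHold k).1 hr0 (hLp k).1)
    (fun k => holder_decay hε0 (hHold k).2.2.1 hr0 (hLp k).2.2.1) hs
  have hconjc : Continuous (fun p : ℂ × ℂ => (p.1, (starRingEnd ℂ) p.2)) :=
    continuous_fst.prodMk (continuous_conj.comp continuous_snd)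
  have hcd : ∀ f : ℂ → ℂ, Differentiable ℝ f → Differentiable ℝ (fun z => (starRingEnd ℂ) (f z)) :=
    fun f hf => (conjCLE : ℂ →L[ℝ] ℂ).differentiable.comp hf
  have hct : ∀ f : ℂ → ℂ, Filter.Tendsto f (Filter.cocompact ℂ) (nhds 0) →
      Filter.Tendsto (fun z => (starRingEnd ℂ) (f z)) (Filter.cocompact ℂ) (nhds 0) := by
    intro f hf
    have := (continuous_conj.tendsto (0:ℂ)).comp hf
    rwa [map_zero] at this
  obtain ⟨C', hC', hA'⟩ := pair_final hε0 q hqsupp hqhold hr₀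
    (fun z k => (starRingEnd ℂ) (M22 z ((starRingEnd ℂ) k))) (fun z k => (starRingEnd ℂ) (M12 z ((starRingEnd ℂ) k)))
    (continuous_conj.comp (hc22.comp hconjc)) (continuous_conj.comp (hc12.comp hconjc))
    (fun k => hcd _ (hdiff _).2.2.2) (fun k => hcd _ (hdiff _).2.1)
    (fun k z => by
      rw [wDbar_conj _ _ ((hdiff _).2.2.2 z), (hsys _ z).2.2.2]
      simp)
    (fun k z => by
      rw [wD_conj _ _ ((hdiff _).2.1 z)]
      have := congrArg (starRingEnd ℂ) (hsys ((starRingEnd ℂ) k) z).2.2.1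
      rw [map_mul, map_sub, map_mul, map_mul, conj_conj, conj_I] at this
      rw [← this]; ring)
    (fun k => by
      have := hct _ (holder_decay hε0 (hHold ((starRingEnd ℂ) k)).2.2.2 hr0 (hLp ((starRingEnd ℂ) k)).2.2.2)
      simpa using this)
    (fun k => hct _ (holder_decay hε0 (hHold _).2.1 hr0 (hLp _).2.1)) hs
  have hmax : max C C' ≠ ⊤ := by
    rcases max_choice C C' with h | h <;> rw [h] <;> assumption
  refine ⟨(max C C').toReal, fun z => ?_⟩
  have b1 : C ≤ ENNReal.ofReal (max C C').toReal := by
    rw [ENNReal.ofReal_toReal hmax]; exact le_max_left _ _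
  have b2 : C' ≤ ENNReal.ofReal (max C C').toReal := by
    rw [ENNReal.ofReal_toReal hmax]; exact le_max_right _ _
  have c22 : Continuous (fun k => M22 z k - 1) := (sec hc22 z).sub continuous_const
  have a22 : NN s volume (fun k => ‖M22 z k - 1‖ₑ) ≤ C' := by
    rw [← NN_conj _ c22]
    refine le_trans (le_of_eq ?_) (hA' z).1
    congr 1; ext k
    rw [← enorm_conj', map_sub, map_one]
  have a12 : NN s volume (fun k => ‖M12 z k‖ₑ) ≤ C' := by
    rw [← NN_conj _ (sec hc12 z)]
    refine le_trans (le_of_eq ?_) (hA' z).2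
    congr 1; ext k
    rw [← enorm_conj']
  exact ⟨memLp_of_NN hs _ ((sec hc11 z).sub continuous_const) _ ((hA z).1.trans b1),
    memLp_of_NN hs _ (sec hc12 z) _ (a12.trans b2),
    memLp_of_NN hs _ (sec hc21 z) _ ((hA z).2.trans b1),
    memLp_of_NN hs _ c22 _ (a22.trans b2)⟩
end

section
/- Let 2 < s < ∞ and set r₁ = 2s/(s+2), so 1 < r₁ < 2. Let b : ℂ → ℂ be measurable with b ∈ L^{r₁}(ℂ) and b ∈ L^{r₂}(ℂ) for some r₂ with 2 < r₂ < ∞ (Lebesgue measure on ℂ). Then there exists exactly one (up to almost-everywhere equality) function u ∈ L^s(ℂ) such that for almost every k ∈ ℂ the function k' ↦ b(k')·(1 + conj(u(k')))/(k − k') is integrable and u(k) = (1/π)∫_ℂ b(k')·(1 + conj(u(k')))/(k − k') dμ(k'). -/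
open MeasureTheory Complex

lemma kernel_near (q : ℝ) (hq : q < 2) : ∃ C : ℝ, 0 < C ∧ ∀ ρ : ℝ, 0 < ρ →
    ∫⁻ z : ℂ, (if ‖z‖ < ρ then ENNReal.ofReal (‖z‖ ^ (-q)) else 0) ≤ ENNReal.ofReal (C * ρ ^ (2 - q)) := by
  refine ⟨2 * Real.pi / (2 - q), by have := Real.pi_pos; have : 0 < 2 - q := by linarith
                                    positivity, fun ρ hρ => ?_⟩
  have e1 : Set.EqOn (fun y : ℝ => y ^ (1 - q)) (fun y : ℝ => y ^ (Module.finrank ℝ ℂ - 1) • (y ^ (-q))) (Set.Ioo 0 ρ) := by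
    intro y hy
    simp only [Complex.finrank_real_complex, smul_eq_mul, Nat.add_one_sub_one, pow_one]
    rw [sub_eq_add_neg, Real.rpow_add hy.1, Real.rpow_one]
  have i0 : IntervalIntegrable (fun y : ℝ => y ^ (1 - q)) volume 0 ρ :=
    intervalIntegral.intervalIntegrable_rpow' (by linarith)
  have i1 : IntegrableOn (fun y : ℝ => y ^ (1 - q)) (Set.Ioo 0 ρ) := by
    rw [← integrableOn_Ioc_iff_integrableOn_Ioo]
    exact (intervalIntegrable_iff_integrableOn_Ioc_of_le hρ.le).1 i0
  have e2 : (fun y : ℝ => y ^ (Module.finrank ℝ ℂ - 1) • (Set.indicator (Set.Iio ρ) (fun y => y ^ (-q)) y))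
     = Set.indicator (Set.Iio ρ) (fun y : ℝ => y ^ (Module.finrank ℝ ℂ - 1) • (y ^ (-q))) := by
    ext y; by_cases h : y ∈ Set.Iio ρ <;> simp [h]
  have i2 : Integrable (fun z : ℂ => Set.indicator (Set.Iio ρ) (fun y : ℝ => y ^ (-q)) ‖z‖) := by
    rw [integrable_fun_norm_addHaar volume, e2, IntegrableOn, integrable_indicator_iff measurableSet_Iio,
      IntegrableOn, Measure.restrict_restrict measurableSet_Iio, Set.inter_comm, Set.Ioi_inter_Iio]
    exact i1.congr_fun e1 measurableSet_Ioo
  have e3 : ∫ z : ℂ, Set.indicator (Set.Iio ρ) (fun y : ℝ => y ^ (-q)) ‖z‖ = 2 * Real.pi / (2 - q) * ρ ^ (2 - q) := by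
    rw [integral_fun_norm_addHaar volume, e2, setIntegral_indicator measurableSet_Iio, Set.Ioi_inter_Iio,
      ← setIntegral_congr_fun measurableSet_Ioo e1, ← integral_Ioc_eq_integral_Ioo,
      ← intervalIntegral.integral_of_le hρ.le, integral_rpow (Or.inl (by linarith)),
      Real.zero_rpow (by linarith)]
    simp [Measure.real, Complex.volume_ball]
    rw [show 1 - q + 1 = 2 - q by ring]; ring
  rw [← e3, ofReal_integral_eq_lintegral_ofReal i2]
  · refine le_of_eq (lintegral_congr fun z => ?_)
    by_cases h : ‖z‖ < ρ <;> simp [h]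
  · refine Filter.Eventually.of_forall fun z => ?_
    simp only [Set.indicator_apply, Pi.zero_apply]
    split_ifs <;> positivity

lemma kernel_far (q : ℝ) (hq : 2 < q) : ∃ C : ℝ, 0 < C ∧ ∀ ρ : ℝ, 0 < ρ →
    ∫⁻ z : ℂ, (if ‖z‖ < ρ then 0 else ENNReal.ofReal (‖z‖ ^ (-q))) ≤ ENNReal.ofReal (C * ρ ^ (2 - q)) := by
  refine ⟨2 * Real.pi / (q - 2), by have := Real.pi_pos; have : 0 < q - 2 := by linarith
                                    positivity, fun ρ hρ => ?_⟩
  have hsub : Set.Ioi 0 ∩ Set.Ici ρ = Set.Ici ρ := by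
    ext x; simp; intro h; linarith
  have e1 : Set.EqOn (fun y : ℝ => y ^ (1 - q)) (fun y : ℝ => y ^ (Module.finrank ℝ ℂ - 1) • (y ^ (-q))) (Set.Ici ρ) := by
    intro y hy
    simp only [Complex.finrank_real_complex, smul_eq_mul, Nat.add_one_sub_one, pow_one]
    rw [sub_eq_add_neg, Real.rpow_add (lt_of_lt_of_le hρ hy), Real.rpow_one]
  have i1 : IntegrableOn (fun y : ℝ => y ^ (1 - q)) (Set.Ici ρ) := by
    rw [integrableOn_Ici_iff_integrableOn_Ioi]
    exact integrableOn_Ioi_rpow_of_lt (by linarith) hρ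
  have e2 : (fun y : ℝ => y ^ (Module.finrank ℝ ℂ - 1) • (Set.indicator (Set.Ici ρ) (fun y => y ^ (-q)) y))
     = Set.indicator (Set.Ici ρ) (fun y : ℝ => y ^ (Module.finrank ℝ ℂ - 1) • (y ^ (-q))) := by
    ext y; by_cases h : y ∈ Set.Ici ρ <;> simp [h]
  have i2 : Integrable (fun z : ℂ => Set.indicator (Set.Ici ρ) (fun y : ℝ => y ^ (-q)) ‖z‖) := by
    rw [integrable_fun_norm_addHaar volume, e2, IntegrableOn, integrable_indicator_iff measurableSet_Ici,
      IntegrableOn, Measure.restrict_restrict measurableSet_Ici, Set.inter_comm, hsub]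
    exact i1.congr_fun e1 measurableSet_Ici
  have e3 : ∫ z : ℂ, Set.indicator (Set.Ici ρ) (fun y : ℝ => y ^ (-q)) ‖z‖ = 2 * Real.pi / (q - 2) * ρ ^ (2 - q) := by
    rw [integral_fun_norm_addHaar volume, e2, setIntegral_indicator measurableSet_Ici, hsub,
      ← setIntegral_congr_fun measurableSet_Ici e1, integral_Ici_eq_integral_Ioi,
      integral_Ioi_rpow_of_lt (by linarith) hρ]
    simp [Measure.real, Complex.volume_ball]
    rw [show 1 - q + 1 = 2 - q by ring]
    have h1 : q - 2 ≠ 0 := by linarith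
    have h2 : 2 - q ≠ 0 := by linarith
    field_simp
    ring
  rw [← e3, ofReal_integral_eq_lintegral_ofReal i2]
  · refine le_of_eq (lintegral_congr fun z => ?_)
    by_cases h : ‖z‖ < ρ
    · simp [h]
    · simp [h, not_lt.1 h]
  · refine Filter.Eventually.of_forall fun z => Set.indicator_nonneg ?_ _
    intro y hy
    exact Real.rpow_nonneg (hρ.le.trans hy) _

lemma enn_ker_pow (z : ℂ) (q : ℝ) (hq : 0 < q) :
    ENNReal.ofReal (‖z‖⁻¹) ^ q = ENNReal.ofReal (‖z‖ ^ (-q)) := by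
  rw [ENNReal.ofReal_rpow_of_nonneg (by positivity) hq.le, Real.inv_rpow (norm_nonneg _),
    Real.rpow_neg (norm_nonneg _)]

lemma exp_conj (r : ℝ) (hr : 1 < r) : 2 - r.conjExponent = (1 - 2 / r) * r.conjExponent := by
  have h : r - 1 ≠ 0 := by linarith
  have : r ≠ 0 := by linarith
  unfold Real.conjExponent
  field_simp
  ring

lemma holder_far (r : ℝ) (hr : 1 < r) (hr2 : r < 2) : ∃ C : ℝ, 0 < C ∧
    ∀ φ : ℂ → ℝ, Measurable φ → ∀ ρ : ℝ, 0 < ρ → ∀ k : ℂ,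
    ∫⁻ y, (ENNReal.ofReal (φ y) * (if ‖k - y‖ < ρ then 0 else ENNReal.ofReal (‖k - y‖⁻¹)))
      ≤ (∫⁻ y, ENNReal.ofReal (φ y) ^ r) ^ (1 / r) * ENNReal.ofReal (C * ρ ^ (1 - 2 / r)) := by
  set q := r.conjExponent with hqd
  have hpq : r.HolderConjugate q := Real.HolderConjugate.conjExponent hr
  have hq0 : 0 < q := hpq.symm.pos
  have hq2 : 2 < q := by
    rw [hqd, Real.conjExponent, lt_div_iff₀ (by linarith)]; linarith
  obtain ⟨C, hC, h⟩ := kernel_far q hq2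
  refine ⟨C ^ (1 / q), by positivity, fun φ hφ ρ hρ k => ?_⟩
  refine (ENNReal.lintegral_mul_le_Lp_mul_Lq volume hpq (f := fun y => ENNReal.ofReal (φ y))
    (g := fun y => if ‖k - y‖ < ρ then 0 else ENNReal.ofReal (‖k - y‖⁻¹)) (by fun_prop) ?_).trans ?_
  · exact (Measurable.ite (measurableSet_lt (by fun_prop) (by fun_prop)) (by fun_prop) (by fun_prop)).aemeasurable
  · gcongr
    have e : ∫⁻ a, (fun y => if ‖k - y‖ < ρ then 0 else ENNReal.ofReal (‖k - y‖⁻¹)) a ^ q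
      = ∫⁻ z : ℂ, (if ‖z‖ < ρ then 0 else ENNReal.ofReal (‖z‖ ^ (-q))) := by
      rw [← lintegral_sub_left_eq_self _ k]
      refine lintegral_congr fun y => ?_
      simp only [sub_sub_cancel]
      split_ifs
      · simp [hq0]
      · rw [enn_ker_pow _ _ hq0]
    rw [e]
    refine (ENNReal.rpow_le_rpow (h ρ hρ) (by positivity)).trans (le_of_eq ?_)
    rw [ENNReal.ofReal_rpow_of_nonneg (by positivity) (by positivity),
      Real.mul_rpow (by positivity) (by positivity), ← Real.rpow_mul hρ.le, exp_conj r hr, ← hqd,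
      mul_assoc, mul_one_div_cancel hq0.ne', mul_one]

lemma holder_near (r : ℝ) (hr2 : 2 < r) : ∃ C : ℝ, 0 < C ∧
    ∀ φ : ℂ → ℝ, Measurable φ → ∀ ρ : ℝ, 0 < ρ → ∀ k : ℂ,
    ∫⁻ y, (ENNReal.ofReal (φ y) * (if ‖k - y‖ < ρ then ENNReal.ofReal (‖k - y‖⁻¹) else 0))
      ≤ (∫⁻ y, ENNReal.ofReal (φ y) ^ r) ^ (1 / r) * ENNReal.ofReal (C * ρ ^ (1 - 2 / r)) := by
  have hr : 1 < r := by linarith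
  set q := r.conjExponent with hqd
  have hpq : r.HolderConjugate q := Real.HolderConjugate.conjExponent hr
  have hq0 : 0 < q := hpq.symm.pos
  have hq2 : q < 2 := by
    rw [hqd, Real.conjExponent, div_lt_iff₀ (by linarith)]; linarith
  obtain ⟨C, hC, h⟩ := kernel_near q hq2
  refine ⟨C ^ (1 / q), by positivity, fun φ hφ ρ hρ k => ?_⟩
  refine (ENNReal.lintegral_mul_le_Lp_mul_Lq volume hpq (f := fun y => ENNReal.ofReal (φ y))
    (g := fun y => if ‖k - y‖ < ρ then ENNReal.ofReal (‖k - y‖⁻¹) else 0) (by fun_prop) ?_).trans ?_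
  · exact (Measurable.ite (measurableSet_lt (by fun_prop) (by fun_prop)) (by fun_prop) (by fun_prop)).aemeasurable
  · gcongr
    have e : ∫⁻ a, (fun y => if ‖k - y‖ < ρ then ENNReal.ofReal (‖k - y‖⁻¹) else 0) a ^ q
      = ∫⁻ z : ℂ, (if ‖z‖ < ρ then ENNReal.ofReal (‖z‖ ^ (-q)) else 0) := by
      rw [← lintegral_sub_left_eq_self _ k]
      refine lintegral_congr fun y => ?_
      simp only [sub_sub_cancel]
      split_ifs
      · rw [enn_ker_pow _ _ hq0]
      · simp [hq0]
    rw [e]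
    refine (ENNReal.rpow_le_rpow (h ρ hρ) (by positivity)).trans (le_of_eq ?_)
    rw [ENNReal.ofReal_rpow_of_nonneg (by positivity) (by positivity),
      Real.mul_rpow (by positivity) (by positivity), ← Real.rpow_mul hρ.le, exp_conj r hr, ← hqd,
      mul_assoc, mul_one_div_cancel hq0.ne', mul_one]

lemma potential_bound (r₁ r₂ : ℝ) (h1 : 1 < r₁) (h2 : r₁ < 2) (h3 : 2 < r₂) (φ : ℂ → ℝ)
    (hφ : Measurable φ)
    (hA : ∫⁻ y, ENNReal.ofReal (φ y) ^ r₁ < ⊤) (hB : ∫⁻ y, ENNReal.ofReal (φ y) ^ r₂ < ⊤) :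
    ∃ M : ℝ, 0 ≤ M ∧ ∀ k : ℂ, ∫⁻ y, ENNReal.ofReal (φ y) * ENNReal.ofReal (‖k - y‖⁻¹) ≤ ENNReal.ofReal M := by
  obtain ⟨C1, _, hC1⟩ := holder_far r₁ h1 h2
  obtain ⟨C2, _, hC2⟩ := holder_near r₂ h3
  set M := (∫⁻ y, ENNReal.ofReal (φ y) ^ r₁) ^ (1 / r₁) * ENNReal.ofReal (C1 * 1 ^ (1 - 2 / r₁))
    + (∫⁻ y, ENNReal.ofReal (φ y) ^ r₂) ^ (1 / r₂) * ENNReal.ofReal (C2 * 1 ^ (1 - 2 / r₂)) with hM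
  have hMt : M ≠ ⊤ := by
    refine ENNReal.add_ne_top.2 ⟨ENNReal.mul_ne_top ?_ ENNReal.ofReal_ne_top, ENNReal.mul_ne_top ?_ ENNReal.ofReal_ne_top⟩
    · exact ENNReal.rpow_ne_top_of_nonneg (by positivity) hA.ne
    · exact ENNReal.rpow_ne_top_of_nonneg (by positivity) hB.ne
  refine ⟨M.toReal, ENNReal.toReal_nonneg, fun k => ?_⟩
  rw [ENNReal.ofReal_toReal hMt]
  refine le_trans ?_ (add_le_add (hC1 φ hφ 1 one_pos k) (hC2 φ hφ 1 one_pos k))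
  rw [← lintegral_add_left]
  · refine lintegral_mono fun y => ?_
    split_ifs <;> simp
  · exact (by fun_prop : Measurable fun y => ENNReal.ofReal (φ y)).mul
      (Measurable.ite (measurableSet_lt (by fun_prop) (by fun_prop)) (by fun_prop) (by fun_prop))

/-- The auxiliary majorant used in the proof of the Hardy-Littlewood-Sobolev inequality. -/
noncomputable def hlsH (p c1 c2 e1 e2 x : ℝ) (z : ℂ) : ENNReal :=
  ENNReal.ofReal x * (if ‖z‖ < x ^ (-(p / 2)) then
      ENNReal.ofReal (2 * (x / c2) ^ e1) * ENNReal.ofReal (‖z‖ ^ (-1 : ℝ))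
    else ENNReal.ofReal (2 * c1 ^ e2) * ENNReal.ofReal (‖z‖ ^ (-(1 + e2))))

lemma hlsH_meas (p c1 c2 e1 e2 : ℝ) (φ : ℂ → ℝ) (hφ : Measurable φ) :
    Measurable (fun w : ℂ × ℂ => hlsH p c1 c2 e1 e2 (φ w.2) (w.1 - w.2)) := by
  unfold hlsH
  refine Measurable.mul (by fun_prop) (Measurable.ite (measurableSet_lt (by fun_prop) ?_) ?_ ?_)
  · exact (hφ.comp measurable_snd).pow_const _
  · have := (((hφ.comp measurable_snd).div_const c2).pow_const e1 : Measurable fun w : ℂ × ℂ => _)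
    have h2 : Measurable fun w : ℂ × ℂ => ‖w.1 - w.2‖ ^ (-1 : ℝ) :=
      Measurable.pow_const (by fun_prop) _
    exact (this.const_mul 2).ennreal_ofReal.mul h2.ennreal_ofReal
  · have h2 : Measurable fun w : ℂ × ℂ => ‖w.1 - w.2‖ ^ (-(1 + e2)) :=
      Measurable.pow_const (by fun_prop) _
    exact measurable_const.mul h2.ennreal_ofReal

lemma hlsH_int (s : ℝ) (hs : 2 < s) (c1 c2 : ℝ) (hc1 : 0 < c1) (hc2 : 0 < c2) :
    ∃ K : ℝ, 0 ≤ K ∧ ∀ x : ℝ, 0 ≤ x →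
      ∫⁻ z : ℂ, hlsH (2 * s / (s + 2)) c1 c2 ((s - 1) / (1 + s / 2)) ((s - 1) / (s / 2)) x z
        ≤ ENNReal.ofReal K * ENNReal.ofReal x ^ (2 * s / (s + 2)) := by
  obtain ⟨C2, hC2, h2⟩ := kernel_near 1 (by norm_num)
  have he2 : (s - 1) / (s / 2) = 2 - 2 / s := by field_simp
  have he1 : (s - 1) / (1 + s / 2) = 2 * (s - 1) / (s + 2) := by field_simp; ring
  have h2s : 2 / s < 1 := by rw [div_lt_one (by linarith)]; exact hs
  obtain ⟨C3, hC3, h3⟩ := kernel_far (1 + (s - 1) / (s / 2)) (by rw [he2]; linarith)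
  set p := 2 * s / (s + 2) with hp
  set e1 := (s - 1) / (1 + s / 2)
  set e2 := (s - 1) / (s / 2)
  have hp0 : 0 < p := by positivity
  have ex1 : 1 + (e1 + -(p / 2) * (2 - 1)) = p := by
    rw [he1, hp]; field_simp; ring
  have ex2 : 1 + -(p / 2) * (2 - (1 + e2)) = p := by
    rw [he2, hp]; field_simp; ring
  refine ⟨2 / c2 ^ e1 * C2 + 2 * c1 ^ e2 * C3, by positivity, fun x hx => ?_⟩
  rcases hx.eq_or_lt with rfl | hx
  · simp [hlsH]
  unfold hlsH
  set R := x ^ (-(p / 2)) with hR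
  have hR0 : 0 < R := by positivity
  rw [lintegral_const_mul' _ _ ENNReal.ofReal_ne_top]
  have key : (∫⁻ z : ℂ, (if ‖z‖ < R then
      ENNReal.ofReal (2 * (x / c2) ^ e1) * ENNReal.ofReal (‖z‖ ^ (-1 : ℝ))
    else ENNReal.ofReal (2 * c1 ^ e2) * ENNReal.ofReal (‖z‖ ^ (-(1 + e2)))))
    ≤ ENNReal.ofReal (2 * (x / c2) ^ e1) * ENNReal.ofReal (C2 * R ^ (2 - 1 : ℝ)) +
     ENNReal.ofReal (2 * c1 ^ e2) * ENNReal.ofReal (C3 * R ^ (2 - (1 + e2))) := by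
    refine le_trans ?_ (add_le_add (mul_le_mul_right (h2 R hR0) _) (mul_le_mul_right (h3 R hR0) _))
    rw [← lintegral_const_mul' _ _ ENNReal.ofReal_ne_top, ← lintegral_const_mul' _ _ ENNReal.ofReal_ne_top,
      ← lintegral_add_left]
    · refine lintegral_mono fun z => ?_
      split_ifs <;> simp
    · refine Measurable.const_mul (Measurable.ite (measurableSet_lt (by fun_prop) (by fun_prop)) ?_ (by fun_prop)) _
      exact (Measurable.pow_const (by fun_prop) _).ennreal_ofReal
  refine (mul_le_mul_right key _).trans (le_of_eq ?_)
  rw [ENNReal.ofReal_rpow_of_nonneg hx.le hp0.le, ← ENNReal.ofReal_mul (by positivity),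
    ← ENNReal.ofReal_mul (by positivity), ← ENNReal.ofReal_add (by positivity) (by positivity),
    ← ENNReal.ofReal_mul (by positivity), ← ENNReal.ofReal_mul (by positivity)]
  congr 1
  rw [hR, ← Real.rpow_mul hx.le, ← Real.rpow_mul hx.le, Real.div_rpow hx.le hc2.le]
  have a1 : x ^ p = x * (x ^ e1 * x ^ (-(p / 2) * (2 - 1))) := by
    conv_lhs => rw [← ex1, Real.rpow_add hx, Real.rpow_add hx, Real.rpow_one]
  have a2 : x ^ p = x * (x ^ (-(p / 2) * (2 - (1 + e2)))) := by
    conv_lhs => rw [← ex2, Real.rpow_add hx, Real.rpow_one]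
  rw [add_mul]
  conv_rhs => rw [a1]
  conv_rhs => rw [← a1]; arg 2; rw [a2]
  conv_rhs => arg 1; rw [a1]
  ring

lemma hls (s : ℝ) (hs : 2 < s) (p : ℝ) (hp : p = 2 * s / (s + 2)) (φ : ℂ → ℝ) (hφ : Measurable φ)
    (hφ0 : ∀ y, 0 ≤ φ y) (hA : ∫⁻ y, ENNReal.ofReal (φ y) ^ p < ⊤)
    (hfin : ∀ k : ℂ, ∫⁻ y, ENNReal.ofReal (φ y) * ENNReal.ofReal (‖k - y‖⁻¹) < ⊤) :
    ∫⁻ k : ℂ, (∫⁻ y, ENNReal.ofReal (φ y) * ENNReal.ofReal (‖k - y‖⁻¹)) ^ s < ⊤ := by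
  have hp1 : 1 < p := by rw [hp, lt_div_iff₀ (by linarith)]; linarith
  have hp2 : p < 2 := by rw [hp, div_lt_iff₀ (by linarith)]; linarith
  obtain ⟨C1, hC1, h1⟩ := holder_far p hp1 hp2
  obtain ⟨C2, hC2, h2⟩ := kernel_near 1 (by norm_num)
  set A := (∫⁻ y, ENNReal.ofReal (φ y) ^ p) ^ (1 / p) with hAd
  have hAt : A ≠ ⊤ := ENNReal.rpow_ne_top_of_nonneg (by positivity) hA.ne
  set D := A.toReal + 1 with hD
  have hD0 : 0 < D := by positivity
  have hAD : A ≤ ENNReal.ofReal D := by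
    rw [← ENNReal.ofReal_toReal hAt]; exact ENNReal.ofReal_le_ofReal (by linarith)
  set c1 := (4 * D * C1) ^ (s / 2) with hc1
  have hc10 : 0 < c1 := by positivity
  set c2 := 1 / (4 * C2 * c1) with hc2
  have hc20 : 0 < c2 := by positivity
  set e1 := (s - 1) / (1 + s / 2) with he1
  set e2 := (s - 1) / (s / 2) with he2
  obtain ⟨K, hK, hKi⟩ := hlsH_int s hs c1 c2 hc10 hc20
  rw [← he1, ← he2, ← hp] at hKi
  have main : ∀ k : ℂ, (∫⁻ y, ENNReal.ofReal (φ y) * ENNReal.ofReal (‖k - y‖⁻¹)) ^ s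
      ≤ ∫⁻ y, hlsH p c1 c2 e1 e2 (φ y) (k - y) := by
    intro k
    set I := ∫⁻ y, ENNReal.ofReal (φ y) * ENNReal.ofReal (‖k - y‖⁻¹) with hI
    have hIt : I ≠ ⊤ := (hfin k).ne
    set l := I.toReal with hl
    have hIl : I = ENNReal.ofReal l := (ENNReal.ofReal_toReal hIt).symm
    rcases (ENNReal.toReal_nonneg : 0 ≤ I.toReal).eq_or_lt with h0 | hl0
    · rw [hIl, hl, ← h0]; simp [show 0 < s by linarith]
    rw [← hl] at hl0
    set ρ := c1 * l ^ (-(s / 2)) with hρ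
    have hρ0 : 0 < ρ := by positivity
    set a := c2 * l ^ (1 + s / 2) with ha
    have ha0 : 0 < a := by positivity
    have far := h1 φ hφ ρ hρ0 k
    have far' : ∫⁻ y, (ENNReal.ofReal (φ y) * (if ‖k - y‖ < ρ then 0 else ENNReal.ofReal (‖k - y‖⁻¹)))
        ≤ ENNReal.ofReal (l / 4) := by
      refine far.trans ((mul_le_mul_left hAD _).trans (le_of_eq ?_))
      rw [← ENNReal.ofReal_mul hD0.le]
      congr 1
      have : 1 - 2 / p = -(2 / s) := by rw [hp]; field_simp; ring
      rw [this, hρ, hc1, Real.mul_rpow (by positivity) (by positivity), ← Real.rpow_mul (by positivity),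
        ← Real.rpow_mul (by positivity), show s / 2 * -(2 / s) = -1 by field_simp,
        show -(s / 2) * -(2 / s) = 1 by field_simp, Real.rpow_neg_one, Real.rpow_one]
      field_simp
    have near : ∫⁻ y, ENNReal.ofReal a * (if ‖k - y‖ < ρ then ENNReal.ofReal (‖k - y‖⁻¹) else 0)
        ≤ ENNReal.ofReal (l / 4) := by
      rw [lintegral_const_mul' _ _ ENNReal.ofReal_ne_top,
        lintegral_sub_left_eq_self (fun z : ℂ => if ‖z‖ < ρ then ENNReal.ofReal (‖z‖⁻¹) else 0) k]
      have := h2 ρ hρ0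
      simp only [Real.rpow_neg_one] at this
      refine (mul_le_mul_right this _).trans (le_of_eq ?_)
      rw [← ENNReal.ofReal_mul ha0.le]
      congr 1
      rw [show (2 - 1 : ℝ) = 1 by norm_num, Real.rpow_one, ha, hρ, hc2]
      have : l ^ (1 + s / 2) * l ^ (-(s / 2)) = l := by
        rw [← Real.rpow_add hl0]; simp
      calc _ = 1 / 4 * (l ^ (1 + s / 2) * l ^ (-(s / 2))) := by field_simp
        _ = _ := by rw [this]; ring
    set R := ∫⁻ y, ENNReal.ofReal (φ y) * (if ‖k - y‖ < ρ ∧ a < φ y then ENNReal.ofReal (‖k - y‖⁻¹) else 0) with hR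
    have hsplit : I ≤ ENNReal.ofReal (l / 4) + ENNReal.ofReal (l / 4) + R := by
      refine le_trans ?_ (add_le_add (add_le_add far' near) le_rfl)
      rw [← lintegral_add_left, ← lintegral_add_left]
      · refine lintegral_mono fun y => ?_
        by_cases h : ‖k - y‖ < ρ
        · by_cases h' : a < φ y
          · simp [h, h']
          · simp only [h, h', if_true, mul_zero, zero_add, and_false, if_false, add_zero]
            gcongr
            exact not_lt.1 h'
        · simp [h]
      · refine Measurable.add ?_ ?_
        · exact Measurable.mul (by fun_prop) (Measurable.ite (measurableSet_lt (by fun_prop) (by fun_prop)) (by fun_prop) (by fun_prop))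
        · exact Measurable.mul (by fun_prop) (Measurable.ite (measurableSet_lt (by fun_prop) (by fun_prop)) (by fun_prop) (by fun_prop))
      · exact Measurable.mul (by fun_prop) (Measurable.ite (measurableSet_lt (by fun_prop) (by fun_prop)) (by fun_prop) (by fun_prop))
    have hR2 : ENNReal.ofReal (l / 2) ≤ R := by
      rw [← ENNReal.ofReal_add (by positivity) (by positivity), hIl] at hsplit
      have e : ENNReal.ofReal l = ENNReal.ofReal (l / 4 + l / 4) + ENNReal.ofReal (l / 2) := by
        rw [← ENNReal.ofReal_add (by positivity) (by positivity)]; congr 1; ring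
      rw [e] at hsplit
      exact (ENNReal.add_le_add_iff_left ENNReal.ofReal_ne_top).1 hsplit
    have e : I ^ s = ENNReal.ofReal (2 * l ^ (s - 1)) * ENNReal.ofReal (l / 2) := by
      rw [hIl, ENNReal.ofReal_rpow_of_nonneg hl0.le (by linarith), ← ENNReal.ofReal_mul (by positivity)]
      congr 1
      rw [Real.rpow_sub_one hl0.ne']
      field_simp
    rw [e]
    refine (mul_le_mul_right hR2 _).trans ?_
    rw [hR, ← lintegral_const_mul' _ _ ENNReal.ofReal_ne_top]
    refine lintegral_mono fun y => ?_
    simp only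
    unfold hlsH
    split_ifs with h3 h4 h4
    · rw [mul_left_comm]
      gcongr ENNReal.ofReal (φ y) * (ENNReal.ofReal (2 * ?_) * ENNReal.ofReal ?_)
      · have : l ^ (1 + s / 2) ≤ φ y / c2 := by
          rw [le_div_iff₀ hc20, mul_comm]; exact h3.2.le
        calc l ^ (s - 1) = (l ^ (1 + s / 2)) ^ e1 := by
              rw [← Real.rpow_mul hl0.le, he1, mul_div_cancel₀ _ (by positivity)]
          _ ≤ _ := Real.rpow_le_rpow (by positivity) this (div_nonneg (by linarith) (by linarith))
      · rw [Real.rpow_neg_one]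
    · rw [mul_left_comm]
      refine mul_le_mul_right ?_ _
      rw [← ENNReal.ofReal_mul (by positivity), ← ENNReal.ofReal_mul (by positivity)]
      refine ENNReal.ofReal_le_ofReal ?_
      rcases (norm_nonneg (k - y)).eq_or_lt with h0 | hz
      · rw [← h0]; simp; positivity
      have : l ^ (s / 2) ≤ c1 / ‖k - y‖ := by
        rw [le_div_iff₀ hz]
        have := h3.1.le
        rw [hρ, Real.rpow_neg hl0.le, ← div_eq_mul_inv, le_div_iff₀ (by positivity)] at this
        linarith
      have hh : l ^ (s - 1) ≤ (c1 / ‖k - y‖) ^ e2 := by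
        calc l ^ (s - 1) = (l ^ (s / 2)) ^ e2 := by
              rw [← Real.rpow_mul hl0.le, he2, mul_div_cancel₀ _ (by positivity)]
          _ ≤ _ := Real.rpow_le_rpow (by positivity) this (div_nonneg (by linarith) (by linarith))
      rw [Real.div_rpow hc10.le hz.le] at hh
      rw [neg_add, Real.rpow_add hz, Real.rpow_neg_one, Real.rpow_neg hz.le]
      calc 2 * l ^ (s - 1) * ‖k - y‖⁻¹ ≤ 2 * (c1 ^ e2 / ‖k - y‖ ^ e2) * ‖k - y‖⁻¹ := by gcongr
        _ = _ := by rw [div_eq_mul_inv]; ring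
    · simp
    · simp
  refine (lintegral_mono main).trans_lt ?_
  rw [lintegral_lintegral_swap (hlsH_meas p c1 c2 e1 e2 φ hφ).aemeasurable]
  refine lt_of_le_of_lt (lintegral_mono (g := fun y => ENNReal.ofReal K * ENNReal.ofReal (φ y) ^ p) fun y => ?_) ?_
  · rw [lintegral_sub_right_eq_self (fun z => hlsH p c1 c2 e1 e2 (φ y) z) y]
    exact hKi _ (hφ0 y)
  · rw [lintegral_const_mul' _ _ ENNReal.ofReal_ne_top]
    exact ENNReal.mul_lt_top ENNReal.ofReal_lt_top hA

/-- The (unnormalized) solid Cauchy transform. -/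
noncomputable def cG (f : ℂ → ℂ) (k : ℂ) : ℂ := ∫ y, f y / (k - y)

/-- `g` has a uniformly bounded Riesz potential. -/
def PB (g : ℂ → ℂ) (M : ℝ) : Prop :=
  AEStronglyMeasurable g volume ∧ ∀ a : ℂ, Integrable (fun y => g y / (a - y)) ∧
    ∫ y, ‖g y / (a - y)‖ ≤ M

lemma PB.mul {g h : ℂ → ℂ} {M K : ℝ} (hg : PB g M) (hh : AEStronglyMeasurable h volume)
    (hK : ∀ᵐ y, ‖h y‖ ≤ K) (hK0 : 0 ≤ K) : PB (fun y => g y * h y) (K * M) := by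
  refine ⟨hg.1.mul hh, fun a => ?_⟩
  have e : (fun y => g y * h y / (a - y)) = fun y => h y * (g y / (a - y)) := by
    ext y; ring
  have hi : Integrable (fun y => h y * (g y / (a - y))) := (hg.2 a).1.bdd_mul hh hK
  rw [e]
  refine ⟨hi, ?_⟩
  simp only [mul_comm (g _) (h _), mul_div_assoc]
  calc ∫ y, ‖h y * (g y / (a - y))‖ ≤ ∫ y, K * ‖g y / (a - y)‖ := by
        refine integral_mono_ae hi.norm ((hg.2 a).1.norm.const_mul K) ?_
        filter_upwards [hK] with y hy
        rw [norm_mul]; gcongr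
    _ ≤ K * M := by
        rw [integral_const_mul]; exact mul_le_mul_of_nonneg_left (hg.2 a).2 hK0

lemma PB.norm_le {g : ℂ → ℂ} {M : ℝ} (hg : PB g M) (a : ℂ) : ‖cG g a‖ ≤ M :=
  (norm_integral_le_integral_norm _).trans (hg.2 a).2

lemma PB.nonneg {g : ℂ → ℂ} {M : ℝ} (hg : PB g M) : 0 ≤ M :=
  (norm_nonneg _).trans (hg.norm_le 0)

lemma aesm_ker {f : ℂ → ℂ} (hf : AEStronglyMeasurable f volume) :
    AEStronglyMeasurable (fun p : ℂ × ℂ => f p.2 / (p.1 - p.2)) (volume.prod volume) := by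
  have h1 : AEStronglyMeasurable (fun p : ℂ × ℂ => f p.2) (volume.prod volume) := hf.comp_snd
  have h2 : Measurable (fun p : ℂ × ℂ => (p.1 - p.2)⁻¹) := by fun_prop
  simp only [div_eq_mul_inv]
  exact h1.mul h2.aestronglyMeasurable

lemma aesm_cG {f : ℂ → ℂ} (hf : AEStronglyMeasurable f volume) :
    AEStronglyMeasurable (cG f) volume :=
  (aesm_ker hf).integral_prod_right'

lemma cG_congr {f g : ℂ → ℂ} (h : f =ᵐ[volume] g) : cG f = cG g := by
  ext k
  refine integral_congr_ae ?_
  filter_upwards [h] with y hy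
  rw [hy]

/-- The product formula for Cauchy transforms. -/
lemma cG_mul {f g : ℂ → ℂ} {M : ℝ} (hg : PB g M) (k : ℂ)
    (hfk : Integrable (fun y => f y / (k - y))) :
    Integrable (fun y => f y * cG g y / (k - y)) ∧ Integrable (fun y => g y * cG f y / (k - y)) ∧
    cG f k * cG g k = cG (fun y => f y * cG g y) k + cG (fun y => g y * cG f y) k := by
  have hm : AEStronglyMeasurable (fun p : ℂ × ℂ => (f p.1 / (k - p.1)) * (g p.2 / (p.1 - p.2)))
      (volume.prod volume) := hfk.1.comp_fst.mul (aesm_ker hg.1)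
  have h1 : Integrable (fun p : ℂ × ℂ => (f p.1 / (k - p.1)) * (g p.2 / (p.1 - p.2)))
      (volume.prod volume) := by
    rw [integrable_prod_iff hm]
    refine ⟨Filter.Eventually.of_forall fun x => (hg.2 x).1.const_mul (f x / (k - x)), ?_⟩
    refine Integrable.mono' (hfk.norm.const_mul M) hm.norm.integral_prod_right' ?_
    refine Filter.Eventually.of_forall fun x => ?_
    simp only [norm_mul]
    rw [integral_const_mul, norm_mul, norm_norm, mul_comm]
    gcongr
    rw [Real.norm_of_nonneg (integral_nonneg fun _ => norm_nonneg _)]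
    exact (hg.2 x).2
  have h0 : Integrable (fun p : ℂ × ℂ => (f p.1 / (k - p.1)) * (g p.2 / (k - p.2)))
      (volume.prod volume) := hfk.mul_prod (hg.2 k).1
  have hne1 : ∀ᵐ p : ℂ × ℂ ∂(volume.prod volume), p.1 ≠ k :=
    Measure.quasiMeasurePreserving_fst.ae (Measure.ae_ne volume k)
  have hne2 : ∀ᵐ p : ℂ × ℂ ∂(volume.prod volume), p.2 ≠ k :=
    Measure.quasiMeasurePreserving_snd.ae (Measure.ae_ne volume k)
  have hne3 : ∀ᵐ p : ℂ × ℂ ∂(volume.prod volume), p.2 ≠ p.1 := by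
    rw [Measure.ae_prod_iff_ae_ae]
    · exact Filter.Eventually.of_forall fun x => Measure.ae_ne volume x
    · exact (measurableSet_eq_fun measurable_snd measurable_fst).compl
  have hae : (fun p : ℂ × ℂ => (f p.1 / (k - p.1)) * (g p.2 / (k - p.2))
      - (f p.1 / (k - p.1)) * (g p.2 / (p.1 - p.2))) =ᵐ[volume.prod volume]
      fun p : ℂ × ℂ => (g p.2 / (k - p.2)) * (f p.1 / (p.2 - p.1)) := by
    filter_upwards [hne1, hne2, hne3] with p a1 a2 a3
    have b1 : k - p.1 ≠ 0 := sub_ne_zero.2 a1.symm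
    have b2 : k - p.2 ≠ 0 := sub_ne_zero.2 a2.symm
    have b3 : p.2 - p.1 ≠ 0 := sub_ne_zero.2 a3
    have b4 : p.1 - p.2 ≠ 0 := sub_ne_zero.2 a3.symm
    rw [show p.2 - p.1 = -(p.1 - p.2) by ring]
    field_simp
    ring
  have h2 : Integrable (fun p : ℂ × ℂ => (g p.2 / (k - p.2)) * (f p.1 / (p.2 - p.1)))
      (volume.prod volume) := (h0.sub h1).congr hae
  have i1 : ∀ x, ∫ y, (f x / (k - x)) * (g y / (x - y)) = f x * cG g x / (k - x) := by
    intro x; rw [integral_const_mul, cG]; ring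
  have i2 : ∀ y, ∫ x, (g y / (k - y)) * (f x / (y - x)) = g y * cG f y / (k - y) := by
    intro x; rw [integral_const_mul, cG]; ring
  refine ⟨?_, ?_, ?_⟩
  · have := h1.integral_prod_left
    simpa only [i1] using this
  · have := h2.integral_prod_right
    simpa only [i2] using this
  · have e0 : ∫ p : ℂ × ℂ, (f p.1 / (k - p.1)) * (g p.2 / (k - p.2)) ∂(volume.prod volume) = cG f k * cG g k :=
      integral_prod_mul (fun y => f y / (k - y)) (fun y => g y / (k - y))
    have e1 := integral_prod _ h1
    have e2 := integral_prod_symm _ h2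
    simp only [i1] at e1
    simp only [i2] at e2
    have e3 := integral_congr_ae hae
    rw [integral_sub h0 h1, e0, e1, e2] at e3
    unfold cG at e3 ⊢
    rw [← e3]; ring

lemma cG_pow {β : ℂ → ℂ} {M : ℝ} (hβ : PB β M) (n : ℕ) (k : ℂ) :
    (n + 1) * cG (fun y => β y * cG β y ^ n) k = cG β k ^ (n + 1) := by
  induction n generalizing k with
  | zero => simp
  | succ n ih =>
    have hw : AEStronglyMeasurable (cG β) volume := aesm_cG hβ.1
    have hPB : ∀ n : ℕ, PB (fun y => β y * cG β y ^ n) (M ^ n * M) := fun n =>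
      hβ.mul (hw.pow n) (Filter.Eventually.of_forall fun y => by
        rw [norm_pow]; exact pow_le_pow_left₀ (norm_nonneg _) (hβ.norm_le y) n) (pow_nonneg hβ.nonneg n)
    obtain ⟨-, -, h⟩ := cG_mul hβ k ((hPB n).2 k).1
    have e1 : (fun y => β y * cG β y ^ n * cG β y) = fun y => β y * cG β y ^ (n + 1) := by
      ext y; ring
    have hn : (n + 1 : ℂ) ≠ 0 := by exact_mod_cast Nat.succ_ne_zero n
    have e2 : (fun y => β y * cG (fun y => β y * cG β y ^ n) y)
        = fun y => (n + 1 : ℂ)⁻¹ * (β y * cG β y ^ (n + 1)) := by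
      ext y
      rw [← ih y]; field_simp
    have e3 : cG (fun y => (n + 1 : ℂ)⁻¹ * (β y * cG β y ^ (n + 1))) k
        = (n + 1 : ℂ)⁻¹ * cG (fun y => (β y * cG β y ^ (n + 1))) k := by
      unfold cG
      rw [← integral_const_mul]
      refine integral_congr_ae (Filter.Eventually.of_forall fun y => ?_)
      simp only [mul_div_assoc]
    rw [e1, e2, e3] at h
    have h' := congrArg (fun z => (n + 1 : ℂ) * z) h
    rw [← mul_assoc, ih k] at h'
    rw [pow_succ _ (n + 1), h']
    push_cast
    field_simp

lemma cG_exp {β : ℂ → ℂ} {M : ℝ} (hβ : PB β M) (k : ℂ) :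
    cG (fun y => β y * -Complex.exp (-cG β y)) k = Complex.exp (-cG β k) - 1 := by
  have hw : AEStronglyMeasurable (cG β) volume := aesm_cG hβ.1
  have hPB : ∀ n : ℕ, PB (fun y => β y * cG β y ^ n) (M ^ n * M) := fun n =>
    hβ.mul (hw.pow n) (Filter.Eventually.of_forall fun y => by
      rw [norm_pow]; exact pow_le_pow_left₀ (norm_nonneg _) (hβ.norm_le y) n) (pow_nonneg hβ.nonneg n)
  set F : ℕ → ℂ → ℂ := fun n y => ((-1) ^ (n + 1) / (n.factorial : ℂ)) * (β y * cG β y ^ n / (k - y)) with hF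
  have hFi : ∀ n, Integrable (F n) := fun n => ((hPB n).2 k).1.const_mul _
  have hFs : Summable fun n => ∫ y, ‖F n y‖ := by
    refine Summable.of_nonneg_of_le (fun n => integral_nonneg fun _ => norm_nonneg _) (fun n => ?_)
      ((Real.summable_pow_div_factorial M).mul_right M)
    simp only [hF, norm_mul]
    rw [integral_const_mul]
    simp only [norm_div, norm_pow, norm_neg, norm_one, one_pow, Complex.norm_natCast]
    have := ((hPB n).2 k).2
    simp only [norm_div, norm_mul, norm_pow] at this ⊢
    calc _ ≤ 1 / (n.factorial : ℝ) * (M ^ n * M) := by gcongr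
      _ = _ := by ring
  have h1 := hasSum_integral_of_summable_integral_norm hFi hFs
  have e1 : ∀ y, ∑' n, F n y = β y * -Complex.exp (-cG β y) / (k - y) := by
    intro y
    have := (NormedSpace.expSeries_div_hasSum_exp (-cG β y)).mul_left (-(β y / (k - y)))
    rw [← Complex.exp_eq_exp_ℂ] at this
    rw [show β y * -Complex.exp (-cG β y) / (k - y) = -(β y / (k - y)) * Complex.exp (-cG β y) by ring,
      ← this.tsum_eq]
    refine tsum_congr fun n => ?_
    simp only [hF]
    rw [neg_pow]
    ring
  have e2 : ∀ n, ∫ y, F n y = (-cG β k) ^ (n + 1) / ((n + 1).factorial : ℂ) := by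
    intro n
    simp only [hF]
    rw [integral_const_mul, neg_pow (cG β k), ← cG_pow hβ n k, Nat.factorial_succ]
    unfold cG
    have hn : (n + 1 : ℂ) ≠ 0 := by exact_mod_cast Nat.succ_ne_zero n
    have hn2 : (n.factorial : ℂ) ≠ 0 := by exact_mod_cast Nat.factorial_ne_zero n
    push_cast
    field_simp
  simp only [e1, e2] at h1
  have h2 := (hasSum_nat_add_iff' 1).2 (NormedSpace.expSeries_div_hasSum_exp (-cG β k))
  rw [← Complex.exp_eq_exp_ℂ] at h2
  have := h1.unique h2
  simpa [cG] using this

/-- A priori estimate. -/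
lemma apriori {β f y : ℂ → ℂ} {M : ℝ} (hβ : PB β M)
    (hfi : ∀ k, Integrable (fun x => f x / (k - x)))
    (hyi : ∀ᵐ k, Integrable (fun x => (β x * y x + f x) / (k - x)) ∧
      y k = cG (fun x => β x * y x + f x) k) :
    ∀ᵐ k, ‖y k‖ ≤ Real.exp (2 * M) * ∫ x, ‖f x / (k - x)‖ := by
  have hw : AEStronglyMeasurable (cG β) volume := aesm_cG hβ.1
  have hexp : AEStronglyMeasurable (fun x => Complex.exp (-cG β x)) volume :=
    Complex.continuous_exp.comp_aestronglyMeasurable hw.neg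
  have hre : ∀ z : ℂ, ‖z‖ ≤ M → ‖Complex.exp (-z)‖ ≤ Real.exp M := fun z hz => by
    rw [Complex.norm_exp]
    exact Real.exp_le_exp.2 ((Complex.re_le_norm _).trans (by rwa [norm_neg]))
  have hE : ∀ x, ‖Complex.exp (-cG β x)‖ ≤ Real.exp M := fun x => hre _ (hβ.norm_le x)
  have hg : PB (fun x => β x * -Complex.exp (-cG β x)) (Real.exp M * M) :=
    hβ.mul hexp.neg (Filter.Eventually.of_forall fun x => by simpa using hE x) (Real.exp_pos _).le
  have hyeq : y =ᵐ[volume] cG (fun x => β x * y x + f x) := by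
    filter_upwards [hyi] with k hk using hk.2
  filter_upwards [hyi] with k ⟨hk, hyk⟩
  obtain ⟨j1, j2, h⟩ := cG_mul hg k hk
  have hfe : Integrable (fun x => Complex.exp (-cG β x) * (f x / (k - x))) :=
    (hfi k).bdd_mul hexp (Filter.Eventually.of_forall hE)
  have e : cG (fun x => (β x * y x + f x) * cG (fun x => β x * -Complex.exp (-cG β x)) x) k
      + cG (fun x => β x * -Complex.exp (-cG β x) * cG (fun x => β x * y x + f x) x) k
      = (∫ x, Complex.exp (-cG β x) * (f x / (k - x))) - cG (fun x => β x * y x + f x) k := by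
    change (∫ x, (β x * y x + f x) * cG (fun x => β x * -Complex.exp (-cG β x)) x / (k - x))
      + (∫ x, β x * -Complex.exp (-cG β x) * cG (fun x => β x * y x + f x) x / (k - x))
      = (∫ x, Complex.exp (-cG β x) * (f x / (k - x))) - ∫ x, (β x * y x + f x) / (k - x)
    rw [← integral_add j1 j2, ← integral_sub hfe hk]
    refine integral_congr_ae ?_
    filter_upwards [hyeq] with x hx
    rw [cG_exp hβ x, ← hx]
    ring
  rw [e, ← hyk, cG_exp hβ k] at h
  have h2 : y k * Complex.exp (-cG β k) = ∫ x, Complex.exp (-cG β x) * (f x / (k - x)) := by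
    linear_combination h
  have h3 : ‖y k * Complex.exp (-cG β k)‖ ≤ Real.exp M * ∫ x, ‖f x / (k - x)‖ := by
    rw [h2, ← integral_const_mul]
    refine (norm_integral_le_integral_norm _).trans (integral_mono hfe.norm ((hfi k).norm.const_mul _) fun x => ?_)
    simp only [norm_mul]
    exact mul_le_mul_of_nonneg_right (hE x) (norm_nonneg _)
  have h4 : y k = y k * Complex.exp (-cG β k) * Complex.exp (-(-cG β k)) := by
    rw [mul_assoc, ← Complex.exp_add]; simp
  rw [h4, norm_mul, two_mul, Real.exp_add]
  calc _ ≤ (Real.exp M * ∫ x, ‖f x / (k - x)‖) * Real.exp M := by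
        gcongr
        exact hre _ (by rw [norm_neg]; exact hβ.norm_le k)
    _ = _ := by ring

lemma apriori_conj {B g y : ℂ → ℂ} {M K : ℝ} (hB : PB B M) (hK : 0 ≤ K)
    (hg : AEStronglyMeasurable g volume) (hgK : ∀ᵐ x, ‖g x‖ ≤ K)
    (hy : AEStronglyMeasurable y volume)
    (hyi : ∀ᵐ k, Integrable (fun x => (B x * starRingEnd ℂ (y x) + B x * starRingEnd ℂ (g x)) / (k - x)) ∧
      y k = cG (fun x => B x * starRingEnd ℂ (y x) + B x * starRingEnd ℂ (g x)) k) :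
    ∀ᵐ k, ‖y k‖ ≤ Real.exp (2 * M) * (K * M) := by
  have hq : AEStronglyMeasurable (fun x => starRingEnd ℂ (y x) / y x) volume :=
    ((Complex.continuous_conj.comp_aestronglyMeasurable hy).aemeasurable.div hy.aemeasurable).aestronglyMeasurable
  have hβ : PB (fun x => B x * (starRingEnd ℂ (y x) / y x)) M := by
    have := hB.mul (K := 1) hq (Filter.Eventually.of_forall fun x => by
      rw [norm_div, RCLike.norm_conj]; exact div_self_le_one _) zero_le_one
    rwa [one_mul] at this
  have hf : PB (fun x => B x * starRingEnd ℂ (g x)) (K * M) :=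
    hB.mul (Complex.continuous_conj.comp_aestronglyMeasurable hg) (by simpa using hgK) hK
  have e : (fun x => B x * (starRingEnd ℂ (y x) / y x) * y x + B x * starRingEnd ℂ (g x))
      = fun x => B x * starRingEnd ℂ (y x) + B x * starRingEnd ℂ (g x) := by
    ext x
    by_cases h : y x = 0
    · simp [h]
    · rw [mul_assoc, div_mul_cancel₀ _ h]
  have e' : ∀ x, B x * (starRingEnd ℂ (y x) / y x) * y x + B x * starRingEnd ℂ (g x)
      = B x * starRingEnd ℂ (y x) + B x * starRingEnd ℂ (g x) := fun x => congrFun e x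
  have := apriori (y := y) hβ (fun k => (hf.2 k).1) (by
    simp only [e']
    exact hyi)
  filter_upwards [this] with k hk
  refine hk.trans ?_
  gcongr
  exact (hf.2 k).2

lemma continuity_method {E : Type*} [NormedAddCommGroup E] [NormedSpace ℝ E] [CompleteSpace E]
    (T : E →L[ℝ] E) (K : ℝ) (hK : 0 < K)
    (h : ∀ t : ℝ, 0 ≤ t → t ≤ 1 → ∀ v : E, ‖v‖ ≤ K * ‖v - t • T v‖) (g : E) :
    ∃ v : E, v - T v = g := by
  obtain ⟨N, hN⟩ := exists_nat_gt (‖T‖ * K)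
  have hN0 : (0 : ℝ) < N := lt_of_le_of_lt (by positivity) hN
  have step : ∀ n : ℕ, n ≤ N → ∀ g : E, ∃ v : E, v - ((n : ℝ) / N) • T v = g := by
    intro n
    induction n with
    | zero => intro _ g; exact ⟨g, by simp⟩
    | succ n ih =>
      intro hn g
      have hnN : (n : ℝ) / N ≤ 1 := by
        rw [div_le_one hN0]; exact_mod_cast (by omega)
      choose A hA using ih (by omega)
      have hlip : ∀ w w', ‖A w - A w'‖ ≤ K * ‖w - w'‖ := by
        intro w w'
        have := h _ (by positivity) hnN (A w - A w')
        have e : A w - A w' - ((n : ℝ) / N) • T (A w - A w') = w - w' := by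
          conv_rhs => rw [← hA w, ← hA w']
          rw [map_sub, smul_sub]; abel
        rwa [e] at this
      let Φ : E → E := fun w => g + (1 / (N : ℝ)) • T (A w)
      have hc : ContractingWith ⟨‖T‖ * K / N, by positivity⟩ Φ := by
        refine ⟨?_, LipschitzWith.of_dist_le_mul fun w w' => ?_⟩
        · change (‖T‖ * K / N : ℝ) < 1
          rwa [div_lt_one hN0]
        · change dist (Φ w) (Φ w') ≤ (‖T‖ * K / N) * dist w w'
          rw [dist_eq_norm, dist_eq_norm]
          have : Φ w - Φ w' = (1 / (N : ℝ)) • T (A w - A w') := by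
            simp only [Φ, map_sub, smul_sub]; abel
          rw [this, norm_smul, Real.norm_of_nonneg (by positivity)]
          calc _ ≤ 1 / (N : ℝ) * (‖T‖ * (K * ‖w - w'‖)) := by
                gcongr
                exact (T.le_opNorm _).trans (by gcongr; exact hlip w w')
            _ = _ := by ring
      have hfix := hc.fixedPoint_isFixedPt
      set w := ContractingWith.fixedPoint Φ hc
      refine ⟨A w, ?_⟩
      have h1 : g + (1 / (N : ℝ)) • T (A w) = w := hfix
      have h2 := hA w
      push_cast
      rw [add_div, add_smul, ← sub_sub, h2]
      nth_rewrite 1 [← h1]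
      abel
  obtain ⟨v, hv⟩ := step N le_rfl g
  refine ⟨v, ?_⟩
  rwa [div_self hN0.ne', one_smul] at hv

lemma linf_ae (v : Lp ℂ ⊤ (volume : Measure ℂ)) : ∀ᵐ y, ‖v y‖ ≤ ‖v‖ := by
  have h := ae_le_eLpNormEssSup (f := v) (μ := (volume : Measure ℂ))
  have hv := (Lp.memLp v).2
  rw [eLpNorm_exponent_top] at hv
  filter_upwards [h] with y hy
  rw [Lp.norm_def, eLpNorm_exponent_top, ← toReal_enorm]
  exact ENNReal.toReal_mono hv.ne hy

lemma linf_le (v : Lp ℂ ⊤ (volume : Measure ℂ)) (C : ℝ) (hC : 0 ≤ C) (h : ∀ᵐ y, ‖v y‖ ≤ C) :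
    ‖v‖ ≤ C := by
  rw [Lp.norm_def, eLpNorm_exponent_top]
  exact ENNReal.toReal_le_of_le_ofReal hC (eLpNormEssSup_le_of_ae_bound h)

lemma aesm_conj (v : Lp ℂ ⊤ (volume : Measure ℂ)) :
    AEStronglyMeasurable (fun y => starRingEnd ℂ (v y)) volume :=
  Complex.continuous_conj.comp_aestronglyMeasurable (Lp.aestronglyMeasurable v)

lemma PB.conj {B : ℂ → ℂ} {M : ℝ} (hB : PB B M) (v : Lp ℂ ⊤ (volume : Measure ℂ)) :
    PB (fun y => B y * starRingEnd ℂ (v y)) (‖v‖ * M) :=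
  hB.mul (aesm_conj v) (by simpa using linf_ae v) (norm_nonneg _)

lemma PB.memLp {B : ℂ → ℂ} {M : ℝ} (hB : PB B M) : MemLp (cG B) ⊤ volume :=
  memLp_top_of_bound (aesm_cG hB.1) M (Filter.Eventually.of_forall hB.norm_le)

/-- The real-linear operator `v ↦ cG (B * conj v)` on `L^∞`. -/
noncomputable def cT {B : ℂ → ℂ} {M : ℝ} (hB : PB B M) :
    Lp ℂ ⊤ (volume : Measure ℂ) →L[ℝ] Lp ℂ ⊤ (volume : Measure ℂ) :=
  LinearMap.mkContinuous
    { toFun := fun v => (hB.conj v).memLp.toLp _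
      map_add' := by
        intro v w
        rw [← MemLp.toLp_add]
        refine (MemLp.toLp_eq_toLp_iff _ _).2 (Filter.Eventually.of_forall fun k => ?_)
        rw [Pi.add_apply]
        unfold cG
        rw [← integral_add ((hB.conj v).2 k).1 ((hB.conj w).2 k).1]
        refine integral_congr_ae ?_
        filter_upwards [Lp.coeFn_add v w] with y hy
        rw [hy, Pi.add_apply, map_add]
        ring
      map_smul' := by
        intro c v
        rw [RingHom.id_apply, ← MemLp.toLp_const_smul]
        refine (MemLp.toLp_eq_toLp_iff _ _).2 (Filter.Eventually.of_forall fun k => ?_)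
        rw [Pi.smul_apply]
        unfold cG
        rw [← integral_smul]
        refine integral_congr_ae ?_
        filter_upwards [Lp.coeFn_smul c v] with y hy
        rw [hy, Pi.smul_apply]
        simp only [Complex.real_smul, map_mul, Complex.conj_ofReal]
        ring } M (by
      intro v
      refine linf_le _ _ (mul_nonneg hB.nonneg (norm_nonneg _)) ?_
      filter_upwards [MemLp.coeFn_toLp (hB.conj v).memLp] with k hk
      change ‖(MemLp.toLp _ (hB.conj v).memLp : Lp ℂ ⊤ (volume : Measure ℂ)) k‖ ≤ _
      rw [hk, mul_comm]
      exact (hB.conj v).norm_le k)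

lemma cT_ae {B : ℂ → ℂ} {M : ℝ} (hB : PB B M) (v : Lp ℂ ⊤ (volume : Measure ℂ)) :
    cT hB v =ᵐ[volume] cG (fun y => B y * starRingEnd ℂ (v y)) :=
  MemLp.coeFn_toLp (hB.conj v).memLp

lemma exists_bounded {B : ℂ → ℂ} {M : ℝ} (hB : PB B M) :
    ∃ v : Lp ℂ ⊤ (volume : Measure ℂ), ∀ᵐ k, v k = 1 + cG (fun y => B y * starRingEnd ℂ (v y)) k := by
  have hM := hB.nonneg
  have hone : MemLp (fun _ : ℂ => (1 : ℂ)) ⊤ volume := memLp_top_const 1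
  obtain ⟨v, hv⟩ := continuity_method (cT hB) (1 + Real.exp (2 * M) * M) (by positivity) (by
    intro t ht0 ht1 v
    set g := v - t • cT hB v with hg
    have hBt : PB (fun x => B x * (t : ℂ)) M := by
      have := hB.mul (K := 1) (h := fun _ => (t : ℂ)) aestronglyMeasurable_const
        (Filter.Eventually.of_forall fun x => by simpa [abs_of_nonneg ht0] using ht1) zero_le_one
      rwa [one_mul] at this
    have hae : ∀ᵐ k, v k = g k + t * cG (fun y => B y * starRingEnd ℂ (v y)) k := by
      filter_upwards [Lp.coeFn_sub v (t • cT hB v), Lp.coeFn_smul t (cT hB v), cT_ae hB v] with k h1 h2 h3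
      rw [hg, h1, Pi.sub_apply, h2, Pi.smul_apply, h3]
      simp
    have hsum : ∀ x, B x * (t : ℂ) * starRingEnd ℂ ((v x) - g x) + B x * (t : ℂ) * starRingEnd ℂ (g x)
        = t * (B x * starRingEnd ℂ (v x)) := by
      intro x; rw [map_sub]; ring
    have key := apriori_conj (y := fun x => v x - g x) hBt (norm_nonneg g) (Lp.aestronglyMeasurable g) (linf_ae g)
      ((Lp.aestronglyMeasurable v).sub (Lp.aestronglyMeasurable g)) (by
        simp only [hsum, mul_div_assoc]
        filter_upwards [hae] with k hk
        refine ⟨?_, ?_⟩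
        · have := (((hB.conj v).2 k).1).const_mul (t : ℂ)
          simpa only [mul_div_assoc] using this
        · rw [hk]
          unfold cG
          rw [add_sub_cancel_left, ← integral_const_mul]
          simp only [mul_div_assoc])
    refine linf_le _ _ (by positivity) ?_
    filter_upwards [key, linf_ae g] with k h1 h2
    calc ‖v k‖ = ‖(v k - g k) + g k‖ := by rw [sub_add_cancel]
      _ ≤ Real.exp (2 * M) * (‖g‖ * M) + ‖g‖ := (norm_add_le _ _).trans (add_le_add h1 h2)
      _ = _ := by ring) (hone.toLp _)
  refine ⟨v, ?_⟩
  filter_upwards [cT_ae hB v, Lp.coeFn_sub v (cT hB v), MemLp.coeFn_toLp hone] with k h1 h2 h3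
  rw [hv, h3, Pi.sub_apply, h1] at h2
  rw [h2]; ring

lemma memLp_rep {f : ℂ → ℂ} {r : ℝ} (hr : 0 < r) (hf : MemLp f (ENNReal.ofReal r)) (φ : ℂ → ℝ)
    (hφ : ∀ᵐ y, φ y = ‖f y‖) : ∫⁻ y, ENNReal.ofReal (φ y) ^ r < ⊤ := by
  have := (eLpNorm_lt_top_iff_lintegral_rpow_enorm_lt_top (by simpa using hr) ENNReal.ofReal_ne_top).1 hf.2
  rw [ENNReal.toReal_ofReal hr.le] at this
  refine lt_of_le_of_lt (le_of_eq (lintegral_congr_ae ?_)) this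
  filter_upwards [hφ] with y hy
  rw [hy, ofReal_norm]

lemma pot_rep {f : ℂ → ℂ} (φ : ℂ → ℝ) (hφ : ∀ᵐ y, φ y = ‖f y‖) (k : ℂ) :
    ∫⁻ y, ‖f y / (k - y)‖ₑ = ∫⁻ y, ENNReal.ofReal (φ y) * ENNReal.ofReal (‖k - y‖⁻¹) := by
  refine lintegral_congr_ae ?_
  filter_upwards [hφ] with y hy
  rw [hy, ← ofReal_norm, ← ENNReal.ofReal_mul (norm_nonneg _), norm_div, div_eq_mul_inv]

lemma exists_rep {f : ℂ → ℂ} (hf : AEStronglyMeasurable f volume) :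
    ∃ φ : ℂ → ℝ, Measurable φ ∧ (∀ y, 0 ≤ φ y) ∧ ∀ᵐ y, φ y = ‖f y‖ := by
  refine ⟨fun y => ‖hf.mk f y‖, hf.stronglyMeasurable_mk.measurable.norm, fun y => norm_nonneg _, ?_⟩
  filter_upwards [hf.ae_eq_mk] with y hy
  rw [← hy]

lemma PB_of_memLp {f : ℂ → ℂ} {r₁ r₂ : ℝ} (h1 : 1 < r₁) (h2 : r₁ < 2) (h3 : 2 < r₂)
    (hf₁ : MemLp f (ENNReal.ofReal r₁)) (hf₂ : MemLp f (ENNReal.ofReal r₂)) :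
    ∃ M, PB f M := by
  obtain ⟨φ, hφ, hφ0, hφe⟩ := exists_rep hf₁.1
  obtain ⟨M, hM, h⟩ := potential_bound r₁ r₂ h1 h2 h3 φ hφ (memLp_rep (by linarith) hf₁ φ hφe)
    (memLp_rep (by linarith) hf₂ φ hφe)
  refine ⟨M, hf₁.1, fun a => ?_⟩
  have hm : AEStronglyMeasurable (fun y => f y / (a - y)) volume := by
    have : Measurable (fun y : ℂ => (a - y)⁻¹) := by fun_prop
    simp only [div_eq_mul_inv]
    exact hf₁.1.mul this.aestronglyMeasurable
  have hle : ∫⁻ y, ‖f y / (a - y)‖ₑ ≤ ENNReal.ofReal M := by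
    rw [pot_rep φ hφe]; exact h a
  refine ⟨⟨hm, lt_of_le_of_lt hle ENNReal.ofReal_lt_top⟩, ?_⟩
  rw [integral_norm_eq_lintegral_enorm hm]
  exact ENNReal.toReal_le_of_le_ofReal hM hle

lemma cG_memLp {f : ℂ → ℂ} {M s r₁ : ℝ} (hs : 2 < s) (hr : r₁ = 2 * s / (s + 2))
    (hf₁ : MemLp f (ENNReal.ofReal r₁)) (hf : PB f M) : MemLp (cG f) (ENNReal.ofReal s) := by
  obtain ⟨φ, hφ, hφ0, hφe⟩ := exists_rep hf₁.1
  have hr0 : 0 < r₁ := by rw [hr]; positivity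
  have hs0 : 0 < s := by linarith
  have := hls s hs r₁ hr φ hφ hφ0 (memLp_rep hr0 hf₁ φ hφe) (fun k => by
    rw [← pot_rep φ hφe]
    exact (hf.2 k).1.2)
  refine ⟨aesm_cG hf.1, ?_⟩
  rw [eLpNorm_lt_top_iff_lintegral_rpow_enorm_lt_top (by simpa using hs0) ENNReal.ofReal_ne_top,
    ENNReal.toReal_ofReal hs0.le]
  refine lt_of_le_of_lt (lintegral_mono fun k => ?_) this
  rw [← pot_rep φ hφe]
  exact ENNReal.rpow_le_rpow (enorm_integral_le_lintegral_enorm _) hs0.le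

/-- Unique solvability in `L^s(ℂ)` of the integral equation
`u = ∂̄_k⁻¹(b·(1 + conj u))` for `b ∈ L^{r₁} ∩ L^{r₂}`, `r₁ = 2s/(s+2)`, `r₂ > 2`. -/
theorem integral_equation_unique_solvability
    (s : ℝ) (hs : 2 < s) (r₁ : ℝ) (hr₁ : r₁ = 2 * s / (s + 2))
    (b : ℂ → ℂ) (hb₁ : MemLp b (ENNReal.ofReal r₁))
    (hb₂ : ∃ r₂ : ℝ, 2 < r₂ ∧ MemLp b (ENNReal.ofReal r₂)) :
    ∃ u : ℂ → ℂ,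
      (MemLp u (ENNReal.ofReal s) ∧
        ∀ᵐ k : ℂ,
          Integrable (fun k' => b k' * (1 + (starRingEnd ℂ) (u k')) / (k - k')) ∧
          u k = (1 / (Real.pi : ℂ)) *
            ∫ k', b k' * (1 + (starRingEnd ℂ) (u k')) / (k - k')) ∧
      ∀ u' : ℂ → ℂ,
        (MemLp u' (ENNReal.ofReal s) ∧
          ∀ᵐ k : ℂ,
            Integrable (fun k' => b k' * (1 + (starRingEnd ℂ) (u' k')) / (k - k')) ∧
            u' k = (1 / (Real.pi : ℂ)) *
              ∫ k', b k' * (1 + (starRingEnd ℂ) (u' k')) / (k - k')) →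
        u' =ᵐ[volume] u := by
  obtain ⟨r₂, hr₂, hb₂⟩ := hb₂
  have hr1 : 1 < r₁ := by rw [hr₁, lt_div_iff₀ (by linarith)]; linarith
  have hr2 : r₁ < 2 := by rw [hr₁, div_lt_iff₀ (by linarith)]; linarith
  have hpi : (Real.pi : ℂ) ≠ 0 := by exact_mod_cast Real.pi_ne_zero
  set B : ℂ → ℂ := fun y => (1 / (Real.pi : ℂ)) * b y with hBdef
  have hB₁ : MemLp B (ENNReal.ofReal r₁) := hb₁.const_mul _
  have hB₂ : MemLp B (ENNReal.ofReal r₂) := hb₂.const_mul _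
  obtain ⟨M, hB⟩ := PB_of_memLp hr1 hr2 hr₂ hB₁ hB₂
  -- translation between `b` and `B`
  have tr : ∀ (w : ℂ → ℂ) (k : ℂ), (1 / (Real.pi : ℂ)) * ∫ k', b k' * (1 + starRingEnd ℂ (w k')) / (k - k')
      = cG (fun y => B y * (1 + starRingEnd ℂ (w y))) k := by
    intro w k
    rw [cG, ← integral_const_mul]
    refine integral_congr_ae (Filter.Eventually.of_forall fun y => ?_)
    simp only [hBdef]; ring
  have tri : ∀ (w : ℂ → ℂ) (k : ℂ), Integrable (fun k' => b k' * (1 + starRingEnd ℂ (w k')) / (k - k')) ↔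
      Integrable (fun y => B y * (1 + starRingEnd ℂ (w y)) / (k - y)) := by
    intro w k
    have e : (fun y => B y * (1 + starRingEnd ℂ (w y)) / (k - y))
        = fun y => (1 / (Real.pi : ℂ)) * (b y * (1 + starRingEnd ℂ (w y)) / (k - y)) := by
      ext y; simp only [hBdef]; ring
    rw [e, integrable_const_mul_iff (by simpa using hpi)]
  simp only [tr, tri]
  obtain ⟨v, hv⟩ := exists_bounded hB
  set u := cG (fun y => B y * starRingEnd ℂ (v y)) with hu
  have hcong : (fun y => B y * (1 + starRingEnd ℂ (u y))) =ᵐ[volume] fun y => B y * starRingEnd ℂ (v y) := by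
    filter_upwards [hv] with y hy
    rw [hy, map_add, map_one]
  have hus : MemLp u (ENNReal.ofReal s) := by
    refine cG_memLp hs hr₁ ?_ (hB.conj v)
    refine MemLp.of_le_mul (c := ‖v‖) hB₁ (hB.conj v).1 ?_
    filter_upwards [linf_ae v] with y hy
    rw [norm_mul, RCLike.norm_conj, mul_comm]
    gcongr
  have hui : ∀ k, Integrable (fun y => B y * (1 + starRingEnd ℂ (u y)) / (k - y)) := by
    intro k
    refine ((hB.conj v).2 k).1.congr ?_
    filter_upwards [hcong] with y hy
    rw [hy]
  have hue : ∀ k, u k = cG (fun y => B y * (1 + starRingEnd ℂ (u y))) k := by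
    intro k; rw [cG_congr hcong]
  refine ⟨u, ⟨hus, Filter.Eventually.of_forall fun k => ⟨hui k, hue k⟩⟩, ?_⟩
  rintro u' ⟨hu's, hu'⟩
  have hz : ∀ x, B x * starRingEnd ℂ (u' x - u x) + B x * starRingEnd ℂ ((fun _ => (0 : ℂ)) x)
      = B x * (1 + starRingEnd ℂ (u' x)) - B x * (1 + starRingEnd ℂ (u x)) := by
    intro x; simp only [map_sub, map_zero]; ring
  have key := apriori_conj (y := fun x => u' x - u x) (g := fun _ => 0) (K := 0) hB le_rfl
    aestronglyMeasurable_const (by simp) (hu's.1.sub hus.1) (by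
      simp only [hz, sub_div]
      filter_upwards [hu'] with k hk
      refine ⟨hk.1.sub (hui k), ?_⟩
      rw [hk.2, hue k]
      unfold cG
      simp only [sub_div]
      exact (integral_sub hk.1 (hui k)).symm)
  filter_upwards [key] with k hk
  rw [zero_mul, mul_zero] at hk
  exact sub_eq_zero.1 (norm_le_zero_iff.1 hk)
end

section
/- Let 2 < p < ∞ and let f : ℂ → ℂ be measurable, compactly supported, and in L^p(ℂ) (with respect to Lebesgue measure μ). Then for every z ∈ ℂ the function w ↦ f(w)/(z − w) is integrable, and the Cauchy transform Cf : ℂ → ℂ defined by Cf(z) = (1/π)∫_ℂ f(w)/(z − w) dμ(w) is Hölder continuous with exponent 1 − 2/p: there exists a constant C ≥ 0 such that |Cf(z) − Cf(z')| ≤ C·|z − z'|^{1−2/p} for all z, z' ∈ ℂ. -/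
open MeasureTheory Complex

/-- Radial comparison kernel `1/(t(1+t))`. -/
noncomputable def ctG (t : ℝ) : ℝ := t⁻¹ * (1 + t)⁻¹

lemma ctG_nonneg {t : ℝ} (ht : 0 ≤ t) : 0 ≤ ctG t := by
  unfold ctG; positivity

lemma ctG_meas : Measurable ctG := by
  unfold ctG; fun_prop

lemma ct_kernel_aux (a b : ℂ) (hab : a ≠ b) (hle : ‖a‖ ≤ ‖b‖) :
    ‖1 / a - 1 / b‖ ≤ 4 / ‖a - b‖ * (ctG (‖a‖ / ‖a - b‖) + ctG (‖b‖ / ‖a - b‖)) := by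
  have hr : 0 < ‖a - b‖ := norm_pos_iff.2 (sub_ne_zero.2 hab)
  have hb : 0 < ‖b‖ := by
    rcases eq_or_ne b 0 with h | h
    · subst h
      simp at hle
      exact absurd hle hab
    · exact norm_pos_iff.2 h
  rcases eq_or_ne a 0 with h | h
  · subst h
    have hb' : ‖b‖ ≠ 0 := hb.ne'
    simp only [zero_sub, norm_neg, div_zero, norm_zero, norm_div, norm_one, zero_div, ctG,
      div_self hb']
    rw [div_mul_eq_mul_div]
    gcongr
    norm_num
  · have ha : 0 < ‖a‖ := norm_pos_iff.2 h
    have hb0 : b ≠ 0 := norm_pos_iff.1 hb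
    have h1 : ‖1 / a - 1 / b‖ = ‖a - b‖ / (‖a‖ * ‖b‖) := by
      rw [div_sub_div _ _ h hb0, norm_div, norm_mul, one_mul, mul_one, norm_sub_rev]
    have h2 : ‖a - b‖ ≤ ‖a‖ + ‖b‖ := norm_sub_le a b
    rw [h1]
    have h3 : 0 ≤ ctG (‖b‖ / ‖a - b‖) := ctG_nonneg (by positivity)
    have h4 : ‖a - b‖ / (‖a‖ * ‖b‖) ≤ 4 / ‖a - b‖ * ctG (‖a‖ / ‖a - b‖) := by
      generalize ‖a - b‖ = r at *
      have h5 : 4 / r * ctG (‖a‖ / r) = 4 * r / (‖a‖ * (r + ‖a‖)) := by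
        unfold ctG
        field_simp
      rw [h5, div_le_div_iff₀ (by positivity) (by positivity)]
      have : r * ‖a‖ * (r + ‖a‖) ≤ r * ‖a‖ * (4 * ‖b‖) := by
        gcongr
        linarith
      linarith
    have h6 : 0 ≤ 4 / ‖a - b‖ * ctG (‖b‖ / ‖a - b‖) := by positivity
    linarith

lemma ct_kernel (a b : ℂ) (hab : a ≠ b) :
    ‖1 / a - 1 / b‖ ≤ 4 / ‖a - b‖ * (ctG (‖a‖ / ‖a - b‖) + ctG (‖b‖ / ‖a - b‖)) := by
  rcases le_total ‖a‖ ‖b‖ with h | h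
  · exact ct_kernel_aux a b hab h
  · have := ct_kernel_aux b a hab.symm h
    rw [norm_sub_rev, norm_sub_rev b a] at this
    linarith

lemma ctG_integrable {q : ℝ} (h1 : 1 < q) (h2 : q < 2) :
    Integrable (fun v : ℂ => ctG ‖v‖ ^ q) := by
  have hm : AEStronglyMeasurable (fun v : ℂ => ctG ‖v‖ ^ q) :=
    ((ctG_meas.comp measurable_norm).pow_const q).aestronglyMeasurable
  have hq : 0 ≤ q := by linarith
  rw [← integrableOn_univ, ← Set.union_compl_self (Metric.ball (0 : ℂ) 1)]
  refine IntegrableOn.union ?_ ?_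
  · refine integrableOn_ball_of_norm_le_rpow (C := 1) (α := q) ?_ ?_ ?_ hm
    · simp [Complex.finrank_real_complex]
    · simpa [Complex.finrank_real_complex] using h2
    · refine Filter.Eventually.of_forall fun v => ?_
      have h0 := ctG_nonneg (norm_nonneg v)
      rw [Real.norm_of_nonneg (by positivity), one_mul, Real.rpow_neg (norm_nonneg v),
        ← Real.inv_rpow (norm_nonneg v)]
      refine Real.rpow_le_rpow h0 ?_ hq
      unfold ctG
      refine mul_le_of_le_one_right (by positivity) ?_
      exact inv_le_one_of_one_le₀ (by linarith [norm_nonneg v])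
  · have hJ : Integrable (fun v : ℂ => (2 : ℝ) ^ q * (1 + ‖v‖) ^ (-(2 * q))) := by
      refine (integrable_one_add_norm ?_).const_mul _
      simp [Complex.finrank_real_complex]
      linarith
    refine Integrable.mono' hJ.integrableOn hm.restrict ?_
    refine (ae_restrict_iff' Metric.isOpen_ball.measurableSet.compl).2
      (Filter.Eventually.of_forall fun v hv => ?_)
    have hv1 : 1 ≤ ‖v‖ := by simpa using hv
    have h0 := ctG_nonneg (norm_nonneg v)
    rw [Real.norm_of_nonneg (by positivity), Real.rpow_neg (by positivity),
      Real.rpow_mul (by positivity), ← Real.inv_rpow (by positivity),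
      ← Real.mul_rpow (by positivity) (by positivity)]
    refine Real.rpow_le_rpow h0 ?_ hq
    unfold ctG
    have hp : 0 < ‖v‖ := by linarith
    rw [← mul_inv, Real.rpow_two, ← div_eq_mul_inv, ← one_div,
      div_le_div_iff₀ (by positivity) (by positivity)]
    nlinarith

lemma ct_scaled {q : ℝ} (h1 : 1 < q) (h2 : q < 2) (z : ℂ) {r : ℝ} (hr : 0 < r) :
    MemLp (fun w : ℂ => ctG (‖z - w‖ / r)) (ENNReal.ofReal q) ∧
    ∫ w : ℂ, ctG (‖z - w‖ / r) ^ q = r ^ 2 * ∫ v : ℂ, ctG ‖v‖ ^ q := by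
  have hI := ctG_integrable h1 h2
  have key : ∀ v : ℂ, ‖v‖ / r = ‖r⁻¹ • v‖ := fun v => by
    rw [norm_smul, Real.norm_of_nonneg (by positivity), div_eq_inv_mul]
  constructor
  · have hI2 : Integrable (fun v : ℂ => ctG (‖v‖ / r) ^ q) := by
      simp_rw [key]
      exact (integrable_comp_smul_iff volume (fun v : ℂ => ctG ‖v‖ ^ q)
        (inv_ne_zero hr.ne')).2 hI
    have hI3 := hI2.comp_sub_left z
    rw [← integrable_norm_rpow_iff]
    · rw [ENNReal.toReal_ofReal (by linarith)]
      refine hI3.congr (Filter.Eventually.of_forall fun w => ?_)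
      simp only
      rw [Real.norm_of_nonneg (ctG_nonneg (by positivity))]
    · exact (ctG_meas.comp (by fun_prop)).aestronglyMeasurable
    · simp; linarith
    · simp
  · rw [integral_sub_left_eq_self (fun v : ℂ => ctG (‖v‖ / r) ^ q) volume z]
    simp_rw [key]
    rw [Measure.integral_comp_inv_smul volume (fun v : ℂ => ctG ‖v‖ ^ q),
      Complex.finrank_real_complex, abs_of_nonneg (by positivity), smul_eq_mul]

lemma ct_holder {p q : ℝ} (hpq : p.HolderConjugate q) (h1 : 1 < q) (h2 : q < 2) (f : ℂ → ℂ)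
    (hLp : MemLp f (ENNReal.ofReal p)) (z : ℂ) {r : ℝ} (hr : 0 < r) :
    Integrable (fun w : ℂ => ‖f w‖ * ctG (‖z - w‖ / r)) ∧
    ∫ w : ℂ, ‖f w‖ * ctG (‖z - w‖ / r) ≤
      (∫ w, ‖f w‖ ^ p) ^ (1 / p) * (∫ v : ℂ, ctG ‖v‖ ^ q) ^ (1 / q) * r ^ (2 / q) := by
  obtain ⟨hM, hE⟩ := ct_scaled h1 h2 z hr
  have := hpq.ennrealOfReal
  refine ⟨hLp.norm.integrable_mul hM, ?_⟩
  refine (integral_mul_le_Lp_mul_Lq_of_nonneg hpq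
    (Filter.Eventually.of_forall fun w => norm_nonneg _)
    (Filter.Eventually.of_forall fun w => ctG_nonneg (by positivity)) hLp.norm hM).trans ?_
  rw [hE, Real.mul_rpow (by positivity)
    (integral_nonneg fun v => Real.rpow_nonneg (ctG_nonneg (norm_nonneg v)) _),
    ← Real.rpow_natCast, ← Real.rpow_mul hr.le]
  refine le_of_eq ?_
  push_cast
  rw [mul_one_div]
  ring

/-- The solid Cauchy transform `Cf(z) = (1/π)∫ f(w)/(z−w) dμ(w)` of a compactly
supported `L^p` function, `p > 2`, is well defined and Hölder continuous with
exponent `1 − 2/p`. -/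
theorem cauchy_transform_holder
    (p : ℝ) (hp : 2 < p) (f : ℂ → ℂ)
    (hmeas : Measurable f) (hsupp : HasCompactSupport f)
    (hLp : MemLp f (ENNReal.ofReal p)) :
    (∀ z : ℂ, Integrable (fun w => f w / (z - w))) ∧
    ∃ C ≥ (0 : ℝ), ∀ z z' : ℂ,
      ‖(1 / (Real.pi : ℂ)) * (∫ w, f w / (z - w))
          - (1 / (Real.pi : ℂ)) * (∫ w, f w / (z' - w))‖
        ≤ C * ‖z - z'‖ ^ (1 - 2 / p) := by
  obtain ⟨q, hpq⟩ : ∃ q, p.HolderConjugate q :=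
    ⟨_, Real.HolderConjugate.conjExponent (by linarith)⟩
  have hq1 : 1 < q := hpq.symm.lt
  have hinv : p⁻¹ + q⁻¹ = 1 := hpq.inv_add_inv_eq_one
  have hp0 : 0 < p := by linarith
  have hq0 : 0 < q := by linarith
  have hpi : p⁻¹ < 2⁻¹ := inv_strictAnti₀ (by norm_num) hp
  have hq2 : q < 2 := by
    by_contra! hcon
    have : q⁻¹ ≤ 2⁻¹ := inv_anti₀ (by norm_num) hcon
    norm_num at this hpi
    linarith
  set M : ℝ := (∫ w, ‖f w‖ ^ p) ^ (1 / p) * (∫ v : ℂ, ctG ‖v‖ ^ q) ^ (1 / q) with hMdef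
  have hM0 : 0 ≤ M := mul_nonneg
    (Real.rpow_nonneg (integral_nonneg fun w => by positivity) _)
    (Real.rpow_nonneg
      (integral_nonneg fun v => Real.rpow_nonneg (ctG_nonneg (norm_nonneg v)) _) _)
  -- pointwise bound for the difference
  have hpt : ∀ z z' : ℂ, z ≠ z' → ∀ w : ℂ, ‖f w / (z - w) - f w / (z' - w)‖ ≤
      4 / ‖z - z'‖ * (‖f w‖ * ctG (‖z - w‖ / ‖z - z'‖) +
        ‖f w‖ * ctG (‖z' - w‖ / ‖z - z'‖)) := by
    intro z z' hzz w
    have hk := ct_kernel (z - w) (z' - w) (fun h => hzz (sub_left_injective h))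
    rw [sub_sub_sub_cancel_right] at hk
    have : f w / (z - w) - f w / (z' - w) = f w * (1 / (z - w) - 1 / (z' - w)) := by ring
    rw [this, norm_mul]
    calc _ ≤ ‖f w‖ * _ := mul_le_mul_of_nonneg_left hk (norm_nonneg _)
      _ = _ := by ring
  have hbI : ∀ z z' : ℂ, z ≠ z' → Integrable (fun w : ℂ =>
      4 / ‖z - z'‖ * (‖f w‖ * ctG (‖z - w‖ / ‖z - z'‖) +
        ‖f w‖ * ctG (‖z' - w‖ / ‖z - z'‖))) := by
    intro z z' hzz
    have hr : 0 < ‖z - z'‖ := norm_pos_iff.2 (sub_ne_zero.2 hzz)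
    exact ((ct_holder hpq hq1 hq2 f hLp z hr).1.add
      (ct_holder hpq hq1 hq2 f hLp z' hr).1).const_mul _
  have hdI : ∀ z z' : ℂ, z ≠ z' → Integrable (fun w : ℂ => f w / (z - w) - f w / (z' - w)) := by
    intro z z' hzz
    refine (hbI z z' hzz).mono' ?_ (Filter.Eventually.of_forall (hpt z z' hzz))
    exact Measurable.aestronglyMeasurable (by fun_prop)
  have hfI : Integrable f := by
    rw [← memLp_one_iff_integrable]
    refine hLp.mono_exponent_of_measure_support_ne_top (s := tsupport f)
      (fun x hx => image_eq_zero_of_notMem_tsupport hx) hsupp.isCompact.measure_lt_top.ne ?_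
    rw [← ENNReal.ofReal_one]
    exact ENNReal.ofReal_le_ofReal (by linarith)
  have hint : ∀ z : ℂ, Integrable (fun w => f w / (z - w)) := by
    intro z
    obtain ⟨R, hR0, hR⟩ := hsupp.isCompact.isBounded.exists_pos_norm_lt
    set z' : ℂ := ((R + 1 + ‖z‖ : ℝ) : ℂ) with hz'
    have hn : ‖z'‖ = R + 1 + ‖z‖ := by
      rw [hz', Complex.norm_real, Real.norm_of_nonneg (by positivity)]
    have hzz : z ≠ z' := by
      intro h
      rw [← h] at hn
      linarith
    have h' : Integrable (fun w => f w / (z' - w)) := by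
      refine hfI.norm.mono' (Measurable.aestronglyMeasurable (by fun_prop))
        (Filter.Eventually.of_forall fun w => ?_)
      by_cases hw : w ∈ tsupport f
      · have h3 := hR w hw
        have h4 := norm_sub_norm_le z' w
        rw [norm_div]
        exact div_le_self (norm_nonneg _) (by linarith [norm_nonneg z])
      · simp [image_eq_zero_of_notMem_tsupport hw]
    refine ((hdI z z' hzz).add h').congr (Filter.Eventually.of_forall fun w => ?_)
    simp
  refine ⟨hint, ‖(1 / (Real.pi : ℂ))‖ * (8 * M), by positivity, fun z z' => ?_⟩
  rcases eq_or_ne z z' with rfl | hzz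
  · rw [sub_self, norm_zero]
    positivity
  have hr : 0 < ‖z - z'‖ := norm_pos_iff.2 (sub_ne_zero.2 hzz)
  rw [← mul_sub, norm_mul, mul_assoc, ← integral_sub (hint z) (hint z')]
  refine mul_le_mul_of_nonneg_left ?_ (norm_nonneg _)
  obtain ⟨hA1, hA2⟩ := ct_holder hpq hq1 hq2 f hLp z hr
  obtain ⟨hB1, hB2⟩ := ct_holder hpq hq1 hq2 f hLp z' hr
  refine (norm_integral_le_of_norm_le (hbI z z' hzz)
    (Filter.Eventually.of_forall (hpt z z' hzz))).trans ?_
  rw [integral_const_mul, integral_add hA1 hB1]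
  rw [← hMdef] at hA2 hB2
  have hexp : ‖z - z'‖ ^ (2 / q) = ‖z - z'‖ * ‖z - z'‖ ^ (1 - 2 / p) := by
    nth_rewrite 2 [← Real.rpow_one ‖z - z'‖]
    rw [← Real.rpow_add hr]
    congr 1
    rw [div_eq_mul_inv, div_eq_mul_inv]
    linarith
  calc _ ≤ 4 / ‖z - z'‖ * (M * ‖z - z'‖ ^ (2 / q) + M * ‖z - z'‖ ^ (2 / q)) := by
        gcongr
    _ = _ := by
        rw [hexp]
        field_simp
        ring
end
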